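/- Let r > 2, 1 < q < 2, and let Ξ ⊂ ℝ⁺ be a finite set. Given real coefficients a_ω for each dyadic interval ω, let D_k(ξ) = Σ_{|ω|=2^k, ω∩Ξ≠∅} a_ω 1_ω(ξ) for k ∈ ℤ. Then ‖(D_k)_{k∈ℤ}‖_{M^{q,*}} ≤ C_{q,r} (1 + log|Ξ|) |Ξ|^{1/q − 1/r} · sup_{ξ∈Ξ} ‖ (Σ_{|ω|=2^k} a_ω 1_ω(ξ))_{k∈ℤ} ‖_{V^r_k}, where the V^r norm is taken in k of the sequence k ↦ Σ_{|ω|=2^k} a_ω 1_ω(ξ). -/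

import Mathlib

open MeasureTheory Set Filter
open scoped ENNReal NNReal Classical BigOperators RealInnerProductSpace

noncomputable section

/-- The binary digit of `x` in position `n+1` to the left of the point
(terminating expansion for dyadic rationals). -/
def digit (n : ℤ) (x : ℝ) : ℤ := ⌊x / 2 ^ n⌋ % 2

/-- Bitwise addition `⊕` on nonnegative reals. -/
def wXor (x y : ℝ) : ℝ := ∑' n : ℤ, (((digit n x + digit n y) % 2 : ℤ) : ℝ) * 2 ^ n

/-- The `n`-th digit of the bitwise product `x ⊗ y`. -/
def wMulDigit (n : ℤ) (x y : ℝ) : ℤ :=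
  ⌊∑' m : ℤ, ((digit (n - m) x * digit m y : ℤ) : ℝ)⌋ % 2

/-- Bitwise multiplication `⊗` on nonnegative reals. -/
def wMul (x y : ℝ) : ℝ := ∑' n : ℤ, ((wMulDigit n x y : ℤ) : ℝ) * 2 ^ n

/-- The Walsh character `e(x) = exp (i π d₋₁(x))`. -/
def walshe (x : ℝ) : ℝ := (-1 : ℝ) ^ (digit (-1) x)

/-- The Walsh–Fourier transform on `ℝ⁺`; it is involutive, so it also serves
as the inverse Walsh–Fourier transform `ˇ`. -/
def walshFT (f : ℝ → ℝ) (ξ : ℝ) : ℝ := ∫ x in Set.Ici (0 : ℝ), walshe (wMul ξ x) * f x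

/-- Lebesgue measure on `ℝ⁺`. -/
def μplus : Measure ℝ := volume.restrict (Set.Ici 0)

/-- `L^p` norm (real exponent `p`) of an `ℝ≥0∞`-valued function. -/
def lpNormE (p : ℝ) (μ : Measure ℝ) (F : ℝ → ℝ≥0∞) : ℝ≥0∞ := (∫⁻ x, F x ^ p ∂μ) ^ (1 / p)

/-- The `r`-variation norm of `m` on the domain `D`. -/
def vnorm {ι E : Type*} [LinearOrder ι] [NormedAddCommGroup E] (r : ℝ) (D : Set ι)
    (m : ι → E) : ℝ≥0∞ :=
  (⨆ ξ ∈ D, (‖m ξ‖₊ : ℝ≥0∞)) +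
    ⨆ (N : ℕ) (u : Fin (N + 1) → ι) (_ : StrictMono u) (_ : ∀ i, u i ∈ D),
      (∑ i : Fin N, (‖m (u i.succ) - m (u i.castSucc)‖₊ : ℝ≥0∞) ^ r) ^ (1 / r)

/-- The Walsh `L^q`-multiplier norm. -/
def Mq (q : ℝ) (m : ℝ → ℝ) : ℝ≥0∞ :=
  ⨆ (g : ℝ → ℝ) (_ : eLpNorm g (ENNReal.ofReal q) μplus = 1),
    eLpNorm (walshFT fun ξ => m ξ * walshFT g ξ) (ENNReal.ofReal q) μplus

/-- The Walsh `L^q`-maximal-multiplier norm of a sequence of multipliers. -/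
def Mqstar (q : ℝ) (m : ℤ → ℝ → ℝ) : ℝ≥0∞ :=
  ⨆ (g : ℝ → ℝ) (_ : eLpNorm g (ENNReal.ofReal q) μplus = 1),
    lpNormE q μplus fun x => ⨆ k : ℤ, (‖walshFT (fun ξ => m k ξ * walshFT g ξ) x‖₊ : ℝ≥0∞)

/-- The `s`-variation `L^q`-multiplier norm of a sequence of multipliers. -/
def Mqs (q s : ℝ) (m : ℤ → ℝ → ℝ) : ℝ≥0∞ :=
  ⨆ (g : ℝ → ℝ) (_ : eLpNorm g (ENNReal.ofReal q) μplus = 1),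
    lpNormE q μplus fun x =>
      vnorm s (Set.univ : Set ℤ) fun k => walshFT (fun ξ => m k ξ * walshFT g ξ) x

/-- Dyadic intervals `[n 2^k, (n+1) 2^k)`. -/
def IsDyadic (I : Set ℝ) : Prop :=
  ∃ n k : ℤ, I = Set.Ico ((n : ℝ) * 2 ^ k) (((n : ℝ) + 1) * 2 ^ k)

/-- Dyadic intervals of length `2^k`. -/
def IsDyadicLen (k : ℤ) (ω : Set ℝ) : Prop :=
  ∃ n : ℤ, ω = Set.Ico ((n : ℝ) * 2 ^ k) (((n : ℝ) + 1) * 2 ^ k)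

/-- The lower half of an interval. -/
def lowerHalf (ω : Set ℝ) : Set ℝ := ω ∩ Set.Iio ((sInf ω + sSup ω) / 2)

/-- The upper half of an interval. -/
def upperHalf (ω : Set ℝ) : Set ℝ := ω ∩ Set.Ici ((sInf ω + sSup ω) / 2)

/-- A bitile `I × ω ⊆ ℝ⁺ × ℝ⁺` : a rectangle of dyadic intervals of area `2`. -/
structure Bitile where
  I : Set ℝ
  ω : Set ℝ
  hI : IsDyadic I
  hω : IsDyadic ω
  hIsub : I ⊆ Set.Ici 0
  hωsub : ω ⊆ Set.Ici 0
  harea : volume I * volume ω = 2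

/-- The `L²`-normalized Walsh wave packet of the tile `I × ω`. -/
def wavePacket (I ω : Set ℝ) (x : ℝ) : ℝ :=
  Real.sqrt (volume I).toReal * walshFT (Set.indicator ω fun _ => (1 : ℝ)) (wXor x (sInf I))

/-- `⟨f, φ_{P_l}⟩`, the pairing of `f` with the wave packet of the lower tile of `P`. -/
def walshCoef (P : Bitile) (f : ℝ → ℝ) : ℝ :=
  ∫ y in Set.Ici (0 : ℝ), f y * wavePacket P.I (lowerHalf P.ω) y

/-- The partial order on bitiles. -/
def Bitile.le (P Q : Bitile) : Prop := P.I ⊆ Q.I ∧ Q.ω ⊆ P.ω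

/-- Convexity of a set of bitiles. -/
def ConvexBitiles (S : Set Bitile) : Prop :=
  ∀ P₁ P₂ P₃ : Bitile, P₁ ∈ S → P₃ ∈ S → Bitile.le P₁ P₂ → Bitile.le P₂ P₃ → P₂ ∈ S

/-- The truncated partial Walsh-sum operator attached to a collection `Ps` of bitiles. -/
def Sk (Ps : Set Bitile) (f : ℝ → ℝ) (k : ℤ) (ξ x : ℝ) : ℝ :=
  ∑ᶠ (P : Bitile) (_ : P ∈ Ps ∧ volume P.I < 2 ^ k),
    walshCoef P f * wavePacket P.I (lowerHalf P.ω) x *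
      Set.indicator (upperHalf P.ω) (fun _ => (1 : ℝ)) ξ

/-- The partial Walsh-sum operator `S[f](ξ,x) = (f̂ 1_{[0,ξ)})ˇ(x)`. -/
def Spartial (f : ℝ → ℝ) (ξ x : ℝ) : ℝ :=
  walshFT (fun η => Set.indicator (Set.Ico 0 ξ) (fun _ => (1 : ℝ)) η * walshFT f η) x

/-- A tree of bitiles with top data `(ξtop, Itop)`. -/
structure WTree where
  carrier : Set Bitile
  ξtop : ℝ
  Itop : Set ℝ

/-- The defining conditions of a tree. -/
def IsTree (T : WTree) : Prop :=
  IsDyadic T.Itop ∧ 0 ≤ T.ξtop ∧ ∀ P ∈ T.carrier, P.I ⊆ T.Itop ∧ T.ξtop ∈ P.ω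

/-- `u`-overlapping trees. -/
def UOverlapping (T : WTree) : Prop := ∀ P ∈ T.carrier, T.ξtop ∈ upperHalf P.ω

/-- `l`-overlapping trees. -/
def LOverlapping (T : WTree) : Prop := ∀ P ∈ T.carrier, T.ξtop ∈ lowerHalf P.ω

/-- `T` is td-maximal among the trees in `Cc` : maximal with respect to inclusion among
trees in `Cc` with the same top data. -/
def TdMaximalAmong (T : WTree) (Cc : Set WTree) : Prop :=
  T ∈ Cc ∧ ∀ T' ∈ Cc, T'.ξtop = T.ξtop → T'.Itop = T.Itop →
    T.carrier ⊆ T'.carrier → T'.carrier ⊆ T.carrier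

/-- Order on the lower tiles of two bitiles. -/
def lowerLE (P Q : Bitile) : Prop := P.I ⊆ Q.I ∧ lowerHalf Q.ω ⊆ lowerHalf P.ω

/-- Strict order on the lower tiles of two bitiles. -/
def lowerLT (P Q : Bitile) : Prop := lowerLE P Q ∧ ¬ lowerLE Q P

/-- `l`-convexity of a set of bitiles. -/
def LConvex (S : Set Bitile) : Prop :=
  ∀ P P' P'' : Bitile, P ∈ S → P'' ∈ S → lowerLT P P' → lowerLT P' P'' → P' ∈ S

/-- A properly-sorted collection of `l`-overlapping trees. -/
def ProperlySorted (Ts : Set WTree) : Prop :=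
  (∀ T ∈ Ts, IsTree T ∧ LOverlapping T ∧ LConvex T.carrier) ∧
  (∀ T ∈ Ts, ∀ T' ∈ Ts, T ≠ T' → T.carrier ∩ T'.carrier = ∅) ∧
  (∀ T ∈ Ts, ∀ P ∈ T.carrier, ∀ T' ∈ Ts, (T'.Itop ∩ P.I).Nonempty → T'.ξtop ∉ upperHalf P.ω)

/-- The multiplier `𝒟_k = Σ_{|ω| = 2^k, ω ∩ Ξ ≠ ∅} a_ω 1_ω`. -/
def Dk (a : Set ℝ → ℝ) (Ξ : Set ℝ) (k : ℤ) (ξ : ℝ) : ℝ :=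
  ∑ᶠ (ω : Set ℝ) (_ : IsDyadicLen k ω ∧ (ω ∩ Ξ).Nonempty),
    a ω * Set.indicator ω (fun _ => (1 : ℝ)) ξ

/-- The sequence `k ↦ Σ_{|ω| = 2^k} a_ω 1_ω(ξ)`. -/
def dyadicSum (a : Set ℝ → ℝ) (ξ : ℝ) (k : ℤ) : ℝ :=
  ∑ᶠ (ω : Set ℝ) (_ : IsDyadicLen k ω), a ω * Set.indicator ω (fun _ => (1 : ℝ)) ξ

/-- A tile `I × ω ⊆ ℝ⁺ × ℝ⁺` : a rectangle of dyadic intervals of area `1`. -/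
structure WTile where
  I : Set ℝ
  ω : Set ℝ
  hI : IsDyadic I
  hω : IsDyadic ω
  hIsub : I ⊆ Set.Ici 0
  hωsub : ω ⊆ Set.Ici 0
  harea : volume I * volume ω = 1

/-- The subset of the phase plane occupied by a tile. -/
def WTile.carrier (p : WTile) : Set (ℝ × ℝ) := p.I ×ˢ p.ω

/-- The phase-plane projection `Π_S` associated to a region `S` which can be written as a
finite disjoint union of tiles (it is independent of the chosen tiling). -/
def phaseProj (S : Set (ℝ × ℝ)) (f : ℝ → ℝ) : ℝ → ℝ :=
  if h : ∃ ps : Set WTile, ps.Finite ∧ ps.PairwiseDisjoint WTile.carrier ∧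
      (⋃ p ∈ ps, p.carrier) = S then
    fun x => ∑ᶠ p ∈ h.choose,
      (∫ y in Set.Ici (0 : ℝ), f y * wavePacket p.I p.ω y) * wavePacket p.I p.ω x
  else 0

/-- The region of the phase plane occupied by a tree. -/
def treeRegion (T : WTree) : Set (ℝ × ℝ) := ⋃ P ∈ T.carrier, P.I ×ˢ P.ω

/-- `size(Ps, f) = sup_{T ⊆ Ps convex tree} |I_T|^{-1/2} ‖Π_T f‖_{L²}`. -/
def size (Ps : Set Bitile) (f : ℝ → ℝ) : ℝ≥0∞ :=
  ⨆ (T : WTree) (_ : IsTree T ∧ ConvexBitiles T.carrier ∧ T.carrier ⊆ Ps),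
    (volume T.Itop ^ (1 / 2 : ℝ))⁻¹ * eLpNorm (phaseProj (treeRegion T) f) 2 μplus


/-! ### Finite filtered spaces -/

structure Filt (X : Type) [Fintype X] where
  p : ℕ → X → ℕ
  mono : ∀ t x y, p (t + 1) x = p (t + 1) y → p t x = p t y

namespace Filt

variable {X : Type} [Fintype X] (F : Filt X)

/-- The atom of level `t` containing `x`. -/
def atom (t : ℕ) (x : X) : Finset X := Finset.univ.filter fun y => F.p t y = F.p t x

/-- The averaging operator. -/
def E (t : ℕ) (f : X → ℝ) (x : X) : ℝ := (∑ y ∈ F.atom t x, f y) / ((F.atom t x).card : ℝ)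

/-- Functions constant on the atoms of level `t`. -/
def Meas (t : ℕ) (h : X → ℝ) : Prop := ∀ x y, F.p t x = F.p t y → h x = h y

lemma mem_atom {t : ℕ} {x y : X} : y ∈ F.atom t x ↔ F.p t y = F.p t x := by
  simp [atom]

lemma atom_congr {t : ℕ} {x y : X} (h : F.p t x = F.p t y) : F.atom t x = F.atom t y := by
  simp [atom, h]

lemma card_pos (t : ℕ) (x : X) : (0 : ℝ) < ((F.atom t x).card : ℝ) := by
  have : x ∈ F.atom t x := by simp [mem_atom]
  exact_mod_cast Finset.card_pos.mpr ⟨x, this⟩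

lemma p_mono {s t : ℕ} (hst : s ≤ t) {x y : X} (h : F.p t x = F.p t y) : F.p s x = F.p s y := by
  induction t, hst using Nat.le_induction with
  | base => exact h
  | succ n hn ih => exact ih (F.mono n x y h)

lemma Meas.mono {s t : ℕ} (hst : s ≤ t) {h : X → ℝ} (hh : F.Meas s h) : F.Meas t h :=
  fun x y hxy => hh x y (F.p_mono hst hxy)

lemma E_meas (t : ℕ) (f : X → ℝ) : F.Meas t (F.E t f) := by
  intro x y h
  simp only [E, F.atom_congr h]

lemma E_add (t : ℕ) (f g : X → ℝ) (x : X) :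
    F.E t (fun y => f y + g y) x = F.E t f x + F.E t g x := by
  simp only [E, Finset.sum_add_distrib, add_div]

lemma E_sub (t : ℕ) (f g : X → ℝ) (x : X) :
    F.E t (fun y => f y - g y) x = F.E t f x - F.E t g x := by
  simp only [E, Finset.sum_sub_distrib, sub_div]

lemma E_sum {ι : Type*} (S : Finset ι) (t : ℕ) (f : ι → X → ℝ) (x : X) :
    F.E t (fun y => ∑ i ∈ S, f i y) x = ∑ i ∈ S, F.E t (f i) x := by
  simp only [E]
  rw [Finset.sum_comm, Finset.sum_div]

lemma E_zero (t : ℕ) (x : X) : F.E t (fun _ => 0) x = 0 := by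
  simp [E]

lemma E_mul {t : ℕ} {h : X → ℝ} (hh : F.Meas t h) (f : X → ℝ) (x : X) :
    F.E t (fun y => h y * f y) x = h x * F.E t f x := by
  simp only [E]
  rw [← mul_div_assoc, Finset.mul_sum]
  congr 1
  refine Finset.sum_congr rfl fun y hy => ?_
  rw [hh y x (F.mem_atom.mp hy)]

lemma E_of_meas {t : ℕ} {h : X → ℝ} (hh : F.Meas t h) (x : X) : F.E t h x = h x := by
  have := F.E_mul hh (fun _ => 1) x
  simp only [mul_one] at this
  rw [this]
  have h1 : F.E t (fun _ => 1) x = 1 := by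
    simp only [E, Finset.sum_const, nsmul_eq_mul, mul_one]
    exact div_self (F.card_pos t x).ne'
  rw [h1, mul_one]

lemma E_mono {t : ℕ} {f g : X → ℝ} (h : ∀ x, f x ≤ g x) (x : X) : F.E t f x ≤ F.E t g x := by
  simp only [E]
  gcongr
  exact h _

lemma E_nonneg {t : ℕ} {f : X → ℝ} (h : ∀ x, 0 ≤ f x) (x : X) : 0 ≤ F.E t f x := by
  simp only [E]
  exact div_nonneg (Finset.sum_nonneg fun y _ => h y) (F.card_pos t x).le

lemma E_abs (t : ℕ) (f : X → ℝ) (x : X) : |F.E t f x| ≤ F.E t (fun y => |f y|) x := by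
  simp only [E]
  rw [abs_div, abs_of_pos (F.card_pos t x)]
  gcongr
  exact Finset.abs_sum_le_sum_abs _ _

lemma sum_E (t : ℕ) (f : X → ℝ) : ∑ x, F.E t f x = ∑ x, f x := by
  have h1 : ∀ x, F.E t f x
      = ∑ y, if F.p t y = F.p t x then f y / ((F.atom t y).card : ℝ) else 0 := by
    intro x
    rw [← Finset.sum_filter, E, Finset.sum_div]
    refine Finset.sum_congr rfl fun y hy => ?_
    rw [F.atom_congr (F.mem_atom.mp hy)]
  simp_rw [h1]
  rw [Finset.sum_comm]
  refine Finset.sum_congr rfl fun y _ => ?_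
  rw [← Finset.sum_filter, Finset.sum_const]
  have : (Finset.univ.filter fun x => F.p t y = F.p t x) = F.atom t y := by
    ext z; simp [atom, eq_comm]
  rw [this, nsmul_eq_mul]
  field_simp [(F.card_pos t y).ne']

lemma sum_mul_E {t : ℕ} {h : X → ℝ} (hh : F.Meas t h) (f : X → ℝ) :
    ∑ x, h x * F.E t f x = ∑ x, h x * f x := by
  rw [← F.sum_E t (fun y => h y * f y)]
  exact Finset.sum_congr rfl fun x _ => (F.E_mul hh f x).symm

lemma E_E {s t : ℕ} (hst : s ≤ t) (f : X → ℝ) (x : X) : F.E s (F.E t f) x = F.E s f x := by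
  have hm : F.Meas t (fun y => if F.p s y = F.p s x then (1 : ℝ) else 0) := by
    intro y z hyz
    simp only [F.p_mono hst hyz]
  have := F.sum_mul_E hm f
  simp only [ite_mul, one_mul, zero_mul, ← Finset.sum_filter] at this
  simp only [E, atom] at this ⊢
  rw [this]

lemma E_sq (t : ℕ) (f : X → ℝ) (x : X) : (F.E t f x) ^ 2 ≤ F.E t (fun y => f y ^ 2) x := by
  simp only [E]
  have h := @sq_sum_le_card_mul_sum_sq X ℝ _ _ _ _ (F.atom t x) f
  have hc := F.card_pos t x
  rw [div_pow, div_le_div_iff₀ (by positivity) hc]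
  nlinarith

lemma sum_E_sq_le (t : ℕ) (f : X → ℝ) : ∑ x, (F.E t f x) ^ 2 ≤ ∑ x, f x ^ 2 := by
  rw [← F.sum_E t (fun y => f y ^ 2)]
  exact Finset.sum_le_sum fun x _ => F.E_sq t f x

/-! ### Doob's maximal inequality -/

/-- running maximum -/
def rmax (f : X → ℝ) : ℕ → X → ℝ
  | 0 => fun x => |F.E 0 f x|
  | t + 1 => fun x => max (rmax f t x) |F.E (t + 1) f x|

lemma rmax_succ (f : X → ℝ) (t : ℕ) (x : X) :
    F.rmax f (t + 1) x = max (F.rmax f t x) |F.E (t + 1) f x| := rfl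

lemma rmax_mono (f : X → ℝ) (x : X) : Monotone fun t => F.rmax f t x := by
  refine monotone_nat_of_le_succ fun t => ?_
  rw [rmax_succ]; exact le_max_left _ _

lemma le_rmax (f : X → ℝ) (t : ℕ) (x : X) : |F.E t f x| ≤ F.rmax f t x := by
  cases t with
  | zero => exact le_rfl
  | succ t => rw [rmax_succ]; exact le_max_right _ _

lemma rmax_nonneg (f : X → ℝ) (t : ℕ) (x : X) : 0 ≤ F.rmax f t x :=
  (abs_nonneg _).trans (F.le_rmax f t x)

lemma rmax_meas (f : X → ℝ) (t : ℕ) : F.Meas t (F.rmax f t) := by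
  induction t with
  | zero =>
    intro x y h
    simp only [rmax, F.E_meas 0 f x y h]
  | succ t ih =>
    intro x y h
    rw [rmax_succ, rmax_succ, F.E_meas (t + 1) f x y h, ih x y (F.mono t x y h)]

lemma rmax_abs (f : X → ℝ) (t : ℕ) (x : X) :
    F.rmax f t x ≤ F.rmax (fun y => |f y|) t x := by
  induction t with
  | zero =>
    simp only [rmax]
    exact (F.E_abs 0 f x).trans (le_abs_self _)
  | succ t ih =>
    rw [rmax_succ, rmax_succ]
    exact max_le_max ih ((F.E_abs _ f x).trans (le_abs_self _))

lemma doob_aux (f : X → ℝ) (hf : ∀ x, 0 ≤ f x) (t : ℕ) :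
    ∑ x, (F.rmax f t x ^ 2 - 2 * F.rmax f t x * F.E t f x) ≤ 0 := by
  induction t with
  | zero =>
    refine Finset.sum_nonpos fun x _ => ?_
    simp only [rmax]
    rw [abs_of_nonneg (F.E_nonneg hf x)]
    nlinarith [sq_nonneg (F.E 0 f x)]
  | succ t ih =>
    refine le_trans ?_ ih
    have h1 : ∑ x, F.rmax f t x * F.E (t + 1) f x = ∑ x, F.rmax f t x * F.E t f x := by
      rw [F.sum_mul_E (Meas.mono F (Nat.le_succ t) (F.rmax_meas f t)),
        F.sum_mul_E (F.rmax_meas f t)]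
    have h2 : ∑ x, (F.rmax f t x ^ 2 - 2 * F.rmax f t x * F.E t f x)
        = ∑ x, (F.rmax f t x ^ 2 - 2 * F.rmax f t x * F.E (t + 1) f x) := by
      simp only [Finset.sum_sub_distrib, mul_assoc, ← Finset.mul_sum, h1]
    rw [h2]
    refine Finset.sum_le_sum fun x _ => ?_
    rw [rmax_succ, abs_of_nonneg (F.E_nonneg hf x)]
    rcases le_total (F.rmax f t x) (F.E (t + 1) f x) with h | h
    · rw [max_eq_right h]
      nlinarith [sq_nonneg (F.rmax f t x - F.E (t + 1) f x)]
    · rw [max_eq_left h]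

lemma doob (f : X → ℝ) (t : ℕ) : ∑ x, F.rmax f t x ^ 2 ≤ 4 * ∑ x, f x ^ 2 := by
  set g : X → ℝ := fun y => |f y| with hg
  have h1 := F.doob_aux g (fun x => abs_nonneg _) t
  have h2 : ∑ x, F.rmax f t x ^ 2 ≤ ∑ x, F.rmax g t x ^ 2 :=
    Finset.sum_le_sum fun x _ => pow_le_pow_left₀ (F.rmax_nonneg f t x) (F.rmax_abs f t x) 2
  have h3 : ∑ x, F.E t g x ^ 2 ≤ ∑ x, f x ^ 2 := by
    refine (F.sum_E_sq_le t g).trans_eq ?_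
    simp [hg]
  have h4 : ∑ x, (F.rmax g t x ^ 2 / 2 - 2 * F.E t g x ^ 2) ≤ 0 := by
    refine le_trans (Finset.sum_le_sum fun x _ => ?_) h1
    nlinarith [sq_nonneg (F.rmax g t x - 2 * F.E t g x)]
  rw [Finset.sum_sub_distrib, ← Finset.sum_div, ← Finset.mul_sum] at h4
  linarith

/-! ### Lépingle's inequality -/

/-- anchor process and its companion: `(A_t, K_t, Q_t)` -/
def anch (f : X → ℝ) (δ : ℝ) : ℕ → X → ℝ × ℝ × ℝ
  | 0 => fun x => (F.E 0 f x, F.rmax f 0 x, 0)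
  | t + 1 => fun x =>
      if δ * F.rmax f (t + 1) x < |F.E (t + 1) f x - (anch f δ t x).1| then
        (F.E (t + 1) f x, F.rmax f (t + 1) x,
          (anch f δ t x).2.2 + (F.E (t + 1) f x - (anch f δ t x).1) ^ 2)
      else anch f δ t x

lemma anch_meas (f : X → ℝ) (δ : ℝ) (t : ℕ) (x y : X) (h : F.p t x = F.p t y) :
    F.anch f δ t x = F.anch f δ t y := by
  induction t with
  | zero => simp only [anch, F.E_meas 0 f x y h, F.rmax_meas f 0 x y h]
  | succ t ih =>
    simp only [anch, F.E_meas _ f x y h, F.rmax_meas f _ x y h, ih (F.mono t x y h)]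

lemma anch_inv (f : X → ℝ) {δ : ℝ} (hδ : 0 ≤ δ) (hδ2 : δ ≤ 1 / 2) (t : ℕ) (x : X) :
    |F.E t f x - (F.anch f δ t x).1| ≤ δ * F.rmax f t x ∧
    |(F.anch f δ t x).1| ≤ (F.anch f δ t x).2.1 ∧
    F.rmax f t x ≤ 2 * (F.anch f δ t x).2.1 := by
  induction t with
  | zero =>
    simp only [anch, sub_self, abs_zero]
    have := F.rmax_nonneg f 0 x
    exact ⟨by positivity, F.le_rmax f 0 x, by linarith⟩
  | succ t ih =>
    obtain ⟨h1, h2, h3⟩ := ih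
    simp only [anch]
    have h0 := F.rmax_nonneg f (t + 1) x
    split_ifs with hc
    · simp only [sub_self, abs_zero]
      exact ⟨by positivity, F.le_rmax f _ x, by linarith⟩
    · push Not at hc
      refine ⟨hc, h2, ?_⟩
      rw [rmax_succ] at hc h0 ⊢
      rcases le_total (F.rmax f t x) |F.E (t + 1) f x| with h | h
      · rw [max_eq_right h] at hc h0 ⊢
        have h4 : |F.E (t + 1) f x| ≤ |F.E (t + 1) f x - (F.anch f δ t x).1|
            + |(F.anch f δ t x).1| := by
          have := abs_add_le (F.E (t + 1) f x - (F.anch f δ t x).1) (F.anch f δ t x).1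
          simpa using this
        nlinarith
      · rw [max_eq_left h]; exact h3

lemma anch_Q_mono (f : X → ℝ) (δ : ℝ) (x : X) : Monotone fun t => (F.anch f δ t x).2.2 := by
  refine monotone_nat_of_le_succ fun t => ?_
  simp only [anch]
  split_ifs
  · simp only [le_add_iff_nonneg_right]; positivity
  · exact le_rfl

lemma anch_step (f : X → ℝ) {δ : ℝ} (hδ : 0 ≤ δ) (x : X) {s t : ℕ} (hst : s ≤ t) :
    F.anch f δ t x = F.anch f δ s x ∨
    δ ^ 2 * (F.anch f δ t x).2.1 ^ 2 ≤ (F.anch f δ t x).2.2 - (F.anch f δ s x).2.2 := by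
  induction t, hst using Nat.le_induction with
  | base => exact Or.inl rfl
  | succ t hst ih =>
    by_cases hc : δ * F.rmax f (t + 1) x < |F.E (t + 1) f x - (F.anch f δ t x).1|
    · right
      simp only [anch, if_pos hc]
      have h1 := F.anch_Q_mono f δ x hst
      simp only at h1
      have h0 := F.rmax_nonneg f (t + 1) x
      have h2 : (δ * F.rmax f (t + 1) x) ^ 2 ≤ (F.E (t + 1) f x - (F.anch f δ t x).1) ^ 2 := by
        rw [← sq_abs (F.E (t + 1) f x - _)]
        exact pow_le_pow_left₀ (by positivity) hc.le 2
      nlinarith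
    · have : F.anch f δ (t + 1) x = F.anch f δ t x := by simp only [anch, if_neg hc]
      rw [this]; exact ih

lemma anch_jump (f : X → ℝ) {δ : ℝ} (hδ : 0 ≤ δ) (hδ2 : δ ≤ 1 / 2) (x : X) {s t : ℕ}
    (hst : s ≤ t) (h : 2 * δ * F.rmax f t x < |F.E t f x - F.E s f x|) :
    δ ^ 2 * F.rmax f t x ^ 2 ≤ 4 * ((F.anch f δ t x).2.2 - (F.anch f δ s x).2.2) := by
  rcases F.anch_step f hδ x hst with h1 | h1
  · exfalso
    have h2 := (F.anch_inv f hδ hδ2 t x).1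
    have h3 := (F.anch_inv f hδ hδ2 s x).1
    rw [h1] at h2
    have h4 : δ * F.rmax f s x ≤ δ * F.rmax f t x :=
      mul_le_mul_of_nonneg_left (F.rmax_mono f x hst) hδ
    have h5 := abs_sub_le (F.E t f x) (F.anch f δ s x).1 (F.E s f x)
    rw [abs_sub_comm (F.anch f δ s x).1] at h5
    linarith
  · have h2 := (F.anch_inv f hδ hδ2 t x).2.2
    have h3 : F.rmax f t x ^ 2 ≤ (2 * (F.anch f δ t x).2.1) ^ 2 :=
      pow_le_pow_left₀ (F.rmax_nonneg f t x) h2 2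
    nlinarith [sq_nonneg δ]

lemma anch_sum (f : X → ℝ) (δ : ℝ) (t : ℕ) :
    ∑ x, ((F.anch f δ t x).2.2 + (F.E t f x - (F.anch f δ t x).1) ^ 2)
      ≤ ∑ x, F.E t f x ^ 2 := by
  induction t with
  | zero =>
    simp only [anch, sub_self]
    refine Finset.sum_le_sum fun x _ => ?_
    nlinarith [sq_nonneg (F.E 0 f x)]
  | succ t ih =>
    have h1 : ∀ x, (F.anch f δ (t + 1) x).2.2 + (F.E (t + 1) f x - (F.anch f δ (t + 1) x).1) ^ 2
        = (F.anch f δ t x).2.2 + (F.E (t + 1) f x - (F.anch f δ t x).1) ^ 2 := by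
      intro x
      simp only [anch]
      split_ifs
      · simp
      · rfl
    simp_rw [h1]
    have hA : F.Meas t (fun x => (F.anch f δ t x).1) := fun x y h => by
      simp only [F.anch_meas f δ t x y h]
    have h2 : ∑ x, (F.anch f δ t x).1 * F.E (t + 1) f x
        = ∑ x, (F.anch f δ t x).1 * F.E t f x := by
      rw [F.sum_mul_E (Meas.mono F (Nat.le_succ t) hA), F.sum_mul_E hA]
    have h3 : ∀ s, ∑ x, ((F.anch f δ t x).2.2 + (F.E s f x - (F.anch f δ t x).1) ^ 2)
        = ∑ x, (F.anch f δ t x).2.2 + ∑ x, F.E s f x ^ 2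
          - 2 * ∑ x, (F.anch f δ t x).1 * F.E s f x + ∑ x, (F.anch f δ t x).1 ^ 2 := by
      intro s
      rw [Finset.mul_sum, ← Finset.sum_add_distrib, ← Finset.sum_sub_distrib,
        ← Finset.sum_add_distrib]
      refine Finset.sum_congr rfl fun x _ => ?_
      ring
    rw [h3] at ih ⊢
    rw [h2]
    linarith

lemma anch_Q_sum (f : X → ℝ) (δ : ℝ) (t : ℕ) :
    ∑ x, (F.anch f δ t x).2.2 ≤ ∑ x, f x ^ 2 := by
  refine le_trans ?_ ((F.anch_sum f δ t).trans (F.sum_E_sq_le t f))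
  refine Finset.sum_le_sum fun x _ => ?_
  nlinarith [sq_nonneg (F.E t f x - (F.anch f δ t x).1)]

lemma anch_Q_nonneg (f : X → ℝ) (δ : ℝ) (t : ℕ) (x : X) : 0 ≤ (F.anch f δ t x).2.2 := by
  have := F.anch_Q_mono f δ x (Nat.zero_le t)
  simpa [anch] using this

end Filt

lemma exists_dyadic_scale {D R : ℝ} (hD : 0 < D) (hDR : D ≤ 2 * R) :
    ∃ m : ℕ, 2 * (1 / 2 : ℝ) ^ (m + 1) * R < D ∧ D ≤ 4 * (1 / 2 : ℝ) ^ (m + 1) * R := by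
  have hR : 0 < R := by linarith
  have hex : ∃ m : ℕ, 2 * (1 / 2 : ℝ) ^ (m + 1) * R < D := by
    obtain ⟨m, hm⟩ := exists_pow_lt_of_lt_one (show 0 < D / R by positivity)
      (show (1 / 2 : ℝ) < 1 by norm_num)
    refine ⟨m, ?_⟩
    rw [lt_div_iff₀ hR] at hm
    rw [pow_succ]; linarith
  refine ⟨Nat.find hex, Nat.find_spec hex, ?_⟩
  rcases Nat.eq_zero_or_pos (Nat.find hex) with h | h
  · rw [h]; norm_num; linarith
  · have := Nat.find_min hex (Nat.sub_lt h one_pos)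
    push Not at this
    rw [show Nat.find hex - 1 + 1 = Nat.find hex by omega] at this
    rw [pow_succ]; linarith

lemma geom_sum_bound {θ : ℝ} (h0 : 0 ≤ θ) (h1 : θ < 1) (M : ℕ) :
    ∑ m ∈ Finset.range M, θ ^ m ≤ 1 / (1 - θ) := by
  have := Summable.sum_le_tsum (Finset.range M) (fun i _ => pow_nonneg h0 i)
    (summable_geometric_of_lt_one h0 h1)
  rwa [tsum_geometric_of_lt_one h0 h1, ← one_div] at this

lemma lepingle (r : ℝ) (hr : 2 < r) : ∃ C : ℝ, 0 < C ∧
    ∀ {X : Type} [Fintype X] (F : Filt X) (f : X → ℝ) (n : ℕ), ∃ Z : X → ℝ,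
      (∀ x, 0 ≤ Z x) ∧ ∑ x, Z x ≤ C * ∑ x, f x ^ 2 ∧
      ∀ x, (∀ t ≤ n, F.E t f x ^ 2 ≤ Z x) ∧
        ∀ u : ℕ → ℕ, Monotone u → (∀ i, u i ≤ n) → ∀ m,
          ∑ i ∈ Finset.range m, |F.E (u (i + 1)) f x - F.E (u i) f x| ^ r ≤ Z x ^ (r / 2) := by
  set θ : ℝ := (1 / 2 : ℝ) ^ (r - 2) with hθ
  have hθ0 : 0 < θ := by positivity
  have hθ1 : θ < 1 := Real.rpow_lt_one (by norm_num) (by norm_num) (by linarith)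
  set c : ℝ := (4 : ℝ) ^ (2 * (r + 1) / r) with hc
  have hc1 : 1 ≤ c := Real.one_le_rpow (by norm_num) (by positivity)
  have hcr : c ^ (r / 2) = 4 ^ (r + 1) := by
    rw [hc, ← Real.rpow_mul (by norm_num)]
    congr 1; field_simp
  refine ⟨c * (4 + 1 / (1 - θ)), by have : 0 < 1 - θ := by linarith
                                    positivity, ?_⟩
  intro X _ F f n
  have hM : ∃ M : ℕ, ∀ x, ∀ s ≤ n, ∀ t ≤ n, s ≤ t → F.E t f x ≠ F.E s f x → ∃ m < M,
      2 * (1 / 2 : ℝ) ^ (m + 1) * F.rmax f t x < |F.E t f x - F.E s f x| ∧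
      |F.E t f x - F.E s f x| ≤ 4 * (1 / 2 : ℝ) ^ (m + 1) * F.rmax f t x := by
    have h1 : ∀ x s t, ∃ m : ℕ, s ≤ t → F.E t f x ≠ F.E s f x →
      2 * (1 / 2 : ℝ) ^ (m + 1) * F.rmax f t x < |F.E t f x - F.E s f x| ∧
      |F.E t f x - F.E s f x| ≤ 4 * (1 / 2 : ℝ) ^ (m + 1) * F.rmax f t x := by
      intro x s t
      by_cases h : s ≤ t ∧ F.E t f x ≠ F.E s f x
      · obtain ⟨m, hm⟩ := exists_dyadic_scale (D := |F.E t f x - F.E s f x|)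
          (R := F.rmax f t x) (abs_pos.mpr (sub_ne_zero.mpr h.2)) (by
            have h2 := F.le_rmax f t x
            have h3 := F.le_rmax f s x
            have h4 := F.rmax_mono f x h.1
            simp only at h4
            have := abs_sub (F.E t f x) (F.E s f x)
            linarith)
        exact ⟨m, fun _ _ => hm⟩
      · exact ⟨0, fun h1 h2 => absurd ⟨h1, h2⟩ h⟩
    choose mm hmm using h1
    refine ⟨(Finset.univ ×ˢ (Finset.range (n + 1) ×ˢ Finset.range (n + 1))).sup
      (fun z : X × ℕ × ℕ => mm z.1 z.2.1 z.2.2) + 1, fun x s hs t ht hst hne =>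
      ⟨mm x s t, ?_, hmm x s t hst hne⟩⟩
    rw [Nat.lt_succ_iff]
    exact Finset.le_sup (f := fun z : X × ℕ × ℕ => mm z.1 z.2.1 z.2.2) (b := (x, s, t))
      (by simp; omega)
  obtain ⟨M, hM⟩ := hM
  set w : ℕ → ℝ := fun m => ((1 / 2 : ℝ) ^ (m + 1)) ^ (r - 2) with hw
  have hw0 : ∀ m, 0 ≤ w m := fun m => by positivity
  have hwθ : ∀ m, w m ≤ θ ^ m := by
    intro m
    have : w m = θ ^ (m + 1) := by
      simp only [hw, hθ]
      rw [← Real.rpow_natCast, ← Real.rpow_mul (by norm_num), ← Real.rpow_natCast,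
        ← Real.rpow_mul (by norm_num), mul_comm]
    rw [this]
    exact pow_le_pow_of_le_one hθ0.le hθ1.le (Nat.le_succ m)
  set Q : ℕ → ℕ → X → ℝ := fun m t x => (F.anch f ((1 / 2 : ℝ) ^ (m + 1)) t x).2.2 with hQ
  have hQ0 : ∀ m t x, 0 ≤ Q m t x := fun m t x => F.anch_Q_nonneg _ _ _ _
  set S : X → ℝ := fun x => ∑ m ∈ Finset.range M, w m * Q m n x with hS
  have hS0 : ∀ x, 0 ≤ S x := fun x => Finset.sum_nonneg fun m _ => mul_nonneg (hw0 m) (hQ0 m n x)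
  set Z0 : X → ℝ := fun x => F.rmax f n x ^ 2 + S x with hZ0
  have hZ00 : ∀ x, 0 ≤ Z0 x := fun x => add_nonneg (sq_nonneg _) (hS0 x)
  have hf0 : 0 ≤ ∑ x, f x ^ 2 := Finset.sum_nonneg fun x _ => sq_nonneg _
  refine ⟨fun x => c * Z0 x, fun x => mul_nonneg (by linarith) (hZ00 x), ?_, fun x => ⟨?_, ?_⟩⟩
  · rw [← Finset.mul_sum, mul_assoc]
    refine mul_le_mul_of_nonneg_left ?_ (by linarith)
    simp only [hZ0, Finset.sum_add_distrib, add_mul]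
    refine add_le_add (F.doob f n) ?_
    simp only [hS]
    rw [Finset.sum_comm]
    simp_rw [← Finset.mul_sum]
    calc ∑ m ∈ Finset.range M, w m * ∑ x, Q m n x
        ≤ ∑ m ∈ Finset.range M, θ ^ m * ∑ x, f x ^ 2 :=
          Finset.sum_le_sum fun m _ => mul_le_mul (hwθ m) (F.anch_Q_sum f _ n)
            (Finset.sum_nonneg fun x _ => hQ0 m n x) (by positivity)
      _ ≤ _ := by
          rw [← Finset.sum_mul]
          exact mul_le_mul_of_nonneg_right (geom_sum_bound hθ0.le hθ1 M) hf0
  · intro t ht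
    have h1 : F.E t f x ^ 2 ≤ F.rmax f n x ^ 2 := by
      rw [← sq_abs]
      exact pow_le_pow_left₀ (abs_nonneg _) ((F.le_rmax f t x).trans (F.rmax_mono f x ht)) 2
    have h2 : Z0 x ≤ c * Z0 x := le_mul_of_one_le_left (hZ00 x) hc1
    have := hS0 x
    simp only [hZ0] at h2 ⊢
    linarith
  · intro u hu hun m
    have hR0 := F.rmax_nonneg f n x
    have key : ∀ i, |F.E (u (i + 1)) f x - F.E (u i) f x| ^ r
        ≤ 4 ^ (r + 1) * F.rmax f n x ^ (r - 2) *
          ∑ k ∈ Finset.range M, w k * (Q k (u (i + 1)) x - Q k (u i) x) := by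
      intro i
      have hui : u i ≤ u (i + 1) := hu (Nat.le_succ i)
      have hterm : ∀ k, 0 ≤ w k * (Q k (u (i + 1)) x - Q k (u i) x) := fun k =>
        mul_nonneg (hw0 k) (sub_nonneg.mpr (F.anch_Q_mono f _ x hui))
      by_cases hne : F.E (u (i + 1)) f x = F.E (u i) f x
      · rw [hne, sub_self, abs_zero, Real.zero_rpow (by linarith)]
        exact mul_nonneg (by positivity) (Finset.sum_nonneg fun k _ => hterm k)
      obtain ⟨k, hkM, hk1, hk2⟩ := hM x (u i) (hun i) (u (i + 1)) (hun _) hui hne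
      set δ : ℝ := (1 / 2 : ℝ) ^ (k + 1) with hδ
      have hδ0 : 0 < δ := by positivity
      have hδ2 : δ ≤ 1 / 2 := by
        rw [hδ, pow_succ]
        have : (1 / 2 : ℝ) ^ k ≤ 1 := pow_le_one₀ (by norm_num) (by norm_num)
        linarith
      have hj := F.anch_jump f hδ0.le hδ2 x hui hk1
      set R := F.rmax f (u (i + 1)) x with hRdef
      have hRR : R ≤ F.rmax f n x := F.rmax_mono f x (hun _)
      have hR00 : 0 ≤ R := F.rmax_nonneg f _ x
      have hRpos : 0 < R := by
        rcases hR00.eq_or_lt with h | h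
        · rw [← h] at hk2
          simp only [mul_zero] at hk2
          exact absurd (abs_nonpos_iff.mp hk2) (sub_ne_zero.mpr hne)
        · exact h
      calc |F.E (u (i + 1)) f x - F.E (u i) f x| ^ r ≤ (4 * δ * R) ^ r :=
            Real.rpow_le_rpow (abs_nonneg _) hk2 (by linarith)
        _ = 4 ^ r * R ^ (r - 2) * (δ ^ (r - 2) * (δ ^ 2 * R ^ 2)) := by
            rw [Real.mul_rpow (by positivity) hR00, Real.mul_rpow (by norm_num) hδ0.le]
            have e1 : δ ^ r = δ ^ (r - 2) * δ ^ 2 := by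
              rw [← Real.rpow_natCast δ 2, ← Real.rpow_add hδ0]; norm_num
            have e2 : R ^ r = R ^ (r - 2) * R ^ 2 := by
              rw [← Real.rpow_natCast R 2, ← Real.rpow_add hRpos]; norm_num
            rw [e1, e2]; ring
        _ ≤ 4 ^ r * F.rmax f n x ^ (r - 2) *
              (δ ^ (r - 2) * (4 * (Q k (u (i + 1)) x - Q k (u i) x))) := by
            have := Real.rpow_le_rpow hR00 hRR (show 0 ≤ r - 2 by linarith)
            gcongr
        _ = 4 ^ (r + 1) * F.rmax f n x ^ (r - 2) * (w k * (Q k (u (i + 1)) x - Q k (u i) x)) := by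
            rw [Real.rpow_add (by norm_num), Real.rpow_one]
            simp only [hw, ← hδ]
            ring
        _ ≤ _ := by
            refine mul_le_mul_of_nonneg_left ?_ (by positivity)
            exact Finset.single_le_sum (f := fun k => w k * (Q k (u (i + 1)) x - Q k (u i) x))
              (fun k _ => hterm k) (Finset.mem_range.mpr hkM)
    calc ∑ i ∈ Finset.range m, |F.E (u (i + 1)) f x - F.E (u i) f x| ^ r
        ≤ ∑ i ∈ Finset.range m, 4 ^ (r + 1) * F.rmax f n x ^ (r - 2) *
          ∑ k ∈ Finset.range M, w k * (Q k (u (i + 1)) x - Q k (u i) x) :=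
          Finset.sum_le_sum fun i _ => key i
      _ = 4 ^ (r + 1) * F.rmax f n x ^ (r - 2) *
          ∑ k ∈ Finset.range M, w k * (Q k (u m) x - Q k (u 0) x) := by
          rw [← Finset.mul_sum, Finset.sum_comm]
          congr 1
          refine Finset.sum_congr rfl fun k _ => ?_
          rw [← Finset.mul_sum, Finset.sum_range_sub (fun i => Q k (u i) x)]
      _ ≤ 4 ^ (r + 1) * F.rmax f n x ^ (r - 2) * S x := by
          refine mul_le_mul_of_nonneg_left ?_ (by positivity)
          refine Finset.sum_le_sum fun k _ => mul_le_mul_of_nonneg_left ?_ (hw0 k)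
          have h1 := hQ0 k (u 0) x
          have h2 : Q k (u m) x ≤ Q k n x := F.anch_Q_mono f _ x (hun m)
          linarith
      _ ≤ 4 ^ (r + 1) * (Z0 x ^ ((r - 2) / 2) * Z0 x) := by
          rw [mul_assoc]
          refine mul_le_mul_of_nonneg_left ?_ (by positivity)
          refine mul_le_mul ?_ ?_ (hS0 x) (by have := hZ00 x; positivity)
          · have e : F.rmax f n x ^ (r - 2) = (F.rmax f n x ^ 2) ^ ((r - 2) / 2) := by
              rw [← Real.rpow_natCast, ← Real.rpow_mul hR0]
              congr 1; push_cast; ring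
            rw [e]
            refine Real.rpow_le_rpow (sq_nonneg _) ?_ (by linarith)
            have := hS0 x
            simp only [hZ0]; linarith
          · simp only [hZ0]; nlinarith [sq_nonneg (F.rmax f n x)]
      _ = (c * Z0 x) ^ (r / 2) := by
          rw [Real.mul_rpow (by linarith) (hZ00 x), hcr]
          congr 1
          have h := Real.rpow_add_one' (hZ00 x) (y := (r - 2) / 2) (by linarith)
          rw [← h]; congr 1; ring

/-- Minkowski: coordinatewise variation bounds give an `ℓ²`-valued variation bound. -/
lemma vec_var {ι : Type*} (r : ℝ) (hr : 2 < r) (S : Finset ι) (m : ℕ) (d : ℕ → ι → ℝ)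
    (b : ι → ℝ) (hb : ∀ j, 0 ≤ b j)
    (h : ∀ j ∈ S, ∑ i ∈ Finset.range m, |d i j| ^ r ≤ b j ^ (r / 2)) :
    ∑ i ∈ Finset.range m, (∑ j ∈ S, d i j ^ 2) ^ (r / 2) ≤ (∑ j ∈ S, b j) ^ (r / 2) := by
  have hp : 1 ≤ r / 2 := by linarith
  have hp0 : 0 < r / 2 := by linarith
  have key : (∑ i ∈ Finset.range m, (∑ j ∈ S, d i j ^ 2) ^ (r / 2)) ^ (1 / (r / 2))
      ≤ ∑ j ∈ S, b j := by
    induction S using Finset.induction_on with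
    | empty =>
      simp [Real.zero_rpow hp0.ne']
      have : (2 / r) ≠ 0 := by positivity
      simp [Real.zero_rpow this]
    | insert j S hj ih =>
      simp only [Finset.sum_insert hj]
      refine (Real.Lp_add_le_of_nonneg (Finset.range m) hp (fun i _ => sq_nonneg _)
        (fun i _ => Finset.sum_nonneg fun _ _ => sq_nonneg _)).trans ?_
      refine add_le_add ?_ (ih fun j hj => h j (Finset.mem_insert_of_mem hj))
      have h1 := h j (Finset.mem_insert_self _ _)
      have e : ∀ i, (d i j ^ 2) ^ (r / 2) = |d i j| ^ r := by
        intro i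
        rw [← sq_abs, ← Real.rpow_natCast, ← Real.rpow_mul (abs_nonneg _)]
        congr 1; push_cast; ring
      simp_rw [e]
      calc _ ≤ (b j ^ (r / 2)) ^ (1 / (r / 2)) :=
            Real.rpow_le_rpow (Finset.sum_nonneg fun _ _ => by positivity) h1 (by positivity)
        _ = b j := by
            rw [← Real.rpow_mul (hb j), mul_one_div_cancel hp0.ne', Real.rpow_one]
  have h0 : 0 ≤ ∑ i ∈ Finset.range m, (∑ j ∈ S, d i j ^ 2) ^ (r / 2) :=
    Finset.sum_nonneg fun i _ => Real.rpow_nonneg (Finset.sum_nonneg fun _ _ => sq_nonneg _) _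
  have := Real.rpow_le_rpow (Real.rpow_nonneg h0 _) key hp0.le
  rwa [← Real.rpow_mul h0, one_div_mul_cancel hp0.ne', Real.rpow_one] at this

/-- `ℓ²` norm over a finset. -/
def l2n {X : Type*} (I : Finset X) (f : X → ℝ) : ℝ := Real.sqrt (∑ x ∈ I, f x ^ 2)

lemma l2n_nonneg {X : Type*} (I : Finset X) (f : X → ℝ) : 0 ≤ l2n I f := Real.sqrt_nonneg _

lemma l2n_sq {X : Type*} (I : Finset X) (f : X → ℝ) : l2n I f ^ 2 = ∑ x ∈ I, f x ^ 2 :=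
  Real.sq_sqrt (Finset.sum_nonneg fun _ _ => sq_nonneg _)

lemma l2n_le {X : Type*} {I : Finset X} {f : X → ℝ} {b : ℝ} (hb : 0 ≤ b)
    (h : ∑ x ∈ I, f x ^ 2 ≤ b ^ 2) : l2n I f ≤ b := by
  rw [l2n]; exact Real.sqrt_le_iff.mpr ⟨hb, h⟩

lemma l2n_mono {X : Type*} {I : Finset X} {f g : X → ℝ} (h : ∀ x ∈ I, |f x| ≤ |g x|) :
    l2n I f ≤ l2n I g :=
  Real.sqrt_le_sqrt (Finset.sum_le_sum fun x hx => sq_le_sq.mpr (h x hx))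

lemma l2n_add {X : Type*} (I : Finset X) (f g : X → ℝ) :
    l2n I (fun x => f x + g x) ≤ l2n I f + l2n I g := by
  refine l2n_le (add_nonneg (l2n_nonneg _ _) (l2n_nonneg _ _)) ?_
  have h1 := Finset.sum_mul_sq_le_sq_mul_sq I f g
  rw [← l2n_sq, ← l2n_sq, ← mul_pow] at h1
  have h2 : ∑ x ∈ I, f x * g x ≤ l2n I f * l2n I g :=
    le_trans (le_abs_self _) (abs_le_of_sq_le_sq h1
      (mul_nonneg (l2n_nonneg _ _) (l2n_nonneg _ _)))
  have h3 : ∑ x ∈ I, (f x + g x) ^ 2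
      = ∑ x ∈ I, f x ^ 2 + 2 * ∑ x ∈ I, f x * g x + ∑ x ∈ I, g x ^ 2 := by
    rw [Finset.mul_sum, ← Finset.sum_add_distrib, ← Finset.sum_add_distrib]
    exact Finset.sum_congr rfl fun x _ => by ring
  rw [h3, ← l2n_sq, ← l2n_sq]
  nlinarith

lemma l2n_sum {X ι : Type*} (I : Finset X) (S : Finset ι) (f : ι → X → ℝ) :
    l2n I (fun x => ∑ i ∈ S, f i x) ≤ ∑ i ∈ S, l2n I (f i) := by
  induction S using Finset.induction_on with
  | empty => simp [l2n]
  | insert j S hj ih =>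
    simp only [Finset.sum_insert hj]
    exact (l2n_add I _ _).trans (by gcongr)

/-- greedy anchors -/
def gr {ι : Type*} (S : Finset ι) (v : ℕ → ι → ℝ) (δ : ℝ) : ℕ → ℕ
  | 0 => 0
  | t + 1 => if δ ^ 2 < ∑ j ∈ S, (v (t + 1) j - v (gr S v δ t) j) ^ 2 then t + 1 else gr S v δ t

lemma gr_le {ι : Type*} (S : Finset ι) (v : ℕ → ι → ℝ) (δ : ℝ) (t : ℕ) : gr S v δ t ≤ t := by
  induction t with
  | zero => simp [gr]
  | succ t ih =>
    simp only [gr]; split_ifs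
    · exact le_rfl
    · omega

lemma gr_mono {ι : Type*} (S : Finset ι) (v : ℕ → ι → ℝ) (δ : ℝ) : Monotone (gr S v δ) := by
  refine monotone_nat_of_le_succ fun t => ?_
  have := gr_le S v δ t
  conv_rhs => rw [gr]
  split_ifs <;> omega

lemma gr_close {ι : Type*} (S : Finset ι) (v : ℕ → ι → ℝ) (δ : ℝ) (t : ℕ) :
    ∑ j ∈ S, (v t j - v (gr S v δ t) j) ^ 2 ≤ δ ^ 2 := by
  cases t with
  | zero => simp [gr]; positivity
  | succ t =>
    simp only [gr]; split_ifs with h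
    · simp; positivity
    · exact not_lt.mp h

lemma gr_card {ι : Type*} (r : ℝ) (hr : 2 < r) (S : Finset ι) (v : ℕ → ι → ℝ) {δ A : ℝ}
    (hδ : 0 < δ)
    (hv : ∀ u : ℕ → ℕ, Monotone u → ∀ m, ∑ i ∈ Finset.range m,
      (∑ j ∈ S, (v (u (i + 1)) j - v (u i) j) ^ 2) ^ (r / 2) ≤ A) (T : ℕ) :
    (((Finset.range (T + 1)).image (gr S v δ)).card : ℝ) ≤ 1 + A / δ ^ r := by
  have h1 : (((Finset.range (T + 1)).image (gr S v δ)).card : ℝ) ≤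
      1 + (∑ i ∈ Finset.range T,
      (∑ j ∈ S, (v (gr S v δ (i + 1)) j - v (gr S v δ i) j) ^ 2) ^ (r / 2)) / δ ^ r := by
    induction T with
    | zero => simp
    | succ T ih =>
      rw [Finset.range_add_one, Finset.image_insert, Finset.sum_range_succ, add_div]
      by_cases hc : δ ^ 2 < ∑ j ∈ S, (v (T + 1) j - v (gr S v δ T) j) ^ 2
      · have e : gr S v δ (T + 1) = T + 1 := by simp only [gr, if_pos hc]
        have h2 : ((insert (gr S v δ (T + 1)) ((Finset.range (T + 1)).image (gr S v δ))).card : ℝ)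
            ≤ ((Finset.range (T + 1)).image (gr S v δ)).card + 1 := by
          exact_mod_cast Finset.card_insert_le _ _
        have h3 : 1 ≤ (∑ j ∈ S, (v (gr S v δ (T + 1)) j - v (gr S v δ T) j) ^ 2) ^ (r / 2)
            / δ ^ r := by
          rw [e, one_le_div (by positivity)]
          have e2 : δ ^ r = (δ ^ 2) ^ (r / 2) := by
            rw [← Real.rpow_natCast, ← Real.rpow_mul hδ.le]
            congr 1; push_cast; ring
          rw [e2]
          exact Real.rpow_le_rpow (by positivity) hc.le (by linarith)
        linarith
      · have e : gr S v δ (T + 1) = gr S v δ T := by simp only [gr, if_neg hc]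
        have h2 : insert (gr S v δ (T + 1)) ((Finset.range (T + 1)).image (gr S v δ))
            = (Finset.range (T + 1)).image (gr S v δ) := by
          rw [e]
          exact Finset.insert_eq_of_mem (Finset.mem_image_of_mem _ (by simp))
        rw [h2, e]
        simp [Real.zero_rpow (show r / 2 ≠ 0 by linarith)]
        simpa using ih
  refine h1.trans ?_
  have := hv (gr S v δ) (gr_mono S v δ) T
  gcongr

section Entropy
variable {ι X : Type*} (S : Finset ι) (I : Finset X) (w : ι → X → ℝ)

lemma orth_sum (hw : ∀ j x, w j x ^ 2 = 1)
    (ho : ∀ i ∈ S, ∀ j ∈ S, i ≠ j → ∑ x ∈ I, w i x * w j x = 0) (d : ι → ℝ) :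
    ∑ x ∈ I, (∑ j ∈ S, w j x * d j) ^ 2 = I.card * ∑ j ∈ S, d j ^ 2 := by
  have h1 : ∀ x, (∑ j ∈ S, w j x * d j) ^ 2
      = ∑ i ∈ S, ∑ j ∈ S, (d i * d j) * (w i x * w j x) := by
    intro x
    rw [sq, Finset.sum_mul_sum]
    exact Finset.sum_congr rfl fun i _ => Finset.sum_congr rfl fun j _ => by ring
  simp_rw [h1]
  rw [Finset.sum_comm, Finset.mul_sum]
  refine Finset.sum_congr rfl fun i hi => ?_
  rw [Finset.sum_comm, Finset.sum_eq_single i]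
  · rw [← Finset.mul_sum]
    have : ∀ x, w i x * w i x = 1 := fun x => by rw [← sq]; exact hw i x
    simp [this]; ring
  · intro j hj hji
    rw [← Finset.mul_sum, ho i hi j hj hji.symm, mul_zero]
  · exact fun h => absurd hi h

/-- maximal function over finitely many vectors -/
lemma orth_max (hw : ∀ j x, w j x ^ 2 = 1)
    (ho : ∀ i ∈ S, ∀ j ∈ S, i ≠ j → ∑ x ∈ I, w i x * w j x = 0) (d : ℕ → ι → ℝ)
    (T : Finset ℕ) (τ : X → ℕ) (hτ : ∀ x ∈ I, τ x ∈ T) {b : ℝ}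
    (hb : ∀ t ∈ T, ∑ j ∈ S, d t j ^ 2 ≤ b ^ 2) :
    ∑ x ∈ I, (∑ j ∈ S, w j x * d (τ x) j) ^ 2 ≤ I.card * (T.card * b ^ 2) := by
  calc ∑ x ∈ I, (∑ j ∈ S, w j x * d (τ x) j) ^ 2
      ≤ ∑ x ∈ I, ∑ t ∈ T, (∑ j ∈ S, w j x * d t j) ^ 2 :=
        Finset.sum_le_sum fun x hx =>
          Finset.single_le_sum (f := fun t => (∑ j ∈ S, w j x * d t j) ^ 2)
            (fun t _ => sq_nonneg _) (hτ x hx)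
    _ = ∑ t ∈ T, (I.card : ℝ) * ∑ j ∈ S, d t j ^ 2 := by
        rw [Finset.sum_comm]
        exact Finset.sum_congr rfl fun t _ => orth_sum S I w hw ho (d t)
    _ ≤ ∑ t ∈ T, (I.card : ℝ) * b ^ 2 :=
        Finset.sum_le_sum fun t ht => mul_le_mul_of_nonneg_left (hb t ht) (by positivity)
    _ = _ := by rw [Finset.sum_const, nsmul_eq_mul]; ring

lemma chain_step (r : ℝ) (hr : 2 < r) (hw : ∀ j x, w j x ^ 2 = 1)
    (ho : ∀ i ∈ S, ∀ j ∈ S, i ≠ j → ∑ x ∈ I, w i x * w j x = 0) (v : ℕ → ι → ℝ) {B : ℝ}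
    (hB : 0 < B) (hvB : ∀ t, ∑ j ∈ S, v t j ^ 2 ≤ B ^ 2)
    (hv : ∀ u : ℕ → ℕ, Monotone u → ∀ m, ∑ i ∈ Finset.range m,
      (∑ j ∈ S, (v (u (i + 1)) j - v (u i) j) ^ 2) ^ (r / 2) ≤ B ^ r) (L : ℕ) :
    ∀ τ : X → ℕ,
    l2n I (fun x => ∑ j ∈ S, w j x * v (gr S v (B * (1 / 2) ^ L) (τ x)) j)
      ≤ Real.sqrt I.card * B * (4 * ∑ m ∈ Finset.range (L + 1), ((2 : ℝ) ^ (r / 2 - 1)) ^ m) := by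
  have hcard : ∀ (m T : ℕ), (((Finset.range (T + 1)).image
      (gr S v (B * (1 / 2) ^ m))).card : ℝ) ≤ 2 * ((2 : ℝ) ^ (r / 2 - 1)) ^ (2 * m) * 4 ^ m := by
    intro m T
    refine (gr_card r hr S v (by positivity) hv T).trans ?_
    have e : B ^ r / (B * (1 / 2) ^ m) ^ r = ((2 : ℝ) ^ (r / 2 - 1)) ^ (2 * m) * 4 ^ m := by
      rw [Real.mul_rpow hB.le (by positivity), div_mul_cancel_left₀ (by positivity)]
      rw [one_div, inv_pow, Real.inv_rpow (by positivity), inv_inv]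
      rw [show (4 : ℝ) = 2 ^ (2 : ℝ) by norm_num]
      rw [← Real.rpow_natCast, ← Real.rpow_natCast, ← Real.rpow_natCast,
        ← Real.rpow_mul (by norm_num), ← Real.rpow_mul (by norm_num), ← Real.rpow_mul (by norm_num),
        ← Real.rpow_add (by norm_num)]
      congr 1; push_cast; ring
    rw [e]
    have h1 : 1 ≤ ((2 : ℝ) ^ (r / 2 - 1)) ^ (2 * m) :=
      one_le_pow₀ (Real.one_le_rpow (by norm_num) (by linarith))
    have h2 : (1 : ℝ) ≤ 4 ^ m := one_le_pow₀ (by norm_num)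
    nlinarith
  set ρ : ℝ := (2 : ℝ) ^ (r / 2 - 1) with hρ
  have hρ0 : 0 < ρ := by positivity
  have hI : 0 ≤ Real.sqrt I.card := Real.sqrt_nonneg _
  have hIs : Real.sqrt I.card ^ 2 = I.card := Real.sq_sqrt (by positivity)
  have hmem : ∀ (δ : ℝ) (τ : X → ℕ), ∀ x ∈ I,
      gr S v δ (τ x) ∈ (Finset.range (I.sup τ + 1)).image (gr S v δ) := by
    intro δ τ x hx
    refine Finset.mem_image_of_mem _ (Finset.mem_range.mpr (Nat.lt_succ_of_le ?_))
    exact Finset.le_sup hx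
  induction L with
  | zero =>
    intro τ
    refine l2n_le (by positivity) ?_
    refine (orth_max S I w hw ho v _ _ (hmem _ τ) (fun t _ => hvB t)).trans ?_
    have := hcard 0 (I.sup τ)
    simp only [pow_zero, mul_one, mul_zero] at this ⊢
    rw [mul_pow, mul_pow, hIs]
    simp only [zero_add, Finset.range_one, Finset.sum_singleton, pow_zero, mul_one]
    rw [mul_assoc]
    refine mul_le_mul_of_nonneg_left ?_ (by positivity)
    nlinarith [sq_nonneg B]
  | succ L ih =>
    intro τ
    set τ1 : X → ℕ := fun x => gr S v (B * (1 / 2) ^ (L + 1)) (τ x) with hτ1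
    have h1 := ih τ1
    have h2 : l2n I (fun x => ∑ j ∈ S, w j x *
        (v (τ1 x) j - v (gr S v (B * (1 / 2) ^ L) (τ1 x)) j))
        ≤ Real.sqrt I.card * B * (4 * ρ ^ (L + 1)) := by
      refine l2n_le (by positivity) ?_
      refine (orth_max S I w hw ho (fun t j => v t j - v (gr S v (B * (1 / 2) ^ L) t) j) _ _
        (hmem _ τ) (fun t _ => gr_close S v _ t)).trans ?_
      have := hcard (L + 1) (I.sup τ)
      rw [mul_pow (Real.sqrt _ * B), mul_pow (Real.sqrt _), hIs, mul_assoc (I.card : ℝ)]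
      refine mul_le_mul_of_nonneg_left ?_ (by positivity)
      refine (mul_le_mul_of_nonneg_right this (by positivity)).trans ?_
      have e : (4 : ℝ) ^ (L + 1) * ((1 / 2) ^ L) ^ 2 = 4 := by
        rw [← pow_mul, mul_comm L 2, pow_mul, pow_succ, mul_right_comm, ← mul_pow]
        norm_num
      calc 2 * ρ ^ (2 * (L + 1)) * 4 ^ (L + 1) * (B * (1 / 2) ^ L) ^ 2
          = 2 * ρ ^ (2 * (L + 1)) * (4 ^ (L + 1) * ((1 / 2) ^ L) ^ 2) * B ^ 2 := by ring
        _ = 8 * (ρ ^ (2 * (L + 1)) * B ^ 2) := by rw [e]; ring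
        _ ≤ 16 * (ρ ^ (2 * (L + 1)) * B ^ 2) := by
            have : 0 ≤ ρ ^ (2 * (L + 1)) * B ^ 2 := by positivity
            linarith
        _ = B ^ 2 * (4 * ρ ^ (L + 1)) ^ 2 := by ring
    have h3 := l2n_add I (fun x => ∑ j ∈ S, w j x * v (gr S v (B * (1 / 2) ^ L) (τ1 x)) j)
      (fun x => ∑ j ∈ S, w j x * (v (τ1 x) j - v (gr S v (B * (1 / 2) ^ L) (τ1 x)) j))
    have e : (fun x => ∑ j ∈ S, w j x * v (gr S v (B * (1 / 2) ^ L) (τ1 x)) j +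
      ∑ j ∈ S, w j x * (v (τ1 x) j - v (gr S v (B * (1 / 2) ^ L) (τ1 x)) j))
      = fun x => ∑ j ∈ S, w j x * v (τ1 x) j := by
      funext x
      rw [← Finset.sum_add_distrib]
      exact Finset.sum_congr rfl fun j _ => by ring
    rw [e] at h3
    refine h3.trans ((add_le_add h1 h2).trans_eq ?_)
    rw [Finset.sum_range_succ _ (L + 1)]
    ring

end Entropy

lemma exists_level (r N : ℝ) (hr : 2 < r) (hN : 1 ≤ N) :
    ∃ L : ℕ, ((2 : ℝ) ^ (r / 2 - 1)) ^ L ≤ N ^ (1 / 2 - 1 / r) ∧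
      Real.sqrt N * (1 / 2 : ℝ) ^ L ≤ 2 * N ^ (1 / 2 - 1 / r) := by
  have hN0 : 0 < N := by linarith
  set L := ⌊Real.logb 2 N / r⌋₊ with hL
  have hlog : 0 ≤ Real.logb 2 N / r := div_nonneg (Real.logb_nonneg (by norm_num) hN) (by linarith)
  have hNe : N = 2 ^ (Real.logb 2 N) := (Real.rpow_logb (by norm_num) (by norm_num) hN0).symm
  have h1 : (L : ℝ) ≤ Real.logb 2 N / r := Nat.floor_le hlog
  have h2 : Real.logb 2 N / r < L + 1 := Nat.lt_floor_add_one _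
  set y := Real.logb 2 N with hy
  have hr0 : 0 < r := by linarith
  have h1' : (L : ℝ) * r ≤ y := by rwa [le_div_iff₀ hr0] at h1
  have e1 : N ^ (1 / 2 - 1 / r) = 2 ^ (y * (1 / 2 - 1 / r)) := by
    conv_lhs => rw [hNe]
    rw [← Real.rpow_mul (by norm_num)]
  refine ⟨L, ?_, ?_⟩
  · rw [e1, ← Real.rpow_natCast, ← Real.rpow_mul (by norm_num)]
    refine Real.rpow_le_rpow_of_exponent_le (by norm_num) ?_
    have : (r / 2 - 1) * L = (L * r) * (1 / 2 - 1 / r) := by field_simp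
    rw [this]
    refine mul_le_mul_of_nonneg_right h1' ?_
    rw [sub_nonneg]
    exact one_div_le_one_div_of_le (by norm_num) hr.le
  · have e2 : Real.sqrt N = 2 ^ (y * (1 / 2)) := by
      rw [Real.sqrt_eq_rpow]
      conv_lhs => rw [hNe]
      rw [← Real.rpow_mul (by norm_num)]
    have e3 : (1 / 2 : ℝ) ^ L = 2 ^ (-(L : ℝ)) := by
      rw [Real.rpow_neg (by norm_num), Real.rpow_natCast, one_div, inv_pow]
    have e4 : (2 : ℝ) * 2 ^ (y * (1 / 2 - 1 / r)) = 2 ^ (1 + y * (1 / 2 - 1 / r)) := by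
      rw [Real.rpow_add (by norm_num), Real.rpow_one]
    rw [e1, e2, e3, e4, ← Real.rpow_add (by norm_num)]
    refine Real.rpow_le_rpow_of_exponent_le (by norm_num) ?_
    have : y * (1 / 2 - 1 / r) = y * (1 / 2) - y / r := by ring
    rw [this]; linarith

lemma entropy (r : ℝ) (hr : 2 < r) : ∃ C : ℝ, 0 < C ∧
    ∀ {ι X : Type} (S : Finset ι) (I : Finset X) (w : ι → X → ℝ) (v : ℕ → ι → ℝ) (B N : ℝ),
    (∀ j x, w j x ^ 2 = 1) → (∀ i ∈ S, ∀ j ∈ S, i ≠ j → ∑ x ∈ I, w i x * w j x = 0) →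
    0 ≤ B → (∀ t, ∑ j ∈ S, v t j ^ 2 ≤ B ^ 2) →
    (∀ u : ℕ → ℕ, Monotone u → ∀ m, ∑ i ∈ Finset.range m,
      (∑ j ∈ S, (v (u (i + 1)) j - v (u i) j) ^ 2) ^ (r / 2) ≤ B ^ r) →
    1 ≤ N → (S.card : ℝ) ≤ N → ∀ τ : X → ℕ,
    ∑ x ∈ I, (∑ j ∈ S, w j x * v (τ x) j) ^ 2
      ≤ C * (N ^ (1 / 2 - 1 / r)) ^ 2 * B ^ 2 * I.card := by
  set ρ : ℝ := (2 : ℝ) ^ (r / 2 - 1) with hρ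
  have hρ1 : 1 < ρ := Real.one_lt_rpow (by norm_num) (by linarith)
  set c : ℝ := 4 * (ρ / (ρ - 1)) + 2 with hc
  have hc0 : 0 < c := by
    have : 0 < ρ - 1 := by linarith
    positivity
  refine ⟨c ^ 2, by positivity, ?_⟩
  intro ι X S I w v B N hw ho hB hvB hv hN hSN τ
  rcases hB.eq_or_lt with hB0 | hB0
  · have hz : ∀ t, ∀ j ∈ S, v t j = 0 := by
      intro t j hj
      have h1 := hvB t
      rw [← hB0] at h1
      have h2 := Finset.single_le_sum (f := fun j => v t j ^ 2) (fun j _ => sq_nonneg _) hj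
      nlinarith [sq_nonneg (v t j)]
    have : ∀ x, ∑ j ∈ S, w j x * v (τ x) j = 0 := fun x =>
      Finset.sum_eq_zero fun j hj => by rw [hz _ j hj, mul_zero]
    simp [this, ← hB0]
  obtain ⟨L, hL1, hL2⟩ := exists_level r N hr hN
  set P := N ^ (1 / 2 - 1 / r) with hP
  have hP0 : 0 ≤ P := Real.rpow_nonneg (by linarith) _
  have h1 := chain_step S I w r hr hw ho v hB0 hvB hv L τ
  have hgeom : ∑ m ∈ Finset.range (L + 1), ρ ^ m ≤ ρ / (ρ - 1) * P := by
    rw [geom_sum_eq hρ1.ne', div_mul_eq_mul_div]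
    refine div_le_div_of_nonneg_right ?_ (by linarith)
    rw [pow_succ]
    nlinarith
  set δ := B * (1 / 2 : ℝ) ^ L with hδ
  have h2 : l2n I (fun x => ∑ j ∈ S, w j x * (v (τ x) j - v (gr S v δ (τ x)) j))
      ≤ Real.sqrt I.card * B * (2 * P) := by
    have hsq : ∀ x, (∑ j ∈ S, w j x * (v (τ x) j - v (gr S v δ (τ x)) j)) ^ 2
        ≤ (B * (2 * P)) ^ 2 := by
      intro x
      refine (Finset.sum_mul_sq_le_sq_mul_sq S _ _).trans ?_
      simp only [hw, Finset.sum_const, nsmul_eq_mul, mul_one]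
      calc (S.card : ℝ) * _ ≤ N * δ ^ 2 :=
            mul_le_mul hSN (gr_close S v δ (τ x)) (Finset.sum_nonneg fun _ _ => sq_nonneg _)
              (by linarith)
        _ = (B * (Real.sqrt N * (1 / 2 : ℝ) ^ L)) ^ 2 := by
            rw [mul_pow B (Real.sqrt N * _), mul_pow (Real.sqrt N), Real.sq_sqrt (by linarith), hδ, mul_pow]; ring
        _ ≤ _ := by gcongr
    refine l2n_le (by positivity) ?_
    refine (Finset.sum_le_sum fun x _ => hsq x).trans_eq ?_
    rw [Finset.sum_const, nsmul_eq_mul, mul_assoc, mul_pow (Real.sqrt _),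
      Real.sq_sqrt (by positivity)]
  have h3 := l2n_add I (fun x => ∑ j ∈ S, w j x * v (gr S v δ (τ x)) j)
    (fun x => ∑ j ∈ S, w j x * (v (τ x) j - v (gr S v δ (τ x)) j))
  have e : (fun x => ∑ j ∈ S, w j x * v (gr S v δ (τ x)) j +
      ∑ j ∈ S, w j x * (v (τ x) j - v (gr S v δ (τ x)) j))
      = fun x => ∑ j ∈ S, w j x * v (τ x) j := by
    funext x
    rw [← Finset.sum_add_distrib]
    exact Finset.sum_congr rfl fun j _ => by ring
  rw [e] at h3
  have h4 : l2n I (fun x => ∑ j ∈ S, w j x * v (τ x) j) ≤ c * P * B * Real.sqrt I.card := by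
    refine h3.trans ((add_le_add h1 h2).trans ?_)
    have : Real.sqrt I.card * B * (4 * ∑ m ∈ Finset.range (L + 1), ρ ^ m)
        ≤ Real.sqrt I.card * B * (4 * (ρ / (ρ - 1) * P)) := by gcongr
    rw [hc]
    linarith
  have h5 := pow_le_pow_left₀ (l2n_nonneg _ _) h4 2
  rw [l2n_sq, mul_pow, mul_pow, mul_pow, Real.sq_sqrt (by positivity)] at h5
  exact h5

/-- Finite model of the Walsh phase plane. -/
structure WMod (X : Type) [Fintype X] extends Filt X where
  n : ℕ
  J : Finset ℝ
  χ : ℝ → X → ℝ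
  l : ℕ → ℝ → ℤ
  hχ : ∀ i x, χ i x ^ 2 = 1
  hl : ∀ t i j, l t i = l t j → l (t + 1) i = l (t + 1) j
  hF1 : ∀ t, t ≤ n → ∀ i ∈ J, ∀ j ∈ J, l t i = l t j → ∀ x y, p t x = p t y →
    χ i x * χ j x = χ i y * χ j y
  hF2 : ∀ t, t ≤ n → ∀ i ∈ J, ∀ j ∈ J, l t i ≠ l t j → ∀ x, toFilt.E t (fun y => χ i y * χ j y) x = 0

namespace WMod
variable {X : Type} [Fintype X] (M : WMod X)

def rep (t : ℕ) : Finset ℝ := M.J.filter fun j => ∀ j' ∈ M.J, M.l t j' = M.l t j → j ≤ j'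

lemma rep_sub (t : ℕ) : M.rep t ⊆ M.J := Finset.filter_subset _ _

lemma rep_J {t : ℕ} {j : ℝ} (h : j ∈ M.rep t) : j ∈ M.J := M.rep_sub t h

lemma l_mono {s t : ℕ} (hst : s ≤ t) {i j : ℝ} (h : M.l s i = M.l s j) : M.l t i = M.l t j := by
  induction t, hst using Nat.le_induction with
  | base => exact h
  | succ n hn ih => exact M.hl n i j ih

lemma rep_anti {s t : ℕ} (hst : s ≤ t) : M.rep t ⊆ M.rep s := by
  intro j hj
  simp only [rep, Finset.mem_filter] at hj ⊢
  exact ⟨hj.1, fun j' hj' h => hj.2 j' hj' (M.l_mono hst h)⟩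

lemma rep_inj {t : ℕ} {i j : ℝ} (hi : i ∈ M.rep t) (hj : j ∈ M.rep t) (h : M.l t i = M.l t j) :
    i = j := by
  simp only [rep, Finset.mem_filter] at hi hj
  exact le_antisymm (hi.2 j hj.1 h.symm) (hj.2 i hi.1 h)

lemma rep_exists (t : ℕ) {i : ℝ} (hi : i ∈ M.J) : ∃ j ∈ M.rep t, M.l t j = M.l t i := by
  have hne : (M.J.filter fun j => M.l t j = M.l t i).Nonempty := ⟨i, by simp [hi]⟩
  obtain ⟨j, hj, hmin⟩ := Finset.exists_min_image _ id hne
  simp only [Finset.mem_filter] at hj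
  refine ⟨j, ?_, hj.2⟩
  simp only [rep, Finset.mem_filter]
  refine ⟨hj.1, fun j' hj' h => hmin j' ?_⟩
  simp [hj', h, hj.2]

lemma χχ (i : ℝ) (x : X) : M.χ i x * M.χ i x = 1 := by rw [← sq]; exact M.hχ i x

/-- the coefficient functions -/
def cf (t : ℕ) (j : ℝ) (f : X → ℝ) : X → ℝ := M.E t fun y => M.χ j y * f y

def D (a : ℕ → ℝ → ℝ) (t : ℕ) (f : X → ℝ) (x : X) : ℝ :=
  ∑ j ∈ M.rep t, a t j * (M.χ j x * M.cf t j f x)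

def P (t : ℕ) (f : X → ℝ) (x : X) : ℝ := ∑ j ∈ M.rep t, M.χ j x * M.cf t j f x

lemma cf_meas (t : ℕ) (j : ℝ) (f : X → ℝ) : M.Meas t (M.cf t j f) := M.E_meas t _

lemma cf_sub (t : ℕ) (j : ℝ) (f g : X → ℝ) (x : X) :
    M.cf t j (fun y => f y - g y) x = M.cf t j f x - M.cf t j g x := by
  simp only [cf, ← M.E_sub, mul_sub]

lemma cf_add (t : ℕ) (j : ℝ) (f g : X → ℝ) (x : X) :
    M.cf t j (fun y => f y + g y) x = M.cf t j f x + M.cf t j g x := by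
  simp only [cf, ← M.E_add, mul_add]

lemma cf_zero (t : ℕ) (j : ℝ) (x : X) : M.cf t j (fun _ => 0) x = 0 := by
  simp only [cf, mul_zero]; exact M.E_zero t x

lemma cf_sum {κ : Type*} (S : Finset κ) (t : ℕ) (j : ℝ) (f : κ → X → ℝ) (x : X) :
    M.cf t j (fun y => ∑ i ∈ S, f i y) x = ∑ i ∈ S, M.cf t j (f i) x := by
  simp only [cf, Finset.mul_sum]
  exact M.E_sum S t _ x

lemma D_sub (a : ℕ → ℝ → ℝ) (t : ℕ) (f g : X → ℝ) (x : X) :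
    M.D a t (fun y => f y - g y) x = M.D a t f x - M.D a t g x := by
  simp only [D, cf_sub, mul_sub, Finset.sum_sub_distrib]

lemma D_add (a : ℕ → ℝ → ℝ) (t : ℕ) (f g : X → ℝ) (x : X) :
    M.D a t (fun y => f y + g y) x = M.D a t f x + M.D a t g x := by
  simp only [D, cf_add, mul_add, Finset.sum_add_distrib]

lemma D_zero (a : ℕ → ℝ → ℝ) (t : ℕ) (x : X) : M.D a t (fun _ => 0) x = 0 := by
  simp only [D, cf_zero, mul_zero, Finset.sum_const_zero]

lemma D_sum {κ : Type*} (S : Finset κ) (a : ℕ → ℝ → ℝ) (t : ℕ) (f : κ → X → ℝ) (x : X) :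
    M.D a t (fun y => ∑ i ∈ S, f i y) x = ∑ i ∈ S, M.D a t (f i) x := by
  simp only [D, cf_sum, Finset.mul_sum]
  rw [Finset.sum_comm]

lemma P_eq_D (t : ℕ) (f : X → ℝ) (x : X) : M.P t f x = M.D (fun _ _ => 1) t f x := by
  simp [P, D]

/-- action on a modulated `t`-measurable function -/
lemma cf_char {t : ℕ} (ht : t ≤ M.n) {i j : ℝ} (hi : i ∈ M.J) (hj : j ∈ M.J) {h : X → ℝ}
    (hh : M.Meas t h) (x : X) :
    M.cf t i (fun y => M.χ j y * h y) x
      = if M.l t i = M.l t j then M.χ i x * M.χ j x * h x else 0 := by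
  have e : (fun y => M.χ i y * (M.χ j y * h y)) = fun y => h y * (M.χ i y * M.χ j y) := by
    funext y; ring
  rw [cf, e, M.E_mul hh]
  split_ifs with hl
  · rw [M.E_of_meas (h := fun y => M.χ i y * M.χ j y)
      (fun y z hyz => M.hF1 t ht i hi j hj hl y z hyz)]
    ring
  · rw [M.hF2 t ht i hi j hj hl, mul_zero]

lemma D_char {t : ℕ} (ht : t ≤ M.n) (a : ℕ → ℝ → ℝ)
    (ha : ∀ t, ∀ i ∈ M.J, ∀ j ∈ M.J, M.l t i = M.l t j → a t i = a t j)
    {j : ℝ} (hj : j ∈ M.J) {h : X → ℝ} (hh : M.Meas t h) (x : X) :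
    M.D a t (fun y => M.χ j y * h y) x = a t j * (M.χ j x * h x) := by
  obtain ⟨i, hi, hl⟩ := M.rep_exists t hj
  rw [D, Finset.sum_eq_single i]
  · rw [M.cf_char ht (M.rep_J hi) hj hh, if_pos hl, ha t i (M.rep_J hi) j hj hl]
    calc a t j * (M.χ i x * (M.χ i x * M.χ j x * h x))
        = a t j * ((M.χ i x * M.χ i x) * (M.χ j x * h x)) := by ring
      _ = _ := by rw [M.χχ, one_mul]
  · intro k hk hki
    rw [M.cf_char ht (M.rep_J hk) hj hh, if_neg, mul_zero, mul_zero]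
    intro hkj
    exact hki (M.rep_inj hk hi (hkj.trans hl.symm))
  · exact fun h => absurd hi h

lemma cf_swap {t : ℕ} (ht : t ≤ M.n) {i j : ℝ} (hi : i ∈ M.J) (hj : j ∈ M.J)
    (hl : M.l t i = M.l t j) (f : X → ℝ) (x : X) :
    M.cf t i f x = M.χ i x * M.χ j x * M.cf t j f x := by
  have hm : M.Meas t (fun y => M.χ i y * M.χ j y) :=
    fun y z hyz => M.hF1 t ht i hi j hj hl y z hyz
  rw [cf, cf, ← M.E_mul hm]
  congr 1
  funext y
  calc M.χ i y * f y = M.χ i y * f y * (M.χ j y * M.χ j y) := by rw [M.χχ, mul_one]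
    _ = _ := by ring

lemma cf_P {s t : ℕ} (hst : s ≤ t) (ht : t ≤ M.n) {i : ℝ} (hi : i ∈ M.J) (f : X → ℝ) (x : X) :
    M.cf s i (M.P t f) x = M.cf s i f x := by
  have h1 : M.cf t i (M.P t f) = M.cf t i f := by
    funext x
    have := M.cf_sum (M.rep t) t i (fun j y => M.χ j y * M.cf t j f y) x
    rw [show M.P t f = fun y => ∑ j ∈ M.rep t, M.χ j y * M.cf t j f y from rfl, this]
    obtain ⟨j, hj, hl⟩ := M.rep_exists t hi
    rw [Finset.sum_eq_single j]
    · rw [M.cf_char ht hi (M.rep_J hj) (M.cf_meas t j f), if_pos hl.symm]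
      exact (M.cf_swap ht hi (M.rep_J hj) hl.symm f x).symm
    · intro k hk hkj
      rw [M.cf_char ht hi (M.rep_J hk) (M.cf_meas t k f), if_neg]
      intro h
      exact hkj (M.rep_inj hk hj (h.symm.trans hl.symm))
    · exact fun h => absurd hj h
  have h2 : ∀ g, M.cf s i g x = M.E s (M.cf t i g) x := fun g => (M.E_E hst _ x).symm
  rw [h2, h2, h1]

lemma D_P {s t : ℕ} (hst : s ≤ t) (ht : t ≤ M.n) (a : ℕ → ℝ → ℝ) (f : X → ℝ) (x : X) :
    M.D a s (M.P t f) x = M.D a s f x := by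
  simp only [D]
  exact Finset.sum_congr rfl fun j hj => by rw [M.cf_P hst ht (M.rep_J hj)]

lemma D_P' {s t : ℕ} (hst : s ≤ t) (ht : t ≤ M.n) (a : ℕ → ℝ → ℝ)
    (ha : ∀ t, ∀ i ∈ M.J, ∀ j ∈ M.J, M.l t i = M.l t j → a t i = a t j) (f : X → ℝ) (x : X) :
    M.D a t (M.P s f) x = ∑ j ∈ M.rep s, a t j * (M.χ j x * M.cf s j f x) := by
  have := M.D_sum (M.rep s) a t (fun j y => M.χ j y * M.cf s j f y) x
  rw [show M.P s f = fun y => ∑ j ∈ M.rep s, M.χ j y * M.cf s j f y from rfl, this]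
  exact Finset.sum_congr rfl fun j hj =>
    M.D_char ht a ha (M.rep_J hj) (Filt.Meas.mono M.toFilt hst (M.cf_meas s j f)) x

lemma P_P {s t : ℕ} (hst : s ≤ t) (ht : t ≤ M.n) (f : X → ℝ) : M.P t (M.P s f) = M.P s f := by
  funext x
  rw [P_eq_D, M.D_P' hst ht _ (fun _ _ _ _ _ _ => rfl)]
  simp [P]

lemma P_P' {s t : ℕ} (hst : s ≤ t) (ht : t ≤ M.n) (f : X → ℝ) : M.P s (M.P t f) = M.P s f := by
  funext x
  rw [P_eq_D, M.D_P hst ht, P_eq_D]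

lemma P_sub (t : ℕ) (f g : X → ℝ) (x : X) :
    M.P t (fun y => f y - g y) x = M.P t f x - M.P t g x := by
  simp only [P_eq_D, D_sub]

lemma P_zero (t : ℕ) (x : X) : M.P t (fun _ => 0) x = 0 := by
  simp only [P_eq_D, D_zero]

lemma sum_mul_P (t : ℕ) (f g : X → ℝ) :
    ∑ x, g x * M.P t f x = ∑ j ∈ M.rep t, ∑ x, M.cf t j g x * M.cf t j f x := by
  simp only [P, Finset.mul_sum]
  rw [Finset.sum_comm]
  refine Finset.sum_congr rfl fun j _ => ?_
  have := M.sum_mul_E (M.cf_meas t j f) (fun y => M.χ j y * g y)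
  calc ∑ x, g x * (M.χ j x * M.cf t j f x) = ∑ x, M.cf t j f x * (M.χ j x * g x) :=
        Finset.sum_congr rfl fun x _ => by ring
    _ = ∑ x, M.cf t j f x * M.cf t j g x := this.symm
    _ = _ := Finset.sum_congr rfl fun x _ => by ring

lemma P_adj (t : ℕ) (f g : X → ℝ) : ∑ x, g x * M.P t f x = ∑ x, M.P t g x * f x := by
  rw [sum_mul_P]
  simp_rw [mul_comm (M.P t g _)]
  rw [sum_mul_P]
  exact Finset.sum_congr rfl fun j _ => Finset.sum_congr rfl fun x _ => by ring

lemma inner_P {s t : ℕ} (hst : s ≤ t) (ht : t ≤ M.n) (f : X → ℝ) :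
    ∑ x, M.P t f x * M.P s f x = ∑ x, f x * M.P s f x := by
  rw [← P_adj, M.P_P hst ht]

lemma sum_P_sq {t : ℕ} (ht : t ≤ M.n) (f : X → ℝ) :
    ∑ x, M.P t f x ^ 2 = ∑ x, f x * M.P t f x := by
  simp_rw [sq]
  exact M.inner_P le_rfl ht f

lemma P_diff {s t : ℕ} (hst : s ≤ t) (ht : t ≤ M.n) (f : X → ℝ) :
    ∑ x, (M.P t f x - M.P s f x) ^ 2 = ∑ x, M.P t f x ^ 2 - ∑ x, M.P s f x ^ 2 := by
  have e : ∀ x, (M.P t f x - M.P s f x) ^ 2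
      = M.P t f x ^ 2 - 2 * (M.P t f x * M.P s f x) + M.P s f x ^ 2 := fun x => by ring
  simp_rw [e]
  rw [Finset.sum_add_distrib, Finset.sum_sub_distrib, ← Finset.mul_sum, M.inner_P hst ht,
    ← M.sum_P_sq (hst.trans ht)]
  ring

lemma P_bound {t : ℕ} (ht : t ≤ M.n) (f : X → ℝ) : ∑ x, M.P t f x ^ 2 ≤ ∑ x, f x ^ 2 := by
  have h : 0 ≤ ∑ x, (f x - M.P t f x) ^ 2 := Finset.sum_nonneg fun _ _ => sq_nonneg _
  have e : ∀ x, (f x - M.P t f x) ^ 2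
      = f x ^ 2 - 2 * (f x * M.P t f x) + M.P t f x ^ 2 := fun x => by ring
  simp_rw [e] at h
  rw [Finset.sum_add_distrib, Finset.sum_sub_distrib, ← Finset.mul_sum, ← M.sum_P_sq ht] at h
  linarith

lemma bessel {t : ℕ} (ht : t ≤ M.n) (f : X → ℝ) :
    ∑ j ∈ M.rep t, ∑ x, M.cf t j f x ^ 2 ≤ ∑ x, f x ^ 2 := by
  refine le_trans (le_of_eq ?_) (M.P_bound ht f)
  rw [M.sum_P_sq ht, sum_mul_P]
  simp_rw [sq]

/-- The hypothesis on the coefficients. -/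
structure Coef (r V : ℝ) (a : ℕ → ℝ → ℝ) : Prop where
  cls : ∀ t, ∀ i ∈ M.J, ∀ j ∈ M.J, M.l t i = M.l t j → a t i = a t j
  bd : ∀ t, ∀ j ∈ M.J, |a t j| ≤ V
  var : ∀ j ∈ M.J, ∀ u : ℕ → ℕ, Monotone u → ∀ m,
    ∑ i ∈ Finset.range m, |a (u (i + 1)) j - a (u i) j| ^ r ≤ V ^ r

end WMod

lemma prod_var (r : ℝ) (hr : 2 < r) {V Z : ℝ} (hV : 0 ≤ V) (hZ : 0 ≤ Z) (a φ : ℕ → ℝ)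
    (ha : ∀ t, |a t| ≤ V) (hφ : ∀ t, φ t ^ 2 ≤ Z) (m : ℕ)
    (h1 : ∑ i ∈ Finset.range m, |a (i + 1) - a i| ^ r ≤ V ^ r)
    (h2 : ∑ i ∈ Finset.range m, |φ (i + 1) - φ i| ^ r ≤ Z ^ (r / 2)) :
    ∑ i ∈ Finset.range m, |a (i + 1) * φ (i + 1) - a i * φ i| ^ r ≤ (4 * V ^ 2 * Z) ^ (r / 2) := by
  have hφ' : ∀ t, |φ t| ≤ Real.sqrt Z := fun t => Real.abs_le_sqrt (hφ t)
  have hr0 : 0 < r := by linarith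
  have hZr : Real.sqrt Z ^ r = Z ^ (r / 2) := by
    rw [Real.sqrt_eq_rpow, ← Real.rpow_mul hZ]; congr 1; ring
  have hp : ∀ i, |a (i + 1) * φ (i + 1) - a i * φ i| ^ r
      ≤ 2 ^ (r - 1) * (V ^ r * |φ (i + 1) - φ i| ^ r + |a (i + 1) - a i| ^ r * Z ^ (r / 2)) := by
    intro i
    have e : a (i + 1) * φ (i + 1) - a i * φ i
        = a (i + 1) * (φ (i + 1) - φ i) + (a (i + 1) - a i) * φ i := by ring
    have hh : |a (i + 1) * φ (i + 1) - a i * φ i|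
        ≤ V * |φ (i + 1) - φ i| + |a (i + 1) - a i| * Real.sqrt Z := by
      rw [e]
      refine (abs_add_le _ _).trans ?_
      rw [abs_mul, abs_mul]
      gcongr
      · exact ha _
      · exact hφ' _
    refine (Real.rpow_le_rpow (abs_nonneg _) hh hr0.le).trans ?_
    rw [← hZr, ← Real.mul_rpow hV (abs_nonneg _), ← Real.mul_rpow (abs_nonneg _) (Real.sqrt_nonneg _)]
    have := NNReal.rpow_add_le_mul_rpow_add_rpow (p := r)
      ⟨V * |φ (i + 1) - φ i|, by positivity⟩ ⟨|a (i + 1) - a i| * Real.sqrt Z, by positivity⟩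
      (by linarith)
    have h3 := NNReal.coe_le_coe.mpr this
    push_cast at h3
    exact h3
  refine (Finset.sum_le_sum fun i _ => hp i).trans ?_
  rw [← Finset.mul_sum, Finset.sum_add_distrib, ← Finset.mul_sum, ← Finset.sum_mul]
  have hVr : 0 ≤ V ^ r := Real.rpow_nonneg hV _
  have hZr0 : 0 ≤ Z ^ (r / 2) := Real.rpow_nonneg hZ _
  have e : (4 * V ^ 2 * Z) ^ (r / 2) = 2 ^ (r - 1) * (V ^ r * Z ^ (r / 2) + V ^ r * Z ^ (r / 2)) := by
    rw [Real.mul_rpow (by positivity) hZ, show 4 * V ^ 2 = (2 * V) ^ 2 by ring,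
      ← Real.rpow_natCast, ← Real.rpow_mul (by positivity), Real.mul_rpow (by norm_num) hV]
    rw [show ((2 : ℕ) : ℝ) * (r / 2) = r by push_cast; ring]
    have : (2 : ℝ) ^ r = 2 ^ (r - 1) * 2 := by
      rw [← Real.rpow_add_one (by norm_num)]; congr 1; ring
    rw [this]; ring
  rw [e]
  gcongr

namespace WMod

lemma lemA (r : ℝ) (hr : 2 < r) : ∃ C : ℝ, 0 < C ∧ ∀ {X : Type} [Fintype X] (M : WMod X)
    (a : ℕ → ℝ → ℝ) (V N : ℝ), 0 ≤ V → M.Coef r V a → 1 ≤ N → (M.J.card : ℝ) ≤ N →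
    ∀ (s : ℕ), s ≤ M.n → ∀ (f : X → ℝ) (τ : X → ℕ),
    (∀ x, τ x ≤ M.n) →
    ∑ x, (if (M.rep (τ x)).card ≤ (M.rep s).card then M.D a (τ x) (M.P s f) x else 0) ^ 2
      ≤ C * (N ^ (1 / 2 - 1 / r)) ^ 2 * V ^ 2 * ∑ x, f x ^ 2 := by
  obtain ⟨C1, hC1, hlep⟩ := lepingle r hr
  obtain ⟨C2, hC2, hent⟩ := entropy r hr
  refine ⟨C2 * 4 * C1, by positivity, ?_⟩
  intro X _ M a V N hV ha hN hJ s hs f τ hτ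
  choose Z hZ0 hZs hZ using fun j => hlep M.toFilt (M.cf s j f) s
  set S := M.rep s with hS
  set v : X → ℕ → ℝ → ℝ := fun x0 t j => a t j * M.E (min t s) (M.cf s j f) x0 with hv
  -- pointwise identification
  have hpt : ∀ x, (if (M.rep (τ x)).card ≤ (M.rep s).card then M.D a (τ x) (M.P s f) x else 0) ^ 2
      ≤ (∑ j ∈ S, M.χ j x * v x (τ x) j) ^ 2 := by
    intro x
    split_ifs with h
    · apply le_of_eq
      congr 1
      rcases le_total s (τ x) with h1 | h1
      · rw [M.D_P' h1 (hτ x) a ha.cls]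
        refine Finset.sum_congr rfl fun j hj => ?_
        simp only [hv, min_eq_right h1]
        rw [M.E_of_meas (M.cf_meas s j f)]
        ring
      · rw [M.D_P h1 hs]
        have e : M.rep (τ x) = S := (Finset.eq_of_subset_of_card_le (M.rep_anti h1) h).symm
        rw [D, e]
        refine Finset.sum_congr rfl fun j hj => ?_
        simp only [hv, min_eq_left h1]
        rw [show M.cf s j f = M.E s (fun y => M.χ j y * f y) from rfl, M.E_E h1]
        simp only [cf]; ring
    · rw [zero_pow two_ne_zero]; positivity
  have hcong : ∀ x0 x, M.p s x = M.p s x0 → ∀ t j, v x t j = v x0 t j := by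
    intro x0 x h t j
    simp only [hv]
    rw [M.E_meas (min t s) _ x x0 (M.p_mono (min_le_right _ _) h)]
  -- local estimate
  have hloc : ∀ x0, M.E s (fun x => (∑ j ∈ S, M.χ j x * v x (τ x) j) ^ 2) x0
      ≤ C2 * (N ^ (1 / 2 - 1 / r)) ^ 2 * (4 * V ^ 2 * ∑ j ∈ S, Z j x0) := by
    intro x0
    set B := Real.sqrt (∑ j ∈ S, 4 * V ^ 2 * Z j x0) with hB
    have hb0 : ∀ j, 0 ≤ 4 * V ^ 2 * Z j x0 := fun j => by have := hZ0 j x0; positivity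
    have hB2 : B ^ 2 = ∑ j ∈ S, 4 * V ^ 2 * Z j x0 :=
      Real.sq_sqrt (Finset.sum_nonneg fun j _ => hb0 j)
    have hBr : B ^ r = (∑ j ∈ S, 4 * V ^ 2 * Z j x0) ^ (r / 2) := by
      rw [hB, Real.sqrt_eq_rpow, ← Real.rpow_mul (Finset.sum_nonneg fun j _ => hb0 j)]
      congr 1; ring
    have h1 := hent S (M.atom s x0) M.χ (v x0) B N M.hχ ?_ (Real.sqrt_nonneg _) ?_ ?_ hN ?_ τ
    · simp only [Filt.E]
      rw [div_le_iff₀ (M.card_pos s x0), Finset.mul_sum, ← hB2]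
      refine le_trans (le_of_eq ?_) h1
      refine Finset.sum_congr rfl fun x hx => ?_
      congr 1
      refine Finset.sum_congr rfl fun j _ => ?_
      rw [hcong x0 x (M.mem_atom.mp hx)]
    · intro i hi j hj hij
      have hlij : M.l s i ≠ M.l s j := fun h => hij (M.rep_inj hi hj h)
      have := M.hF2 s hs i (M.rep_J hi) j (M.rep_J hj) hlij x0
      simp only [Filt.E, div_eq_zero_iff] at this
      exact this.resolve_right (M.card_pos s x0).ne'
    · intro t
      rw [hB2]
      refine Finset.sum_le_sum fun j hj => ?_
      simp only [hv, mul_pow]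
      have h2 := (hZ j x0).1 (min t s) (min_le_right _ _)
      have h3 : a t j ^ 2 ≤ V ^ 2 := by
        rw [← sq_abs]; exact pow_le_pow_left₀ (abs_nonneg _) (ha.bd t j (M.rep_J hj)) 2
      have h4 : a t j ^ 2 * M.E (min t s) (M.cf s j f) x0 ^ 2 ≤ V ^ 2 * Z j x0 := by gcongr
      have h5 : 0 ≤ V ^ 2 * Z j x0 := mul_nonneg (sq_nonneg _) (hZ0 j x0)
      linarith
    · intro u hu m
      rw [hBr]
      refine vec_var r hr S m _ (fun j => 4 * V ^ 2 * Z j x0) hb0 fun j hj => ?_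
      refine prod_var r hr hV (hZ0 j x0) (fun i => a (u i) j)
        (fun i => M.E (min (u i) s) (M.cf s j f) x0) (fun t => ha.bd _ j (M.rep_J hj))
        (fun t => (hZ j x0).1 _ (min_le_right _ _)) m (ha.var j (M.rep_J hj) u hu m) ?_
      exact (hZ j x0).2 (fun i => min (u i) s) (fun i k hik => min_le_min (hu hik) le_rfl)
        (fun i => min_le_right _ _) m
    · refine le_trans ?_ hJ
      exact_mod_cast Finset.card_le_card (M.rep_sub s)
  calc _ ≤ ∑ x, (∑ j ∈ S, M.χ j x * v x (τ x) j) ^ 2 := Finset.sum_le_sum fun x _ => hpt x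
    _ = ∑ x0, M.E s (fun x => (∑ j ∈ S, M.χ j x * v x (τ x) j) ^ 2) x0 := (M.sum_E s _).symm
    _ ≤ ∑ x0, C2 * (N ^ (1 / 2 - 1 / r)) ^ 2 * (4 * V ^ 2 * ∑ j ∈ S, Z j x0) :=
        Finset.sum_le_sum fun x _ => hloc x
    _ = C2 * (N ^ (1 / 2 - 1 / r)) ^ 2 * (4 * V ^ 2 * ∑ j ∈ S, ∑ x, Z j x) := by
        rw [← Finset.mul_sum, ← Finset.mul_sum, Finset.sum_comm]
    _ ≤ C2 * (N ^ (1 / 2 - 1 / r)) ^ 2 * (4 * V ^ 2 * (C1 * ∑ x, f x ^ 2)) := by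
        have : ∑ j ∈ S, ∑ x, Z j x ≤ C1 * ∑ x, f x ^ 2 := by
          refine (Finset.sum_le_sum fun j _ => hZs j).trans ?_
          rw [← Finset.mul_sum]
          exact mul_le_mul_of_nonneg_left (M.bessel hs f) hC1.le
        gcongr
    _ = _ := by ring

end WMod

namespace WMod
variable {X : Type} [Fintype X] (M : WMod X)

def bet (t : ℕ) : ℕ := (M.rep 0).card - (M.rep t).card

def lev (b : ℕ) : ℕ := Nat.findGreatest (fun t => M.bet t ≤ b) M.n

def Q (f : X → ℝ) : ℕ → X → ℝ
  | 0 => fun _ => 0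
  | m + 1 => M.P (M.lev m) f

lemma lev_le (b : ℕ) : M.lev b ≤ M.n := Nat.findGreatest_le _

lemma bet_lev (b : ℕ) : M.bet (M.lev b) ≤ b := by
  have h : M.bet 0 ≤ b := by simp [bet]
  exact Nat.findGreatest_spec (P := fun t => M.bet t ≤ b) (Nat.zero_le _) h

lemma le_lev {t b : ℕ} (ht : t ≤ M.n) (h : M.bet t ≤ b) : t ≤ M.lev b :=
  Nat.le_findGreatest ht h

lemma lev_mono {b b' : ℕ} (h : b ≤ b') : M.lev b ≤ M.lev b' :=
  M.le_lev (M.lev_le b) ((M.bet_lev b).trans h)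

lemma card_rep_le (t : ℕ) : (M.rep t).card ≤ (M.rep 0).card :=
  Finset.card_le_card (M.rep_anti (Nat.zero_le t))

lemma Q_diff (f : X → ℝ) {m m' : ℕ} (h : m ≤ m') :
    ∑ x, (M.Q f m' x - M.Q f m x) ^ 2 = ∑ x, M.Q f m' x ^ 2 - ∑ x, M.Q f m x ^ 2 := by
  cases m with
  | zero => simp [Q]
  | succ m =>
    cases m' with
    | zero => omega
    | succ m' =>
      simp only [Q]
      exact M.P_diff (M.lev_mono (by omega)) (M.lev_le _) f

lemma Q_bound (f : X → ℝ) (m : ℕ) : ∑ x, M.Q f m x ^ 2 ≤ ∑ x, f x ^ 2 := by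
  cases m with
  | zero => simp [Q]; exact Finset.sum_nonneg fun _ _ => sq_nonneg _
  | succ m => exact M.P_bound (M.lev_le _) f

lemma Q_mono (f : X → ℝ) {m m' : ℕ} (h : m ≤ m') : ∑ x, M.Q f m x ^ 2 ≤ ∑ x, M.Q f m' x ^ 2 := by
  have := M.Q_diff f h
  have h2 : 0 ≤ ∑ x, (M.Q f m' x - M.Q f m x) ^ 2 := Finset.sum_nonneg fun _ _ => sq_nonneg _
  linarith

lemma P_Q (f : X → ℝ) {m m' : ℕ} (h : m ≤ m' + 1) : M.P (M.lev m') (M.Q f m) = M.Q f m := by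
  cases m with
  | zero => funext x; exact M.P_zero _ x
  | succ m => exact M.P_P (M.lev_mono (by omega)) (M.lev_le _) f

lemma block {K : ℝ} (a : ℕ → ℝ → ℝ) (τ : X → ℕ)
    (hA : ∀ (s : ℕ), s ≤ M.n → ∀ (f : X → ℝ),
      ∑ x, (if (M.rep (τ x)).card ≤ (M.rep s).card then M.D a (τ x) (M.P s f) x else 0) ^ 2
      ≤ K * ∑ x, f x ^ 2) (f : X → ℝ) (b b' : ℕ) (h : b < b') :
    ∑ x, (if b' ≤ M.bet (τ x) + 1 then
      M.D a (τ x) (fun y => M.Q f b' y - M.Q f b y) x else 0) ^ 2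
      ≤ K * (∑ x, M.Q f b' x ^ 2 - ∑ x, M.Q f b x ^ 2) := by
  rw [← M.Q_diff f h.le]
  obtain ⟨m', rfl⟩ : ∃ m', b' = m' + 1 := ⟨b' - 1, by omega⟩
  refine le_trans (Finset.sum_le_sum fun x _ => ?_) (hA (M.lev m') (M.lev_le _) _)
  have e : M.P (M.lev m') (fun y => M.Q f (m' + 1) y - M.Q f b y)
      = fun y => M.Q f (m' + 1) y - M.Q f b y := by
    funext y
    rw [M.P_sub, M.P_Q f le_rfl, M.P_Q f h.le]
  rw [e]
  split_ifs with h1 h2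
  · exact le_rfl
  · exfalso
    apply h2
    have h3 := M.bet_lev m'
    have h4 := M.card_rep_le (τ x)
    have h5 := M.card_rep_le (M.lev m')
    simp only [bet] at h1 h3
    omega
  · rw [zero_pow two_ne_zero]; positivity
  · exact le_rfl

lemma level_bound {K : ℝ} (hK : 0 ≤ K) (a : ℕ → ℝ → ℝ) (τ : X → ℕ)
    (hA : ∀ (s : ℕ), s ≤ M.n → ∀ (f : X → ℝ),
      ∑ x, (if (M.rep (τ x)).card ≤ (M.rep s).card then M.D a (τ x) (M.P s f) x else 0) ^ 2
      ≤ K * ∑ x, f x ^ 2) (f : X → ℝ) (l : ℕ) :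
    ∑ x, (M.D a (τ x) (fun y => M.Q f ((M.bet (τ x) + 1) / 2 ^ l * 2 ^ l) y
      - M.Q f ((M.bet (τ x) + 1) / 2 ^ (l + 1) * 2 ^ (l + 1)) y) x) ^ 2 ≤ K * ∑ x, f x ^ 2 := by
  set R := (M.rep 0).card + 2 with hR
  have hpt : ∀ x, (M.D a (τ x) (fun y => M.Q f ((M.bet (τ x) + 1) / 2 ^ l * 2 ^ l) y
      - M.Q f ((M.bet (τ x) + 1) / 2 ^ (l + 1) * 2 ^ (l + 1)) y) x) ^ 2
      ≤ ∑ c ∈ Finset.range R, (if c * 2 ^ (l + 1) + 2 ^ l ≤ M.bet (τ x) + 1 then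
      M.D a (τ x) (fun y => M.Q f (c * 2 ^ (l + 1) + 2 ^ l) y - M.Q f (c * 2 ^ (l + 1)) y) x
        else 0) ^ 2 := by
    intro x
    set m := M.bet (τ x) + 1 with hm
    set c := m / 2 ^ (l + 1) with hc
    have hcc : c = m / 2 ^ l / 2 := by rw [hc, pow_succ, Nat.div_div_eq_div_mul]
    have hcR : c ∈ Finset.range R := by
      rw [Finset.mem_range]
      have : c ≤ m := Nat.div_le_self _ _
      have h2 : M.bet (τ x) ≤ (M.rep 0).card := Nat.sub_le _ _
      omega
    rcases Nat.even_or_odd' (m / 2 ^ l) with ⟨k, hk | hk⟩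
    · have : k = c := by omega
      have e : m / 2 ^ l * 2 ^ l = c * 2 ^ (l + 1) := by rw [hk, this, pow_succ]; ring
      rw [e]
      have : M.D a (τ x) (fun y => M.Q f (c * 2 ^ (l + 1)) y - M.Q f (c * 2 ^ (l + 1)) y) x = 0 := by
        rw [M.D_sub, sub_self]
      rw [this, zero_pow two_ne_zero]
      exact Finset.sum_nonneg fun _ _ => sq_nonneg _
    · have : k = c := by omega
      have e : m / 2 ^ l * 2 ^ l = c * 2 ^ (l + 1) + 2 ^ l := by rw [hk, this, pow_succ]; ring
      have hle : c * 2 ^ (l + 1) + 2 ^ l ≤ m := by rw [← e]; exact Nat.div_mul_le_self _ _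
      rw [e]
      refine le_trans (le_of_eq ?_) (Finset.single_le_sum (f := fun c =>
        (if c * 2 ^ (l + 1) + 2 ^ l ≤ m then
      M.D a (τ x) (fun y => M.Q f (c * 2 ^ (l + 1) + 2 ^ l) y - M.Q f (c * 2 ^ (l + 1)) y) x
        else 0) ^ 2) (fun _ _ => sq_nonneg _) hcR)
      simp only [if_pos hle]
  refine (Finset.sum_le_sum fun x _ => hpt x).trans ?_
  rw [Finset.sum_comm]
  set G : ℕ → ℝ := fun c => ∑ x, M.Q f (c * 2 ^ (l + 1)) x ^ 2 with hG
  have hc : ∀ c, ∑ x, (if c * 2 ^ (l + 1) + 2 ^ l ≤ M.bet (τ x) + 1 then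
      M.D a (τ x) (fun y => M.Q f (c * 2 ^ (l + 1) + 2 ^ l) y - M.Q f (c * 2 ^ (l + 1)) y) x
        else 0) ^ 2 ≤ K * (G (c + 1) - G c) := by
    intro c
    have h0 : 0 < 2 ^ l := by positivity
    refine (M.block a τ hA f _ _ (by omega)).trans ?_
    refine mul_le_mul_of_nonneg_left ?_ hK
    have : ∑ x, M.Q f (c * 2 ^ (l + 1) + 2 ^ l) x ^ 2 ≤ G (c + 1) :=
      M.Q_mono f (by rw [add_mul, pow_succ]; omega)
    simp only [hG] at this ⊢
    linarith
  refine (Finset.sum_le_sum fun c _ => hc c).trans ?_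
  rw [← Finset.mul_sum, Finset.sum_range_sub]
  refine mul_le_mul_of_nonneg_left ?_ hK
  have h1 : G R ≤ ∑ x, f x ^ 2 := M.Q_bound f _
  have h2 : 0 ≤ G 0 := Finset.sum_nonneg fun _ _ => sq_nonneg _
  linarith

lemma rm_bound {K : ℝ} (hK : 0 ≤ K) (a : ℕ → ℝ → ℝ) (τ : X → ℕ) (hτ : ∀ x, τ x ≤ M.n)
    (hA : ∀ (s : ℕ), s ≤ M.n → ∀ (f : X → ℝ),
      ∑ x, (if (M.rep (τ x)).card ≤ (M.rep s).card then M.D a (τ x) (M.P s f) x else 0) ^ 2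
      ≤ K * ∑ x, f x ^ 2) (f : X → ℝ) (L : ℕ) (hL : M.J.card + 1 < 2 ^ L) :
    ∑ x, (M.D a (τ x) f x) ^ 2 ≤ (L * Real.sqrt K) ^ 2 * ∑ x, f x ^ 2 := by
  have hpt : ∀ x, M.D a (τ x) f x = ∑ l ∈ Finset.range L,
      M.D a (τ x) (fun y => M.Q f ((M.bet (τ x) + 1) / 2 ^ l * 2 ^ l) y
      - M.Q f ((M.bet (τ x) + 1) / 2 ^ (l + 1) * 2 ^ (l + 1)) y) x := by
    intro x
    simp only [M.D_sub]
    rw [Finset.sum_range_sub' (fun l => M.D a (τ x) (M.Q f ((M.bet (τ x) + 1) / 2 ^ l * 2 ^ l)) x)]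
    have h0 : (M.bet (τ x) + 1) / 2 ^ L = 0 := by
      apply Nat.div_eq_of_lt
      have h2 : M.bet (τ x) ≤ (M.rep 0).card := Nat.sub_le _ _
      have h3 := Finset.card_le_card (M.rep_sub 0)
      omega
    have h1 : M.D a (τ x) (M.Q f 0) x = 0 := M.D_zero a _ x
    simp only [h0, zero_mul, h1, pow_zero, Nat.div_one, mul_one, sub_zero]
    simp only [Q]
    rw [M.D_P (M.le_lev (hτ x) le_rfl) (M.lev_le _)]
  have h1 := l2n_sum Finset.univ (Finset.range L) (fun l x =>
      M.D a (τ x) (fun y => M.Q f ((M.bet (τ x) + 1) / 2 ^ l * 2 ^ l) y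
      - M.Q f ((M.bet (τ x) + 1) / 2 ^ (l + 1) * 2 ^ (l + 1)) y) x)
  have h2 : ∀ l, l2n Finset.univ (fun x =>
      M.D a (τ x) (fun y => M.Q f ((M.bet (τ x) + 1) / 2 ^ l * 2 ^ l) y
      - M.Q f ((M.bet (τ x) + 1) / 2 ^ (l + 1) * 2 ^ (l + 1)) y) x)
      ≤ Real.sqrt K * l2n Finset.univ f := by
    intro l
    refine l2n_le (mul_nonneg (Real.sqrt_nonneg _) (l2n_nonneg _ _)) ?_
    rw [mul_pow, Real.sq_sqrt hK, l2n_sq]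
    exact M.level_bound hK a τ hA f l
  have h3 : l2n Finset.univ (fun x => M.D a (τ x) f x)
      ≤ L * Real.sqrt K * l2n Finset.univ f := by
    simp_rw [hpt]
    refine (h1.trans (Finset.sum_le_sum fun l _ => h2 l)).trans_eq ?_
    rw [Finset.sum_const, Finset.card_range, nsmul_eq_mul]; ring
  have h4 := pow_le_pow_left₀ (l2n_nonneg _ _) h3 2
  rwa [l2n_sq, mul_pow _ (l2n _ _), l2n_sq] at h4

end WMod

lemma log_level (N : ℕ) (hN : 1 ≤ N) : ∃ L : ℕ, N + 1 < 2 ^ L ∧ (L : ℝ) ≤ 3 * (1 + Real.log N) := by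
  refine ⟨Nat.log 2 N + 2, ?_, ?_⟩
  · have := Nat.lt_pow_succ_log_self (b := 2) (by norm_num) N
    have h2 : 2 ^ (Nat.log 2 N + 2) = 2 * 2 ^ (Nat.log 2 N + 1) := by ring
    simp only [Nat.succ_eq_add_one] at this
    omega
  · have h1 : 2 ^ Nat.log 2 N ≤ N := Nat.pow_log_le_self 2 (by omega)
    have h2 : Real.log ((2 : ℝ) ^ Nat.log 2 N) ≤ Real.log N :=
      Real.log_le_log (by positivity) (by exact_mod_cast h1)
    rw [Real.log_pow] at h2
    have h3 := Real.log_two_gt_d9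
    have h4 : (0 : ℝ) ≤ (Nat.log 2 N : ℕ) := by positivity
    push_cast
    nlinarith

theorem WMod.l2bound (r : ℝ) (hr : 2 < r) : ∃ C : ℝ, 0 < C ∧ ∀ {X : Type} [Fintype X] (M : WMod X)
    (a : ℕ → ℝ → ℝ) (V : ℝ) (N : ℕ), 0 ≤ V → M.Coef r V a → 1 ≤ N → M.J.card ≤ N →
    ∀ (f : X → ℝ) (τ : X → ℕ), (∀ x, τ x ≤ M.n) →
    ∑ x, (M.D a (τ x) f x) ^ 2
      ≤ (C * (1 + Real.log N) * (N : ℝ) ^ (1 / 2 - 1 / r) * V) ^ 2 * ∑ x, f x ^ 2 := by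
  obtain ⟨C, hC, h⟩ := WMod.lemA r hr
  refine ⟨3 * Real.sqrt C, by positivity, ?_⟩
  intro X _ M a V N hV ha hN hJ f τ hτ
  obtain ⟨L, hL, hL2⟩ := log_level N hN
  have hN1 : (1 : ℝ) ≤ N := by exact_mod_cast hN
  set K := C * ((N : ℝ) ^ (1 / 2 - 1 / r)) ^ 2 * V ^ 2 with hK
  have hK0 : 0 ≤ K := by positivity
  have h1 := M.rm_bound hK0 a τ hτ
    (fun s hs f => h M a V N hV ha hN1 (by exact_mod_cast hJ) s hs f τ hτ) f L (by omega)
  refine h1.trans ?_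
  have hsK : Real.sqrt K = Real.sqrt C * (N : ℝ) ^ (1 / 2 - 1 / r) * V := by
    rw [hK, Real.sqrt_mul (by positivity), Real.sqrt_mul (by positivity),
      Real.sqrt_sq (by positivity), Real.sqrt_sq hV]
  have h0 : 0 ≤ ∑ x, f x ^ 2 := Finset.sum_nonneg fun _ _ => sq_nonneg _
  refine mul_le_mul_of_nonneg_right (pow_le_pow_left₀ (by positivity) ?_ 2) h0
  rw [hsK]
  have : 0 ≤ Real.sqrt C * (N : ℝ) ^ (1 / 2 - 1 / r) * V := by positivity
  nlinarith

namespace WMod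
variable {X : Type} [Fintype X] (M : WMod X)

lemma E_P_sq {s : ℕ} (hs : s ≤ M.n) (f : X → ℝ) (x : X) :
    M.E s (fun y => M.P s f y ^ 2) x = ∑ j ∈ M.rep s, M.cf s j f x ^ 2 := by
  have e : (fun y => M.P s f y ^ 2)
      = fun y => ∑ j ∈ M.rep s, M.cf s j f y * (M.χ j y * M.P s f y) := by
    funext y
    rw [sq]
    change (∑ j ∈ M.rep s, M.χ j y * M.cf s j f y) * M.P s f y = _
    rw [Finset.sum_mul]
    exact Finset.sum_congr rfl fun j _ => by ring
  rw [e, M.E_sum]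
  refine Finset.sum_congr rfl fun j hj => ?_
  rw [M.E_mul (M.cf_meas s j f)]
  have := M.cf_P (le_refl s) hs (M.rep_J hj) f x
  rw [cf] at this
  rw [this, sq]

lemma abs_χ (j : ℝ) (x : X) : |M.χ j x| = 1 := by
  have h := M.hχ j x
  rw [← sq_abs] at h
  nlinarith [abs_nonneg (M.χ j x)]

lemma cf_abs (s : ℕ) (j : ℝ) (f : X → ℝ) (x : X) : |M.cf s j f x| ≤ M.E s (fun y => |f y|) x := by
  refine (M.E_abs s _ x).trans (le_of_eq ?_)
  congr 1; funext y
  rw [abs_mul, M.abs_χ, one_mul]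

lemma E_P_sq_le {s : ℕ} (hs : s ≤ M.n) {N : ℝ} (hN : (M.J.card : ℝ) ≤ N) (f : X → ℝ) (x : X) :
    M.E s (fun y => M.P s f y ^ 2) x ≤ N * M.E s (fun y => |f y|) x ^ 2 := by
  rw [M.E_P_sq hs]
  calc _ ≤ ∑ j ∈ M.rep s, M.E s (fun y => |f y|) x ^ 2 :=
        Finset.sum_le_sum fun j _ => by
          rw [← sq_abs]; exact pow_le_pow_left₀ (abs_nonneg _) (M.cf_abs s j f x) 2
    _ = (M.rep s).card * M.E s (fun y => |f y|) x ^ 2 := by rw [Finset.sum_const, nsmul_eq_mul]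
    _ ≤ _ := by
        refine mul_le_mul_of_nonneg_right (le_trans ?_ hN) (sq_nonneg _)
        exact_mod_cast Finset.card_le_card (M.rep_sub s)

/-- indicator of the stopping time -/
def stp (f : X → ℝ) (lam : ℝ) (s : ℕ) (x : X) : ℝ :=
  if lam < M.E s (fun y => |f y|) x ∧ ∀ s' < s, M.E s' (fun y => |f y|) x ≤ lam then 1 else 0

lemma stp_meas (f : X → ℝ) (lam : ℝ) (s : ℕ) : M.Meas s (M.stp f lam s) := by
  intro x y h
  have h1 : ∀ s' ≤ s, M.E s' (fun y => |f y|) x = M.E s' (fun y => |f y|) y :=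
    fun s' hs' => M.E_meas s' _ x y (M.p_mono hs' h)
  simp only [stp]
  congr 1
  rw [h1 s le_rfl]
  refine propext (and_congr_right fun _ => forall₂_congr fun s' hs' => ?_)
  rw [h1 s' hs'.le]

lemma stp_cases (f : X → ℝ) (lam : ℝ) (n : ℕ) (x : X) :
    ((∀ s ≤ n, M.stp f lam s x = 0) ∧ ∀ s ≤ n, M.E s (fun y => |f y|) x ≤ lam) ∨
    ∃ s0 ≤ n, (∀ s, M.stp f lam s x = if s = s0 then 1 else 0) := by
  by_cases h : ∃ s, s ≤ n ∧ lam < M.E s (fun y => |f y|) x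
  · right
    have h1 := Nat.find_spec h
    refine ⟨Nat.find h, h1.1, fun s => ?_⟩
    simp only [stp]
    congr 1
    refine propext ⟨fun hs => ?_, ?_⟩
    · rcases lt_trichotomy s (Nat.find h) with h2 | h2 | h2
      · exact absurd ⟨by omega, hs.1⟩ (Nat.find_min h h2)
      · exact h2
      · exact absurd (hs.2 _ h2) (not_le.mpr h1.2)
    · rintro rfl
      refine ⟨h1.2, fun s' hs' => ?_⟩
      by_contra hc
      exact Nat.find_min h hs' ⟨by omega, not_le.mp hc⟩
  · left
    push Not at h
    refine ⟨fun s hs => ?_, h⟩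
    simp only [stp]
    rw [if_neg]
    exact fun h2 => absurd (h s hs) (not_le.mpr h2.1)

/-- The bad part. -/
def bad (f : X → ℝ) (lam : ℝ) (x : X) : ℝ :=
  ∑ s ∈ Finset.range (M.n + 1), M.stp f lam s x * (f x - M.P s f x)

lemma cf_bad (f : X → ℝ) (lam : ℝ) {t : ℕ} {j : ℝ} (hj : j ∈ M.J) {x : X}
    (hx : ∀ s ≤ M.n, M.stp f lam s x = 0) : M.cf t j (M.bad f lam) x = 0 := by
  have := M.cf_sum (Finset.range (M.n + 1)) t j
    (fun s y => M.stp f lam s y * (f y - M.P s f y)) x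
  rw [show M.bad f lam = fun y => ∑ s ∈ Finset.range (M.n + 1),
    M.stp f lam s y * (f y - M.P s f y) from rfl, this]
  refine Finset.sum_eq_zero fun s hs => ?_
  have hsn : s ≤ M.n := by simpa [Nat.lt_succ_iff] using hs
  have e : (fun y => M.χ j y * (M.stp f lam s y * (f y - M.P s f y)))
      = fun y => M.stp f lam s y * (M.χ j y * (f y - M.P s f y)) := by funext y; ring
  simp only [cf, e]
  rcases le_total s t with h | h
  · rw [M.E_mul (Filt.Meas.mono M.toFilt h (M.stp_meas f lam s)), hx s hsn, zero_mul]
  · rw [← M.E_E h]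
    have : M.E s (fun y => M.stp f lam s y * (M.χ j y * (f y - M.P s f y))) = fun _ => 0 := by
      funext y
      rw [M.E_mul (M.stp_meas f lam s)]
      have h2 := M.cf_sub s j f (M.P s f) y
      rw [M.cf_P le_rfl hsn hj, sub_self] at h2
      rw [cf] at h2
      rw [h2, mul_zero]
    rw [this, M.E_zero]

lemma D_bad (a : ℕ → ℝ → ℝ) (f : X → ℝ) (lam : ℝ) (t : ℕ) {x : X}
    (hx : ∀ s ≤ M.n, M.stp f lam s x = 0) : M.D a t (M.bad f lam) x = 0 :=
  Finset.sum_eq_zero fun j hj => by rw [M.cf_bad f lam (M.rep_J hj) hx, mul_zero, mul_zero]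

lemma stp_nonneg (f : X → ℝ) (lam : ℝ) (s : ℕ) (x : X) : 0 ≤ M.stp f lam s x := by
  simp only [stp]; split_ifs <;> norm_num

lemma sum_stp_le (f : X → ℝ) (lam : ℝ) (x : X) :
    ∑ s ∈ Finset.range (M.n + 1), M.stp f lam s x ≤ 1 := by
  rcases M.stp_cases f lam M.n x with h | ⟨s0, hs0, h⟩
  · rw [Finset.sum_eq_zero fun s hs => h.1 s (by simpa [Nat.lt_succ_iff] using hs)]; norm_num
  · simp_rw [h]
    rw [Finset.sum_ite_eq']
    split_ifs <;> norm_num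

lemma stp_mass (f : X → ℝ) {lam : ℝ} :
    lam * ∑ x, ∑ s ∈ Finset.range (M.n + 1), M.stp f lam s x ≤ ∑ x, |f x| := by
  rw [Finset.sum_comm, Finset.mul_sum]
  calc _ ≤ ∑ s ∈ Finset.range (M.n + 1), ∑ x, M.stp f lam s x * M.E s (fun y => |f y|) x := by
        refine Finset.sum_le_sum fun s _ => ?_
        rw [Finset.mul_sum]
        refine Finset.sum_le_sum fun x _ => ?_
        simp only [stp]
        split_ifs with h
        · linarith [h.1]
        · simp
    _ = ∑ x, (∑ s ∈ Finset.range (M.n + 1), M.stp f lam s x) * |f x| := by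
        simp_rw [M.sum_mul_E (M.stp_meas f lam _)]
        rw [Finset.sum_comm]
        simp_rw [Finset.sum_mul]
    _ ≤ ∑ x, |f x| := Finset.sum_le_sum fun x _ =>
        mul_le_of_le_one_left (abs_nonneg _) (M.sum_stp_le f lam x)

/-- regularity hypotheses -/
structure Reg : Prop where
  zero : ∀ x y, M.p 0 x = M.p 0 y
  inj : ∀ x y, M.p M.n x = M.p M.n y → x = y
  dbl : ∀ t < M.n, ∀ x, (M.atom t x).card ≤ 2 * (M.atom (t + 1) x).card

variable {M}

lemma Reg.E_n (h : M.Reg) (f : X → ℝ) (x : X) : M.E M.n f x = f x :=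
  M.E_of_meas (fun y z hyz => by rw [h.inj y z hyz]) x

lemma Reg.E_succ (h : M.Reg) {t : ℕ} (ht : t < M.n) {f : X → ℝ} (hf : ∀ x, 0 ≤ f x) (x : X) :
    M.E (t + 1) f x ≤ 2 * M.E t f x := by
  simp only [Filt.E]
  have h1 : ∑ y ∈ M.atom (t + 1) x, f y ≤ ∑ y ∈ M.atom t x, f y := by
    refine Finset.sum_le_sum_of_subset_of_nonneg (fun y hy => ?_) fun y _ _ => hf y
    rw [M.mem_atom] at hy ⊢
    exact M.mono t y x hy
  have h2 : ((M.atom t x).card : ℝ) ≤ 2 * (M.atom (t + 1) x).card := by exact_mod_cast h.dbl t ht x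
  have h3 := M.card_pos t x
  have h4 := M.card_pos (t + 1) x
  rw [← mul_div_assoc, div_le_div_iff₀ h4 h3]
  have h5 : 0 ≤ ∑ y ∈ M.atom (t + 1) x, f y := Finset.sum_nonneg fun y _ => hf y
  calc _ ≤ (∑ y ∈ M.atom (t + 1) x, f y) * (2 * (M.atom (t + 1) x).card) := by gcongr
    _ ≤ (∑ y ∈ M.atom t x, f y) * (2 * (M.atom (t + 1) x).card) := by gcongr
    _ = _ := by ring

lemma Reg.good (h : M.Reg) {f : X → ℝ} {lam N : ℝ} (hlam : 0 < lam) (hN1 : 1 ≤ N)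
    (hN : (M.J.card : ℝ) ≤ N) (h0 : ∀ x, M.E 0 (fun y => |f y|) x ≤ lam) :
    ∑ x, (f x - M.bad f lam x) ^ 2 ≤ 5 * N * lam * ∑ x, |f x| := by
  have hpt : ∀ x, (f x - M.bad f lam x) ^ 2
      ≤ lam * |f x| + ∑ s ∈ Finset.range (M.n + 1), M.stp f lam s x * M.P s f x ^ 2 := by
    intro x
    simp only [bad]
    rcases M.stp_cases f lam M.n x with hc | ⟨s0, hs0, hc⟩
    · have hz : ∀ s ∈ Finset.range (M.n + 1), M.stp f lam s x = 0 :=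
        fun s hs => hc.1 s (by simpa [Nat.lt_succ_iff] using hs)
      rw [Finset.sum_eq_zero fun s hs => by rw [hz s hs, zero_mul],
        Finset.sum_eq_zero fun s hs => by rw [hz s hs, zero_mul]]
      have := hc.2 M.n le_rfl
      rw [h.E_n] at this
      rw [sub_zero, add_zero, ← sq_abs]
      nlinarith [abs_nonneg (f x)]
    · simp_rw [hc, ite_mul, one_mul, zero_mul, Finset.sum_ite_eq', Finset.mem_range,
        Nat.lt_succ_iff, if_pos hs0]
      have : 0 ≤ lam * |f x| := by positivity
      have e : f x - (f x - M.P s0 f x) = M.P s0 f x := by ring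
      rw [e]; linarith
  refine (Finset.sum_le_sum fun x _ => hpt x).trans ?_
  rw [Finset.sum_add_distrib, ← Finset.mul_sum, Finset.sum_comm]
  have hs : ∀ s ∈ Finset.range (M.n + 1), ∑ x, M.stp f lam s x * M.P s f x ^ 2
      ≤ 4 * N * lam * (lam * ∑ x, M.stp f lam s x) := by
    intro s hs
    have hsn : s ≤ M.n := by simpa [Nat.lt_succ_iff] using hs
    rw [← M.sum_mul_E (M.stp_meas f lam s), Finset.mul_sum, Finset.mul_sum]
    refine Finset.sum_le_sum fun x _ => ?_
    have h1 := M.E_P_sq_le hsn hN f x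
    simp only [stp]
    split_ifs with hc
    · cases s with
      | zero => exact absurd (h0 x) (not_le.mpr hc.1)
      | succ s =>
        have h2 := h.E_succ (t := s) (by omega) (f := fun y => |f y|) (fun y => abs_nonneg _) x
        have h3 := hc.2 s (by omega)
        have h4 : 0 ≤ M.E (s + 1) (fun y => |f y|) x := M.E_nonneg (fun y => abs_nonneg _) x
        have h5 : M.E (s + 1) (fun y => |f y|) x ^ 2 ≤ (2 * lam) ^ 2 :=
          pow_le_pow_left₀ h4 (by linarith) 2
        have h6 := mul_le_mul_of_nonneg_left h5 (by linarith : (0 : ℝ) ≤ N)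
        linarith
    · simp
  have h7 := Finset.sum_le_sum hs
  rw [← Finset.mul_sum, ← Finset.mul_sum] at h7
  have h8' := M.stp_mass f (lam := lam)
  rw [Finset.sum_comm] at h8'
  have h8 := mul_le_mul_of_nonneg_left h8' (by positivity : 0 ≤ 4 * N * lam)
  have h9 : lam * ∑ x, |f x| ≤ N * lam * ∑ x, |f x| := by
    have : 0 ≤ ∑ x, |f x| := Finset.sum_nonneg fun _ _ => abs_nonneg _
    have : 0 ≤ lam * ∑ x, |f x| := by positivity
    nlinarith
  linarith

lemma Reg.weak (h : M.Reg) (a : ℕ → ℝ → ℝ) (τ : X → ℕ) {A N : ℝ} (hA : 0 < A) (hN1 : 1 ≤ N)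
    (hN : (M.J.card : ℝ) ≤ N)
    (hL2 : ∀ f : X → ℝ, ∑ x, (M.D a (τ x) f x) ^ 2 ≤ A ^ 2 * ∑ x, f x ^ 2)
    (f : X → ℝ) {α : ℝ} (hα : 0 < α) :
    α * (Finset.univ.filter fun x => α < |M.D a (τ x) f x|).card
      ≤ 6 * A * Real.sqrt N * ∑ x, |f x| := by
  have hsN : 0 < Real.sqrt N := Real.sqrt_pos.mpr (by linarith)
  have hsN2 : Real.sqrt N ^ 2 = N := Real.sq_sqrt (by linarith)
  set lam := α / (A * Real.sqrt N) with hlam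
  have hlam0 : 0 < lam := by positivity
  have hαl : α = lam * (A * Real.sqrt N) := by rw [hlam]; field_simp
  have hf0 : 0 ≤ ∑ x, |f x| := Finset.sum_nonneg fun _ _ => abs_nonneg _
  by_cases h0 : ∀ x, M.E 0 (fun y => |f y|) x ≤ lam
  · have hg := h.good hlam0 hN1 hN h0
    set g : X → ℝ := fun x => f x - M.bad f lam x with hgdef
    -- pointwise
    have hpt : ∀ x, (if α < |M.D a (τ x) f x| then (1 : ℝ) else 0)
        ≤ ∑ s ∈ Finset.range (M.n + 1), M.stp f lam s x + M.D a (τ x) g x ^ 2 / α ^ 2 := by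
      intro x
      have hn : 0 ≤ M.D a (τ x) g x ^ 2 / α ^ 2 := by positivity
      rcases M.stp_cases f lam M.n x with hc | ⟨s0, hs0, hc⟩
      · have hz : ∀ s ∈ Finset.range (M.n + 1), M.stp f lam s x = 0 :=
          fun s hs => hc.1 s (by simpa [Nat.lt_succ_iff] using hs)
        rw [Finset.sum_eq_zero hz, zero_add]
        have e : M.D a (τ x) g x = M.D a (τ x) f x := by
          rw [hgdef, M.D_sub, M.D_bad a f lam _ hc.1, sub_zero]
        rw [e] at hn ⊢
        split_ifs with h1
        · rw [le_div_iff₀ (by positivity), one_mul, ← sq_abs (M.D a (τ x) f x)]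
          exact pow_le_pow_left₀ hα.le h1.le 2
        · exact hn
      · have : ∑ s ∈ Finset.range (M.n + 1), M.stp f lam s x = 1 := by
          simp_rw [hc, Finset.sum_ite_eq', Finset.mem_range, Nat.lt_succ_iff, if_pos hs0]
        rw [this]
        split_ifs <;> linarith
    have hcard : ((Finset.univ.filter fun x => α < |M.D a (τ x) f x|).card : ℝ)
        = ∑ x, if α < |M.D a (τ x) f x| then (1 : ℝ) else 0 := by
      rw [Finset.sum_boole]
    have h1 := Finset.sum_le_sum fun x (_ : x ∈ Finset.univ) => hpt x
    rw [← hcard, Finset.sum_add_distrib, ← Finset.sum_div] at h1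
    have h2 := M.stp_mass f (lam := lam)
    have h3 : ∑ x, M.D a (τ x) g x ^ 2 ≤ A ^ 2 * (5 * N * lam * ∑ x, |f x|) :=
      (hL2 g).trans (mul_le_mul_of_nonneg_left hg (by positivity))
    have h4 : α * ∑ x, ∑ s ∈ Finset.range (M.n + 1), M.stp f lam s x
        ≤ A * Real.sqrt N * ∑ x, |f x| := by
      have := mul_le_mul_of_nonneg_left h2 (by positivity : 0 ≤ A * Real.sqrt N)
      rw [← mul_assoc, mul_comm (A * Real.sqrt N) lam, ← hαl] at this
      exact this
    have h5 : α * ((∑ x, M.D a (τ x) g x ^ 2) / α ^ 2) ≤ 5 * A * Real.sqrt N * ∑ x, |f x| := by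
      have : α * ((∑ x, M.D a (τ x) g x ^ 2) / α ^ 2) = (∑ x, M.D a (τ x) g x ^ 2) / α := by
        field_simp
      rw [this, div_le_iff₀ hα]
      refine h3.trans (le_of_eq ?_)
      calc _ = A ^ 2 * (5 * Real.sqrt N ^ 2 * lam * ∑ x, |f x|) := by rw [hsN2]
        _ = 5 * A * Real.sqrt N * (∑ x, |f x|) * (lam * (A * Real.sqrt N)) := by ring
        _ = _ := by rw [← hαl]
    have h6 := mul_le_mul_of_nonneg_left h1 hα.le
    rw [mul_add] at h6
    linarith
  · push Not at h0
    obtain ⟨x0, hx0⟩ := h0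
    have hall : M.atom 0 x0 = Finset.univ := by
      ext y; simp [M.mem_atom, h.zero y x0]
    simp only [Filt.E, hall] at hx0
    have hX : (0 : ℝ) < (Finset.univ : Finset X).card := by
      have := M.card_pos 0 x0; rwa [hall] at this
    rw [lt_div_iff₀ hX] at hx0
    have h1 : ((Finset.univ.filter fun x => α < |M.D a (τ x) f x|).card : ℝ)
        ≤ (Finset.univ : Finset X).card := by
      exact_mod_cast Finset.card_le_card (Finset.filter_subset _ _)
    calc _ ≤ α * (Finset.univ : Finset X).card := by gcongr
      _ = A * Real.sqrt N * (lam * (Finset.univ : Finset X).card) := by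
          conv_lhs => rw [hαl]
          ring
      _ ≤ A * Real.sqrt N * ∑ x, |f x| := by gcongr
      _ ≤ _ := by
          have : 0 ≤ A * Real.sqrt N * ∑ x, |f x| := by positivity
          linarith

end WMod

lemma lc_low {p y : ℝ} (hp : 0 < p) (hy : 0 ≤ y) :
    ∫⁻ α in Ioi (0 : ℝ), (if α < y then ENNReal.ofReal (α ^ (p - 1)) else 0)
      = ENNReal.ofReal (y ^ p / p) := by
  have e : ∀ α : ℝ, (if α < y then ENNReal.ofReal (α ^ (p - 1)) else 0)
      = (Iio y).indicator (fun α => ENNReal.ofReal (α ^ (p - 1))) α := by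
    intro α; simp [Set.indicator_apply]
  simp_rw [e]
  rw [lintegral_indicator measurableSet_Iio, Measure.restrict_restrict measurableSet_Iio]
  have h1 : Iio y ∩ Ioi (0 : ℝ) = Ioo 0 y := by ext z; simp [and_comm]
  rw [h1]
  have h2 : IntervalIntegrable (fun α : ℝ => α ^ (p - 1)) volume 0 y :=
    intervalIntegral.intervalIntegrable_rpow' (by linarith)
  have h3 : IntegrableOn (fun α : ℝ => α ^ (p - 1)) (Ioc 0 y) := by
    rwa [intervalIntegrable_iff_integrableOn_Ioc_of_le hy] at h2
  rw [← ofReal_integral_eq_lintegral_ofReal]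
  · congr 1
    rw [← integral_Ioc_eq_integral_Ioo, ← intervalIntegral.integral_of_le hy,
      integral_rpow (Or.inl (by linarith))]
    rw [sub_add_cancel, Real.zero_rpow hp.ne', sub_zero]
  · exact h3.mono_set Ioo_subset_Ioc_self
  · refine (ae_restrict_iff' measurableSet_Ioo).mpr (ae_of_all _ fun α hα => ?_)
    exact Real.rpow_nonneg hα.1.le _

lemma lc_high {p y : ℝ} (hp : 0 < p) (hy : 0 < y) :
    ∫⁻ α in Ioi (0 : ℝ), (if y ≤ α then ENNReal.ofReal (α ^ (-p - 1)) else 0)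
      = ENNReal.ofReal (y ^ (-p) / p) := by
  have e : ∀ α : ℝ, (if y ≤ α then ENNReal.ofReal (α ^ (-p - 1)) else 0)
      = (Ici y).indicator (fun α => ENNReal.ofReal (α ^ (-p - 1))) α := by
    intro α; simp [Set.indicator_apply]
  simp_rw [e]
  rw [lintegral_indicator measurableSet_Ici, Measure.restrict_restrict measurableSet_Ici]
  have h1 : Ici y ∩ Ioi (0 : ℝ) = Ici y := by
    ext z; simp only [mem_inter_iff, mem_Ici, mem_Ioi]; constructor
    · exact fun h => h.1
    · exact fun h => ⟨h, by linarith⟩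
  rw [h1, setLIntegral_congr (Ioi_ae_eq_Ici (a := y) (μ := volume)).symm]
  rw [← ofReal_integral_eq_lintegral_ofReal]
  · congr 1
    rw [integral_Ioi_rpow_of_lt (by linarith) hy]
    rw [sub_add_cancel, neg_div_neg_eq]
  · exact integrableOn_Ioi_rpow_of_lt (by linarith) hy
  · refine (ae_restrict_iff' measurableSet_Ioi).mpr (ae_of_all _ fun α hα => ?_)
    exact Real.rpow_nonneg (hy.trans hα).le _

lemma marcin {X : Type} [Fintype X] {q : ℝ} (hq1 : 1 < q) (hq2 : q < 2)
    (T : (X → ℝ) → X → ℝ) (hadd : ∀ f g x, T (fun y => f y + g y) x = T f x + T g x)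
    {W A2 θ : ℝ} (hW : 0 ≤ W) (hA : 0 ≤ A2) (hθ : 0 < θ)
    (hweak : ∀ f : X → ℝ, ∀ α : ℝ, 0 < α →
      α * (Finset.univ.filter fun x => α < |T f x|).card ≤ W * ∑ x, |f x|)
    (hL2 : ∀ f : X → ℝ, ∑ x, (T f x) ^ 2 ≤ A2 * ∑ x, f x ^ 2) (f : X → ℝ) :
    ∑ x, |T f x| ^ q ≤ q * (2 * W * θ ^ (1 - q) / (q - 1) + 4 * A2 * θ ^ (2 - q) / (2 - q))
      * ∑ x, |f x| ^ q := by
  have hq0 : 0 < q := by linarith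
  -- level set estimate
  have hlev : ∀ α : ℝ, 0 < α → ∑ x, (if α < |T f x| then α ^ (q - 1) else 0)
      ≤ ∑ x, (2 * W * |f x| * (if α < |f x| / θ then α ^ (q - 1 - 1) else 0)
        + 4 * A2 * |f x| ^ 2 * (if |f x| / θ ≤ α then α ^ (-(2 - q) - 1) else 0)) := by
    intro α hα
    set f1 : X → ℝ := fun x => if α < |f x| / θ then f x else 0 with hf1
    set f2 : X → ℝ := fun x => if |f x| / θ ≤ α then f x else 0 with hf2
    have hf : f = fun y => f1 y + f2 y := by
      funext y
      simp only [hf1, hf2]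
      by_cases h : α < |f y| / θ
      · rw [if_pos h, if_neg (not_le.mpr h), add_zero]
      · rw [if_neg h, if_pos (not_lt.mp h), zero_add]
    have hT : ∀ x, T f x = T f1 x + T f2 x := fun x => by rw [← hadd, ← hf]
    have hpt : ∀ x, (if α < |T f x| then (1 : ℝ) else 0)
        ≤ (if α / 2 < |T f1 x| then (1 : ℝ) else 0) + 4 / α ^ 2 * T f2 x ^ 2 := by
      intro x
      have h0 : 0 ≤ 4 / α ^ 2 * T f2 x ^ 2 := by positivity
      split_ifs with h1 h2 h2
      · linarith
      · have h3 : α / 2 ≤ |T f2 x| := by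
          have := abs_add_le (T f1 x) (T f2 x)
          rw [← hT] at this
          linarith
        rw [zero_add, div_mul_eq_mul_div, le_div_iff₀ (by positivity), ← sq_abs (T f2 x)]
        nlinarith
      · linarith
      · linarith
    have h1 := Finset.sum_le_sum fun x (_ : x ∈ Finset.univ) => hpt x
    rw [Finset.sum_add_distrib, ← Finset.mul_sum] at h1
    have hc : ∑ x, (if α / 2 < |T f1 x| then (1 : ℝ) else 0)
        = ((Finset.univ.filter fun x => α / 2 < |T f1 x|).card : ℝ) := by simp
    rw [hc] at h1
    have hw := hweak f1 (α / 2) (by positivity)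
    have hl := hL2 f2
    have hα1 : α ^ (q - 1 - 1) = α ^ (q - 1) / α := by
      rw [Real.rpow_sub_one hα.ne']
    have hα2 : α ^ (-(2 - q) - 1) = α ^ (q - 1) / α ^ 2 := by
      rw [← Real.rpow_natCast α 2, ← Real.rpow_sub hα]
      congr 1; push_cast; ring
    have hαq : 0 < α ^ (q - 1) := by positivity
    have e0 : ∑ x, (if α < |T f x| then α ^ (q - 1) else 0)
        = α ^ (q - 1) * ∑ x, (if α < |T f x| then (1 : ℝ) else 0) := by
      rw [Finset.mul_sum]; exact Finset.sum_congr rfl fun x _ => by split_ifs <;> simp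
    have e1 : ∑ x, |f1 x| = ∑ x, |f x| * (if α < |f x| / θ then 1 else 0) :=
      Finset.sum_congr rfl fun x _ => by simp only [hf1]; split_ifs <;> simp
    have e2 : ∑ x, f2 x ^ 2 = ∑ x, |f x| ^ 2 * (if |f x| / θ ≤ α then 1 else 0) :=
      Finset.sum_congr rfl fun x _ => by simp only [hf2]; split_ifs <;> simp
    rw [e1] at hw
    rw [e2] at hl
    have e3 : ∑ x, (2 * W * |f x| * (if α < |f x| / θ then α ^ (q - 1 - 1) else 0)
        + 4 * A2 * |f x| ^ 2 * (if |f x| / θ ≤ α then α ^ (-(2 - q) - 1) else 0))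
        = α ^ (q - 1) * (2 / α * (W * ∑ x, |f x| * (if α < |f x| / θ then 1 else 0))
          + 4 / α ^ 2 * (A2 * ∑ x, |f x| ^ 2 * (if |f x| / θ ≤ α then 1 else 0))) := by
      rw [Finset.sum_add_distrib, mul_add]
      simp only [Finset.mul_sum]
      congr 1
      · refine Finset.sum_congr rfl fun x _ => ?_
        rw [hα1]; split_ifs
        · field_simp
        · simp
      · refine Finset.sum_congr rfl fun x _ => ?_
        rw [hα2]; split_ifs
        · field_simp
        · simp
    rw [e0, e3]
    refine mul_le_mul_of_nonneg_left (h1.trans (add_le_add ?_ ?_)) hαq.le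
    · rw [div_mul_eq_mul_div, le_div_iff₀ hα]; linarith
    · exact mul_le_mul_of_nonneg_left hl (by positivity)
  -- integrate
  have hintg : ∫⁻ α in Ioi (0 : ℝ), ∑ x, (if α < |T f x| then ENNReal.ofReal (α ^ (q - 1)) else 0)
      ≤ ∫⁻ α in Ioi (0 : ℝ), ∑ x, (ENNReal.ofReal (2 * W * |f x|) *
          (if α < |f x| / θ then ENNReal.ofReal (α ^ (q - 1 - 1)) else 0)
        + ENNReal.ofReal (4 * A2 * |f x| ^ 2) *
          (if |f x| / θ ≤ α then ENNReal.ofReal (α ^ (-(2 - q) - 1)) else 0)) := by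
    refine setLIntegral_mono' measurableSet_Ioi fun α hα => ?_
    have h := ENNReal.ofReal_le_ofReal (hlev α hα)
    have hα' : (0 : ℝ) < α := hα
    have g1 : ∀ (c : Prop) [Decidable c] (s : ℝ), 0 ≤ (if c then α ^ s else 0) := fun c _ s => by
      split_ifs; positivity; exact le_rfl
    have g2 : ∀ (c : Prop) [Decidable c] (s : ℝ), ENNReal.ofReal (if c then α ^ s else 0)
        = if c then ENNReal.ofReal (α ^ s) else 0 := fun c _ s => by split_ifs <;> simp
    rw [ENNReal.ofReal_sum_of_nonneg (fun x _ => g1 _ _),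
      ENNReal.ofReal_sum_of_nonneg (fun x _ => add_nonneg
        (mul_nonneg (by positivity) (g1 _ _)) (mul_nonneg (by positivity) (g1 _ _)))] at h
    refine le_trans (le_of_eq ?_) (h.trans (le_of_eq ?_))
    · exact Finset.sum_congr rfl fun x _ => (g2 _ _).symm
    · refine Finset.sum_congr rfl fun x _ => ?_
      rw [ENNReal.ofReal_add (mul_nonneg (by positivity) (g1 _ _))
        (mul_nonneg (by positivity) (g1 _ _)), ENNReal.ofReal_mul (p := 2 * W * |f x|) (by positivity),
        ENNReal.ofReal_mul (p := 4 * A2 * |f x| ^ 2) (by positivity), g2, g2]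
  have mlow : ∀ (y s : ℝ), Measurable fun α : ℝ =>
      (if α < y then ENNReal.ofReal (α ^ s) else 0) := fun y s =>
    Measurable.ite measurableSet_Iio (by fun_prop) measurable_const
  have mhigh : ∀ (y s : ℝ), Measurable fun α : ℝ =>
      (if y ≤ α then ENNReal.ofReal (α ^ s) else 0) := fun y s =>
    Measurable.ite measurableSet_Ici (by fun_prop) measurable_const
  have mm : ∀ x, Measurable fun α : ℝ => (ENNReal.ofReal (2 * W * |f x|) *
          (if α < |f x| / θ then ENNReal.ofReal (α ^ (q - 1 - 1)) else 0)
        + ENNReal.ofReal (4 * A2 * |f x| ^ 2) *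
          (if |f x| / θ ≤ α then ENNReal.ofReal (α ^ (-(2 - q) - 1)) else 0)) := fun x =>
    ((mlow _ _).const_mul _).add ((mhigh _ _).const_mul _)
  rw [lintegral_finsetSum _ (fun x _ => mlow _ _), lintegral_finsetSum _ (fun x _ => mm x)] at hintg
  simp_rw [lc_low hq0 (abs_nonneg _)] at hintg
  have hR : ∀ x, ∫⁻ α in Ioi (0 : ℝ), (ENNReal.ofReal (2 * W * |f x|) *
          (if α < |f x| / θ then ENNReal.ofReal (α ^ (q - 1 - 1)) else 0)
        + ENNReal.ofReal (4 * A2 * |f x| ^ 2) *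
          (if |f x| / θ ≤ α then ENNReal.ofReal (α ^ (-(2 - q) - 1)) else 0))
      = ENNReal.ofReal ((2 * W * θ ^ (1 - q) / (q - 1) + 4 * A2 * θ ^ (2 - q) / (2 - q))
        * |f x| ^ q) := by
    intro x
    rw [lintegral_add_left ((mlow _ _).const_mul _), lintegral_const_mul _ (mlow _ _),
      lintegral_const_mul _ (mhigh _ _), lc_low (by linarith) (by positivity)]
    rcases (abs_nonneg (f x)).eq_or_lt with h0 | h0
    · rw [← h0]; simp [Real.zero_rpow hq0.ne']
    · have hq1' : 0 < q - 1 := by linarith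
      have hq2' : 0 < 2 - q := by linarith
      rw [lc_high (by linarith) (by positivity), ← ENNReal.ofReal_mul (by positivity),
        ← ENNReal.ofReal_mul (by positivity), ← ENNReal.ofReal_add (by positivity) (by positivity)]
      congr 1
      have k1 : |f x| * (|f x| / θ) ^ (q - 1) = θ ^ (1 - q) * |f x| ^ q := by
        rw [Real.div_rpow h0.le hθ.le, show (1 - q) = -(q - 1) by ring, Real.rpow_neg hθ.le,
          Real.rpow_sub_one h0.ne']
        field_simp
      have k2 : |f x| ^ 2 * (|f x| / θ) ^ (-(2 - q)) = θ ^ (2 - q) * |f x| ^ q := by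
        rw [Real.div_rpow h0.le hθ.le, Real.rpow_neg hθ.le, div_inv_eq_mul,
          ← Real.rpow_natCast, ← mul_assoc, ← Real.rpow_add h0, mul_comm]
        congr 2; push_cast; ring
      calc _ = 2 * W * (|f x| * (|f x| / θ) ^ (q - 1)) / (q - 1)
            + 4 * A2 * (|f x| ^ 2 * (|f x| / θ) ^ (-(2 - q))) / (2 - q) := by ring
        _ = _ := by rw [k1, k2]; ring
  simp_rw [hR] at hintg
  have hq1' : 0 < q - 1 := by linarith
  have hq2' : 0 < 2 - q := by linarith
  rw [← ENNReal.ofReal_sum_of_nonneg (fun x _ => by positivity),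
    ← ENNReal.ofReal_sum_of_nonneg (fun x _ => by positivity),
    ENNReal.ofReal_le_ofReal_iff (Finset.sum_nonneg fun x _ => by positivity),
    ← Finset.sum_div, ← Finset.mul_sum, div_le_iff₀ hq0] at hintg
  linarith

theorem WMod.lqbound {q r : ℝ} (hr : 2 < r) (hq1 : 1 < q) (hq2 : q < 2) :
    ∃ C : ℝ, 0 < C ∧ ∀ {X : Type} [Fintype X] (M : WMod X) (_ : M.Reg) (a : ℕ → ℝ → ℝ) (V : ℝ)
      (N : ℕ), 0 ≤ V → M.Coef r V a → 1 ≤ N → M.J.card ≤ N → ∀ (f : X → ℝ) (τ : X → ℕ),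
      (∀ x, τ x ≤ M.n) → ∑ x, |M.D a (τ x) f x| ^ q ≤
        (C * (1 + Real.log N) * (N : ℝ) ^ (1 / q - 1 / r) * V) ^ q * ∑ x, |f x| ^ q := by
  obtain ⟨C2, hC2, H⟩ := WMod.l2bound r hr
  have hq0 : 0 < q := by linarith
  have hq1' : 0 < q - 1 := by linarith
  have hq2' : 0 < 2 - q := by linarith
  set K : ℝ := q * (2 / (q - 1) + 4 / (2 - q)) * 6 ^ (2 - q) with hK
  have hKp : 0 < K := by positivity
  refine ⟨C2 * K ^ (1 / q), by positivity, ?_⟩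
  intro X _ M hreg a V N hV hcoef hN hJ f τ hτ
  have hlog : 0 ≤ Real.log N := Real.log_nonneg (by exact_mod_cast hN)
  have hNp : (0 : ℝ) < N := by exact_mod_cast hN
  rcases hV.eq_or_lt with h0 | hVp
  · have hz : ∀ x, M.D a (τ x) f x = 0 := by
      intro x
      refine Finset.sum_eq_zero fun j hj => ?_
      have := hcoef.bd (τ x) j (M.rep_J hj)
      rw [← h0] at this
      rw [abs_nonpos_iff.mp this, zero_mul]
    simp only [hz, abs_zero, Real.zero_rpow hq0.ne', Finset.sum_const_zero]
    positivity
  set A : ℝ := C2 * (1 + Real.log N) * (N : ℝ) ^ (1 / 2 - 1 / r : ℝ) * V with hA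
  have hAp : 0 < A := by positivity
  have hsN : 0 < √(N : ℝ) := by positivity
  have key := marcin hq1 hq2 (fun f x => M.D a (τ x) f x) (fun f g x => M.D_add a (τ x) f g x)
    (W := 6 * A * √N) (A2 := A ^ 2) (θ := 6 * √N / A) (by positivity) (by positivity) (by positivity)
    (fun f α hα => hreg.weak a τ hAp (by exact_mod_cast hN) (by exact_mod_cast hJ)
      (fun f => H M a V N hV hcoef hN hJ f τ hτ) f hα)
    (fun f => H M a V N hV hcoef hN hJ f τ hτ) f
  refine key.trans (le_of_eq ?_)
  congr 1
  have e1 : A ^ 2 * (6 * √(N : ℝ) / A) ^ (2 - q) = 6 ^ (2 - q) * (A * (N : ℝ) ^ (1 / q - 1 / 2 : ℝ)) ^ q := by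
    rw [Real.div_rpow (by positivity) hAp.le, Real.mul_rpow (by norm_num) hsN.le,
      Real.mul_rpow hAp.le (by positivity), Real.sqrt_eq_rpow, ← Real.rpow_mul hNp.le,
      ← Real.rpow_mul hNp.le, show (1 / q - 1 / 2) * q = 1 / 2 * (2 - q) by field_simp,
      Real.rpow_sub hAp, Real.rpow_two]
    field_simp
  have e2 : 6 * A * √(N : ℝ) * (6 * √(N : ℝ) / A) ^ (1 - q) = A ^ 2 * (6 * √(N : ℝ) / A) ^ (2 - q) := by
    rw [show 2 - q = 1 - q + 1 by ring, Real.rpow_add_one (by positivity)]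
    field_simp
  have e3 : C2 * K ^ (1 / q) * (1 + Real.log N) * (N : ℝ) ^ (1 / q - 1 / r) * V
      = K ^ (1 / q) * (A * (N : ℝ) ^ (1 / q - 1 / 2 : ℝ)) := by
    rw [hA, show (1 / q - 1 / r : ℝ) = (1 / 2 - 1 / r) + (1 / q - 1 / 2) by ring, Real.rpow_add hNp]
    ring
  rw [e3, Real.mul_rpow (by positivity) (by positivity), ← Real.rpow_mul hKp.le,
    one_div_mul_cancel hq0.ne', Real.rpow_one, hK]
  calc _ = q * (2 * (6 * A * √(N : ℝ) * (6 * √(N : ℝ) / A) ^ (1 - q)) / (q - 1)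
        + 4 * (A ^ 2 * (6 * √(N : ℝ) / A) ^ (2 - q)) / (2 - q)) := by ring
    _ = _ := by rw [e2, e1]; ring

theorem WMod.lqmax {q r : ℝ} (hr : 2 < r) (hq1 : 1 < q) (hq2 : q < 2) :
    ∃ C : ℝ, 0 < C ∧ ∀ {X : Type} [Fintype X] (M : WMod X) (_ : M.Reg) (a : ℕ → ℝ → ℝ) (V : ℝ)
      (N : ℕ), 0 ≤ V → M.Coef r V a → 1 ≤ N → M.J.card ≤ N → ∀ (f : X → ℝ),
      ∑ x, (⨆ t : Fin (M.n + 1), ENNReal.ofReal |M.D a t f x|) ^ q ≤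
        ENNReal.ofReal ((C * (1 + Real.log N) * (N : ℝ) ^ (1 / q - 1 / r) * V) ^ q) *
          ∑ x, ENNReal.ofReal (|f x| ^ q) := by
  obtain ⟨C, hC, H⟩ := WMod.lqbound hr hq1 hq2
  refine ⟨C, hC, ?_⟩
  intro X _ M hreg a V N hV hcoef hN hJ f
  have hlog : 0 ≤ Real.log N := Real.log_nonneg (by exact_mod_cast hN)
  have hq0 : 0 < q := by linarith
  have hex : ∀ x, ∃ t : Fin (M.n + 1), ∀ s : Fin (M.n + 1), |M.D a s f x| ≤ |M.D a t f x| := fun x => by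
    obtain ⟨t, -, ht⟩ := Finset.exists_max_image Finset.univ
      (fun s : Fin (M.n + 1) => |M.D a s f x|) Finset.univ_nonempty
    exact ⟨t, fun s => ht s (Finset.mem_univ _)⟩
  choose τ hτ using hex
  have := H M hreg a V N hV hcoef hN hJ f (fun x => (τ x : ℕ)) (fun x => Nat.lt_succ_iff.mp (τ x).2)
  have h2 := ENNReal.ofReal_le_ofReal this
  rw [ENNReal.ofReal_mul (by positivity), ENNReal.ofReal_sum_of_nonneg (fun _ _ => by positivity),
    ENNReal.ofReal_sum_of_nonneg (fun _ _ => by positivity)] at h2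
  refine le_trans (Finset.sum_le_sum fun x _ => ?_) h2
  rw [← ENNReal.ofReal_rpow_of_nonneg (abs_nonneg _) hq0.le]
  refine ENNReal.rpow_le_rpow (iSup_le fun t => ENNReal.ofReal_le_ofReal (hτ x t)) hq0.le

/-- Dyadic floor. -/
def fl (k : ℤ) (x : ℝ) : ℤ := ⌊x / 2 ^ k⌋

/-- Dyadic cell. -/
def cl (k n : ℤ) : Set ℝ := {z | fl k z = n}

lemma digit_fl (k : ℤ) (x : ℝ) : digit k x = fl k x % 2 := rfl

lemma fl_add (k : ℤ) (j : ℕ) (x : ℝ) : fl (k + j) x = fl k x / 2 ^ j := by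
  unfold fl
  have h : x / 2 ^ (k + j : ℤ) = x / 2 ^ k / ((2 ^ j : ℕ) : ℝ) := by
    rw [zpow_add₀ (by norm_num), zpow_natCast, div_div]; push_cast; rfl
  rw [h, Int.floor_div_natCast]; push_cast; rfl

lemma fl_succ (k : ℤ) (x : ℝ) : fl (k + 1) x = fl k x / 2 := by
  have := fl_add k 1 x
  simpa using this

lemma fl_mono {k k' : ℤ} (h : k ≤ k') {x y : ℝ} (he : fl k x = fl k y) : fl k' x = fl k' y := by
  obtain ⟨j, rfl⟩ := Int.le.dest h
  rw [fl_add, fl_add, he]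

lemma fl_eq_iff {k n : ℤ} {x : ℝ} : fl k x = n ↔ (n : ℝ) * 2 ^ k ≤ x ∧ x < ((n : ℝ) + 1) * 2 ^ k := by
  unfold fl
  have : (0 : ℝ) < 2 ^ k := by positivity
  rw [Int.floor_eq_iff, le_div_iff₀ this, div_lt_iff₀ this]

lemma cl_eq (k n : ℤ) : cl k n = Ico ((n : ℝ) * 2 ^ k) (((n : ℝ) + 1) * 2 ^ k) := by
  ext z; exact fl_eq_iff

lemma fl_zero {k : ℤ} {x : ℝ} (h0 : 0 ≤ x) (h : x < 2 ^ k) : fl k x = 0 := by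
  rw [fl_eq_iff]; simp [h0, h]

lemma fl_nonneg (k : ℤ) {x : ℝ} (h0 : 0 ≤ x) : 0 ≤ fl k x := by
  unfold fl; positivity

lemma fl_nonneg_iff {k : ℤ} {x : ℝ} : 0 ≤ fl k x ↔ 0 ≤ x := by
  unfold fl
  rw [Int.floor_nonneg]
  have : (0 : ℝ) < 2 ^ k := by positivity
  constructor
  · intro h; by_contra hx; push Not at hx
    have := div_neg_of_neg_of_pos hx this; linarith
  · intro h; positivity

lemma cl_meas (k n : ℤ) : MeasurableSet (cl k n) := by rw [cl_eq]; exact measurableSet_Ico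

lemma cl_vol (k n : ℤ) : volume (cl k n) = ENNReal.ofReal (2 ^ k) := by
  rw [cl_eq, Real.volume_Ico]; congr 1; ring

lemma fl_measurable (k : ℤ) : Measurable (fl k) := by
  unfold fl; exact Int.measurable_floor.comp (by fun_prop)

lemma digit_measurable (k : ℤ) : Measurable (digit k) := by
  have h : Measurable (fun n : ℤ => n % 2) := Measurable.of_discrete
  exact h.comp (fl_measurable k)

lemma digit_zero {k m : ℤ} {x : ℝ} (h0 : 0 ≤ x) (h : x < 2 ^ k) (hm : k ≤ m) : digit m x = 0 := by
  rw [digit_fl, fl_zero h0 (h.trans_le (zpow_le_zpow_right₀ (by norm_num) hm))]; rfl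

lemma digit_congr {k m : ℤ} {x y : ℝ} (h : fl k x = fl k y) (hm : k ≤ m) : digit m x = digit m y := by
  rw [digit_fl, digit_fl, fl_mono hm h]

lemma exists_big (x : ℝ) : ∃ L : ℕ, ∀ L' : ℕ, L ≤ L' → x < 2 ^ (L' : ℤ) := by
  obtain ⟨L, hL⟩ := pow_unbounded_of_one_lt x (by norm_num : (1 : ℝ) < 2)
  refine ⟨L, fun L' h => hL.trans_le ?_⟩
  rw [zpow_natCast]
  exact pow_le_pow_right₀ (by norm_num) h

lemma maxdiff {k k' : ℤ} {x y : ℝ} (hk : fl k' x = fl k' y) (h : fl k x ≠ fl k y) :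
    ∃ m, k ≤ m ∧ m < k' ∧ fl m x ≠ fl m y ∧ fl (m + 1) x = fl (m + 1) y := by
  have hlt : k < k' := by
    by_contra hc; exact h (fl_mono (not_lt.mp hc) hk)
  obtain ⟨j, rfl⟩ := Int.le.dest hlt.le
  have hex : ∃ i : ℕ, fl (k + i) x = fl (k + i) y := ⟨j, hk⟩
  have hs := Nat.find_spec hex
  have hle : Nat.find hex ≤ j := Nat.find_min' hex hk
  rcases hi : Nat.find hex with _ | i
  · rw [hi] at hs; exact absurd (by simpa using hs) h
  · have hn := Nat.find_min hex (m := i) (by omega)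
    refine ⟨k + i, by omega, by omega, hn, ?_⟩
    rw [hi] at hs
    have : k + (i : ℤ) + 1 = k + ((i + 1 : ℕ) : ℤ) := by push_cast; ring
    rw [this]; exact hs

lemma digit_ne {m : ℤ} {x y : ℝ} (h : fl m x ≠ fl m y) (h' : fl (m + 1) x = fl (m + 1) y) :
    digit m x ≠ digit m y := by
  rw [fl_succ, fl_succ] at h'
  rw [digit_fl, digit_fl]
  omega

lemma digit_01 (m : ℤ) (x : ℝ) : digit m x = 0 ∨ digit m x = 1 := by
  rw [digit_fl]; omega

/-- sign -/
def sg (a : ℤ) : ℝ := (-1 : ℝ) ^ a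

lemma sg_add (a b : ℤ) : sg (a + b) = sg a * sg b := zpow_add₀ (by norm_num) a b

lemma sg_sq (a : ℤ) : sg a ^ 2 = 1 := by
  unfold sg; rw [← zpow_natCast, ← zpow_mul, mul_comm, zpow_mul]; norm_num

lemma sg_two_mul (c : ℤ) : sg (2 * c) = 1 := by
  unfold sg; rw [zpow_mul]; norm_num

lemma sg_congr {a b : ℤ} (h : (2 : ℤ) ∣ a - b) : sg a = sg b := by
  obtain ⟨c, hc⟩ := h
  rw [show a = b + 2 * c by omega, sg_add, sg_two_mul, mul_one]

lemma sg_anti {a b : ℤ} (h : ¬ (2 : ℤ) ∣ a - b) : sg a = - sg b := by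
  have : ∃ c, a = b + 2 * c + 1 := ⟨(a - b - 1) / 2, by omega⟩
  obtain ⟨c, hc⟩ := this
  rw [hc, sg_add, sg_add, sg_two_mul]; simp [sg]

lemma sg_emod (a : ℤ) : sg (a % 2) = sg a := sg_congr (by omega)

/-- The Walsh character. -/
def ch (ξ y : ℝ) : ℝ := sg (wMulDigit (-1) ξ y)

lemma ch_sq (ξ y : ℝ) : ch ξ y ^ 2 = 1 := sg_sq _

lemma ch_abs (ξ y : ℝ) : |ch ξ y| = 1 := by
  have := ch_sq ξ y
  rw [← sq_abs] at this
  nlinarith [abs_nonneg (ch ξ y)]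

lemma ch_symm (ξ y : ℝ) : ch ξ y = ch y ξ := by
  unfold ch wMulDigit
  rw [← (Equiv.subLeft (-1 : ℤ)).tsum_eq]
  simp [mul_comm]

lemma wMulDigit_eq {n : ℤ} {ξ y : ℝ} (S : Finset ℤ)
    (h : ∀ m ∉ S, digit (n - m) ξ * digit m y = 0) :
    wMulDigit n ξ y = (∑ m ∈ S, digit (n - m) ξ * digit m y) % 2 := by
  unfold wMulDigit
  rw [tsum_eq_sum (s := S) (fun m hm => by rw [h m hm]; simp), ← Int.cast_sum, Int.floor_intCast]

lemma prod_zero {n : ℤ} {ξ y : ℝ} {L : ℕ} (hξ : 0 ≤ ξ) (hy : 0 ≤ y) (hξL : ξ < 2 ^ (L : ℤ))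
    (hyL : y < 2 ^ (L : ℤ)) : ∀ m ∉ Finset.Ico (n - L) L, digit (n - m) ξ * digit m y = 0 := by
  intro m hm
  rw [Finset.mem_Ico] at hm
  by_cases h : (L : ℤ) ≤ m
  · rw [digit_zero hy hyL h, mul_zero]
  · rw [digit_zero hξ hξL (by omega), zero_mul]

lemma ch_eq {ξ y : ℝ} {L : ℕ} (hξ : 0 ≤ ξ) (hy : 0 ≤ y) (hξL : ξ < 2 ^ (L : ℤ))
    (hyL : y < 2 ^ (L : ℤ)) :
    ch ξ y = sg (∑ m ∈ Finset.Ico (-1 - (L : ℤ)) L, digit (-1 - m) ξ * digit m y) := by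
  unfold ch
  rw [wMulDigit_eq _ (prod_zero hξ hy hξL hyL), sg_emod]

lemma exists_big4 (a b c d : ℝ) : ∃ L : ℕ, a < 2 ^ (L : ℤ) ∧ b < 2 ^ (L : ℤ) ∧ c < 2 ^ (L : ℤ) ∧
    d < 2 ^ (L : ℤ) := by
  obtain ⟨L, hL⟩ := exists_big (max (max a b) (max c d))
  have := hL L le_rfl
  simp only [max_lt_iff] at this
  exact ⟨L, this.1.1, this.1.2, this.2.1, this.2.2⟩

lemma ch_F1 {k : ℤ} {ξ ξ' x y : ℝ} (h1 : 0 ≤ ξ) (h2 : 0 ≤ ξ') (h3 : 0 ≤ x) (h4 : 0 ≤ y)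
    (hξ : fl k ξ = fl k ξ') (hx : fl (-k) x = fl (-k) y) :
    ch ξ x * ch ξ' x = ch ξ y * ch ξ' y := by
  obtain ⟨L, l1, l2, l3, l4⟩ := exists_big4 ξ ξ' x y
  rw [ch_eq h1 h3 l1 l3, ch_eq h2 h3 l2 l3, ch_eq h1 h4 l1 l4, ch_eq h2 h4 l2 l4, ← sg_add, ← sg_add]
  apply sg_congr
  rw [← Finset.sum_add_distrib, ← Finset.sum_add_distrib, ← Finset.sum_sub_distrib]
  refine Finset.dvd_sum fun m _ => ?_
  by_cases hm : k ≤ -1 - m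
  · rw [digit_congr hξ hm]
    exact ⟨digit (-1 - m) ξ' * digit m x - digit (-1 - m) ξ' * digit m y, by ring⟩
  · rw [digit_congr hx (by omega)]; simp

lemma ch_F2 {m : ℤ} {ξ ξ' x y : ℝ} (h1 : 0 ≤ ξ) (h2 : 0 ≤ ξ') (h3 : 0 ≤ x) (h4 : 0 ≤ y)
    (hm : fl m ξ ≠ fl m ξ') (hm' : fl (m + 1) ξ = fl (m + 1) ξ')
    (hx : fl (-1 - m) x ≠ fl (-1 - m) y) (hx' : fl (-1 - m + 1) x = fl (-1 - m + 1) y) :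
    ch ξ x * ch ξ' x = - (ch ξ y * ch ξ' y) := by
  obtain ⟨L, l1, l2, l3, l4⟩ := exists_big4 ξ ξ' x y
  have d1 := digit_ne hm hm'
  have d2 := digit_ne hx hx'
  have hmem : (-1 - m) ∈ Finset.Ico (-1 - (L : ℤ)) L := by
    by_contra hc
    rw [Finset.mem_Ico] at hc
    by_cases hh : (L : ℤ) ≤ m
    · exact d1 (by rw [digit_zero h1 l1 hh, digit_zero h2 l2 hh])
    · exact d2 (by rw [digit_zero h3 l3 (by omega), digit_zero h4 l4 (by omega)])
  rw [ch_eq h1 h3 l1 l3, ch_eq h2 h3 l2 l3, ch_eq h1 h4 l1 l4, ch_eq h2 h4 l2 l4, ← sg_add, ← sg_add]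
  apply sg_anti
  rw [← Finset.sum_add_distrib, ← Finset.sum_add_distrib, ← Finset.sum_sub_distrib,
    ← Finset.add_sum_erase _ _ hmem]
  have hrest : (2 : ℤ) ∣ ∑ i ∈ (Finset.Ico (-1 - (L : ℤ)) L).erase (-1 - m),
      (digit (-1 - i) ξ * digit i x + digit (-1 - i) ξ' * digit i x
        - (digit (-1 - i) ξ * digit i y + digit (-1 - i) ξ' * digit i y)) := by
    refine Finset.dvd_sum fun i hi => ?_
    have hne := Finset.ne_of_mem_erase hi
    by_cases hi' : m + 1 ≤ -1 - i
    · rw [digit_congr hm' hi']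
      exact ⟨digit (-1 - i) ξ' * digit i x - digit (-1 - i) ξ' * digit i y, by ring⟩
    · rw [digit_congr hx' (by omega)]; simp
  rw [Int.dvd_iff_emod_eq_zero] at hrest ⊢
  rw [show -1 - (-1 - m) = m by ring]
  rcases digit_01 m ξ with a1 | a1 <;> rcases digit_01 m ξ' with a2 | a2 <;>
    rcases digit_01 (-1 - m) x with a3 | a3 <;> rcases digit_01 (-1 - m) y with a4 | a4 <;>
    rw [a1, a2] at d1 <;> rw [a3, a4] at d2 <;> rw [a1, a2, a3, a4] <;> omega

lemma cl_succ (k n : ℤ) : cl (k + 1) n = cl k (2 * n) ∪ cl k (2 * n + 1) := by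
  ext z
  simp only [cl, mem_ofPred_eq, mem_union, fl_succ]
  omega

lemma cl_disj {k n n' : ℤ} (h : n ≠ n') : Disjoint (cl k n) (cl k n') := by
  rw [Set.disjoint_left]
  intro z hz hz'
  exact h (Eq.trans (Eq.symm hz) hz')

lemma cl_const {k n : ℤ} {h : ℝ → ℝ} {c : ℝ} (hc : ∀ z ∈ cl k n, h z = c) :
    IntegrableOn h (cl k n) ∧ ∫ z in cl k n, h z = 2 ^ k * c := by
  have hv : (volume (cl k n)) ≠ ⊤ := by rw [cl_vol]; exact ENNReal.ofReal_ne_top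
  constructor
  · exact (integrableOn_const hv).congr_fun (fun z hz => (hc z hz).symm) (cl_meas k n)
  · rw [setIntegral_congr_fun (cl_meas k n) hc, setIntegral_const, Measure.real, cl_vol,
      ENNReal.toReal_ofReal (by positivity), smul_eq_mul]

lemma cl_nonneg {k n : ℤ} (hn : 0 ≤ n) {z : ℝ} (hz : z ∈ cl k n) : 0 ≤ z := by
  rw [← fl_nonneg_iff (k := k)]; rw [show fl k z = n from hz]; exact hn

lemma mem_cl_pt (k n : ℤ) : (n : ℝ) * 2 ^ k ∈ cl k n := by
  rw [cl_eq]; refine ⟨le_rfl, ?_⟩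
  have : (0 : ℝ) < 2 ^ k := by positivity
  nlinarith

lemma flip_int {j : ℤ} {h : ℝ → ℝ}
    (hc : ∀ x y, 0 ≤ x → 0 ≤ y → fl j x = fl j y → h x = h y)
    (hf : ∀ x y, 0 ≤ x → 0 ≤ y → fl j x ≠ fl j y → fl (j + 1) x = fl (j + 1) y → h x = - h y) :
    ∀ (i : ℕ) (n : ℤ), 0 ≤ n → IntegrableOn h (cl (j + 1 + i) n) ∧
      ∫ z in cl (j + 1 + i) n, h z = 0 := by
  intro i
  induction i with
  | zero =>
    intro n hn
    have g1 := cl_const (k := j) (n := 2 * n) (h := h) (c := h (((2 * n : ℤ) : ℝ) * 2 ^ j)) (fun z hz =>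
      hc _ _ (cl_nonneg (by omega) hz) (cl_nonneg (by omega) (mem_cl_pt j (2 * n)))
        (Eq.trans hz (Eq.symm (mem_cl_pt j (2 * n)))))
    have g2 := cl_const (k := j) (n := 2 * n + 1) (h := h) (c := - h (((2 * n : ℤ) : ℝ) * 2 ^ j)) (fun z hz => by
      have e1 : fl j z = 2 * n + 1 := hz
      have e2 : fl j (((2 * n : ℤ) : ℝ) * 2 ^ j) = 2 * n := mem_cl_pt j (2 * n)
      refine hf _ _ (cl_nonneg (by omega) hz) (cl_nonneg (by omega) (mem_cl_pt j (2 * n))) ?_ ?_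
      · rw [e1, e2]; omega
      · rw [fl_succ, fl_succ, e1, e2]; omega)
    simp only [Nat.cast_zero, add_zero, cl_succ]
    refine ⟨g1.1.union g2.1, ?_⟩
    rw [setIntegral_union (cl_disj (by omega)) (cl_meas _ _) g1.1 g2.1, g1.2, g2.2]; ring
  | succ i ih =>
    intro n hn
    have g1 := ih (2 * n) (by omega)
    have g2 := ih (2 * n + 1) (by omega)
    rw [show j + 1 + ((i + 1 : ℕ) : ℤ) = (j + 1 + i) + 1 by push_cast; ring, cl_succ]
    refine ⟨g1.1.union g2.1, ?_⟩
    rw [setIntegral_union (cl_disj (by omega)) (cl_meas _ _) g1.1 g2.1, g1.2, g2.2]; ring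

/-- Orthogonality. -/
lemma ch_F2int {k n : ℤ} {ξ ξ' : ℝ} (h1 : 0 ≤ ξ) (h2 : 0 ≤ ξ') (hn : 0 ≤ n)
    (hne : fl k ξ ≠ fl k ξ') : ∫ x in cl (-k) n, ch ξ x * ch ξ' x = 0 := by
  obtain ⟨L, l1, l2, -, -⟩ := exists_big4 ξ ξ' 0 0
  obtain ⟨m, hkm, hmL, hm, hm'⟩ := maxdiff (k' := L) ((fl_zero h1 l1).trans (fl_zero h2 l2).symm) hne
  have := flip_int (j := -1 - m) (h := fun x => ch ξ x * ch ξ' x)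
    (fun x y hx hy hxy => ch_F1 h1 h2 hx hy hm' (by rw [show -(m + 1) = -1 - m by ring]; exact hxy))
    (fun x y hx hy hxy hxy' => ch_F2 h1 h2 hx hy hm hm' hxy hxy') (m - k).toNat n hn
  rw [show -1 - m + 1 + ((m - k).toNat : ℤ) = -k by omega] at this
  exact this.2

lemma wMulDigit_01 (n : ℤ) (ξ y : ℝ) : wMulDigit n ξ y = 0 ∨ wMulDigit n ξ y = 1 := by
  unfold wMulDigit; omega

lemma digit_tsum {c : ℤ → ℤ} (h01 : ∀ n, c n = 0 ∨ c n = 1) {L : ℕ} (hL : ∀ n : ℤ, L ≤ n → c n = 0)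
    (hex : ∃ n : ℤ, n ≤ -2 ∧ c n = 0) :
    digit (-1) (∑' n : ℤ, ((c n : ℤ) : ℝ) * 2 ^ n) = c (-1) := by
  set f : ℤ → ℝ := fun n => ((c n : ℤ) : ℝ) * 2 ^ n with hf
  have hf0 : ∀ n, 0 ≤ f n := fun n => by
    simp only [hf]; rcases h01 n with h | h <;> rw [h] <;> simp; positivity
  have hf1 : ∀ n, f n ≤ 2 ^ n := fun n => by
    simp only [hf]; rcases h01 n with h | h <;> rw [h] <;> simp; positivity
  have hfin : ∀ n : ℕ, n ∉ Finset.range L → f n = 0 := fun n hn => by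
    simp only [hf]; rw [hL n (by simpa using hn)]; simp
  have hs1 : Summable fun n : ℕ => f n := summable_of_ne_finset_zero (s := Finset.range L) hfin
  have hg : ∀ j : ℕ, Summable fun n : ℕ => (2 : ℝ) ^ (-((n : ℤ) + j)) := fun j => by
    have : (fun n : ℕ => (2 : ℝ) ^ (-((n : ℤ) + j))) = fun n : ℕ => (1 / 2 : ℝ) ^ n * (1 / 2) ^ j := by
      funext n; rw [zpow_neg, zpow_add₀ (by norm_num)]; simp [mul_comm]
    rw [this]
    exact (summable_geometric_of_lt_one (by norm_num) (by norm_num)).mul_right _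
  have hs2 : Summable fun n : ℕ => f (-((n : ℤ) + 1)) :=
    Summable.of_nonneg_of_le (fun n => hf0 _) (fun n => hf1 _) (by simpa using hg 1)
  have hs3 : Summable fun n : ℕ => f (-((n : ℤ) + 2)) :=
    Summable.of_nonneg_of_le (fun n => hf0 _) (fun n => hf1 _) (by simpa using hg 2)
  have e1 : ∑' n : ℤ, f n = ∑' n : ℕ, f n + ∑' n : ℕ, f (-((n : ℤ) + 1)) :=
    tsum_of_nat_of_neg_add_one hs1 hs2
  have e2 : ∑' n : ℕ, f (-((n : ℤ) + 1)) = f (-1) + ∑' n : ℕ, f (-((n : ℤ) + 2)) := by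
    rw [hs2.tsum_eq_zero_add]
    have : ∀ n : ℕ, f (-(((n + 1 : ℕ) : ℤ) + 1)) = f (-((n : ℤ) + 2)) := fun n => by
      congr 1
    simp only [this]; simp
  have e3 : ∑' n : ℕ, f n = ((∑ n ∈ Finset.range L, c n * 2 ^ n : ℤ) : ℝ) := by
    rw [tsum_eq_sum (s := Finset.range L) hfin]
    push_cast
    exact Finset.sum_congr rfl fun n _ => by simp [hf]
  have t0 : 0 ≤ ∑' n : ℕ, f (-((n : ℤ) + 2)) := tsum_nonneg fun n => hf0 _
  have t1 : ∑' n : ℕ, f (-((n : ℤ) + 2)) < 1 / 2 := by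
    obtain ⟨n0, hn0, hc0⟩ := hex
    have hsum : ∑' n : ℕ, (2 : ℝ) ^ (-((n : ℤ) + (2 : ℕ))) = 1 / 2 := by
      have : (fun n : ℕ => (2 : ℝ) ^ (-((n : ℤ) + (2 : ℕ)))) = fun n : ℕ => (1 / 2 : ℝ) ^ n * (1 / 2) ^ 2 := by
        funext n; rw [zpow_neg, zpow_add₀ (by norm_num)]; simp [mul_comm]
      rw [this, tsum_mul_right, tsum_geometric_of_lt_one (by norm_num) (by norm_num)]; norm_num
    rw [← hsum]
    refine Summable.tsum_lt_tsum (i := (-n0 - 2).toNat) (fun n => hf1 _) ?_ hs3 (hg 2)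
    have : -(((-n0 - 2).toNat : ℤ) + 2) = n0 := by omega
    simp only [Nat.cast_ofNat, this]
    simp only [hf, hc0]
    simp only [Int.cast_zero, zero_mul]; positivity
  have hdef : digit (-1) (∑' n : ℤ, f n) = ⌊(∑' n : ℤ, f n) / 2 ^ (-1 : ℤ)⌋ % 2 := rfl
  rw [hdef, e1, e2, e3]
  have hfl : ⌊(((∑ n ∈ Finset.range L, c n * 2 ^ n : ℤ) : ℝ) + (f (-1) + ∑' n : ℕ, f (-((n : ℤ) + 2)))) /
      2 ^ (-1 : ℤ)⌋ = 2 * (∑ n ∈ Finset.range L, c n * 2 ^ n : ℤ) + c (-1) := by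
    rw [Int.floor_eq_iff]
    have : f (-1) = c (-1) / 2 := by simp [hf]; ring
    rw [this, zpow_neg_one, div_inv_eq_mul]
    push_cast
    constructor <;> linarith
  rw [hfl]
  rcases h01 (-1) with h | h <;> rw [h] <;> omega

lemma walshe_wMul {ξ y : ℝ} (hξ : 0 ≤ ξ) (hy : 0 ≤ y) (hex : ∃ n : ℤ, n ≤ -2 ∧ wMulDigit n ξ y = 0) :
    walshe (wMul ξ y) = ch ξ y := by
  obtain ⟨L, l1, l2, -, -⟩ := exists_big4 ξ y 0 0
  unfold walshe wMul ch sg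
  rw [digit_tsum (c := fun n => wMulDigit n ξ y) (fun n => wMulDigit_01 n ξ y) (L := 2 * L) ?_ hex]
  intro n hn
  rw [wMulDigit_eq _ (prod_zero hξ hy l1 l2)]
  push_cast at hn
  rw [Finset.Ico_eq_empty (by omega)]; simp

lemma bad_countable {ξ : ℝ} (hξ : 0 ≤ ξ) :
    {y : ℝ | 0 ≤ y ∧ ∀ n : ℤ, n ≤ -2 → wMulDigit n ξ y = 1}.Countable := by
  rcases hξ.eq_or_lt with h0 | hpos
  · convert Set.countable_empty
    ext y
    simp only [mem_ofPred_eq, mem_empty_iff_false, iff_false, not_and]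
    intro _ h
    have := h (-2) le_rfl
    rw [wMulDigit_eq ∅] at this
    · simp at this
    · intro m _; rw [← h0]; simp [digit]
  · obtain ⟨p, hp⟩ := exists_mem_Ico_zpow hpos (by norm_num : (1 : ℝ) < 2)
    have p1 : fl p ξ = 1 := by rw [fl_eq_iff]; refine ⟨by simpa using hp.1, ?_⟩
                               have := hp.2; rw [zpow_add_one₀ (by norm_num)] at this; push_cast; linarith
    have pd : digit p ξ = 1 := by rw [digit_fl, p1]; rfl
    refine Set.MapsTo.countable_of_injOn (f := fl (-1 - p)) (t := Set.univ) (fun _ _ => mem_univ _) ?_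
      Set.countable_univ
    rintro y ⟨hy, hyb⟩ y' ⟨hy', hyb'⟩ hfl
    by_contra hne
    have hd : 0 < |y - y'| := abs_pos.mpr (sub_ne_zero.mpr hne)
    obtain ⟨k, hk⟩ := exists_mem_Ico_zpow hd (by norm_num : (1 : ℝ) < 2)
    have hk' : fl k y ≠ fl k y' := by
      intro he
      have a1 := fl_eq_iff.mp he
      have a2 := fl_eq_iff.mp (rfl : fl k y' = fl k y')
      have : |y - y'| < 2 ^ k := by rw [abs_lt]; constructor <;> linarith
      linarith [hk.1]
    obtain ⟨m, hkm, hmp, hm, hm'⟩ := maxdiff hfl hk'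
    obtain ⟨L, l1, l2, l3, l4⟩ := exists_big4 ξ y y' 0
    have q1 := hyb (m + p) (by omega)
    have q2 := hyb' (m + p) (by omega)
    rw [wMulDigit_eq _ (prod_zero hξ hy l1 l2)] at q1
    rw [wMulDigit_eq _ (prod_zero hξ hy' l1 l3)] at q2
    have dne := digit_ne hm hm'
    have hmem : m ∈ Finset.Ico (m + p - (L : ℤ)) L := by
      by_contra hc
      rw [Finset.mem_Ico] at hc
      by_cases hh : (L : ℤ) ≤ m
      · exact dne (by rw [digit_zero hy l2 hh, digit_zero hy' l3 hh])
      · rw [digit_zero hξ l1 (by omega)] at pd; omega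
    have hsub : ∑ i ∈ Finset.Ico (m + p - (L : ℤ)) L, digit (m + p - i) ξ * digit i y
        - ∑ i ∈ Finset.Ico (m + p - (L : ℤ)) L, digit (m + p - i) ξ * digit i y'
        = digit m y - digit m y' := by
      rw [← Finset.sum_sub_distrib, Finset.sum_eq_single m]
      · rw [show m + p - m = p by ring, pd]; ring
      · intro i _ hi
        by_cases him : m + 1 ≤ i
        · rw [digit_congr hm' him]; ring
        · rw [digit_zero hξ hp.2 (by omega)]; ring
      · intro h; exact absurd hmem h
    rcases digit_01 m y with a | a <;> rcases digit_01 m y' with b | b <;> rw [a, b] at hsub dne <;> omega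

lemma walshe_ae {ξ : ℝ} (hξ : 0 ≤ ξ) :
    ∀ᵐ y ∂(volume.restrict (Ici (0 : ℝ))), walshe (wMul ξ y) = ch ξ y := by
  rw [ae_restrict_iff' measurableSet_Ici]
  have := (bad_countable hξ).measure_zero volume
  filter_upwards [measure_eq_zero_iff_ae_notMem.mp this] with y hy hy0
  refine walshe_wMul hξ hy0 ?_
  by_contra hc
  push Not at hc
  refine hy ⟨hy0, fun n hn => ?_⟩
  rcases wMulDigit_01 n ξ y with h | h
  · exact absurd h (hc n hn)
  · exact h

lemma walshFT_eq (g : ℝ → ℝ) {ξ : ℝ} (hξ : 0 ≤ ξ) :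
    walshFT g ξ = ∫ y in Ici (0 : ℝ), ch ξ y * g y := by
  unfold walshFT
  refine integral_congr_ae ?_
  filter_upwards [walshe_ae hξ] with y hy
  rw [hy]

/-- Truncated characters, jointly measurable. -/
def chL (L : ℕ) (z : ℝ × ℝ) : ℝ :=
  sg (∑ m ∈ Finset.Ico (-1 - (L : ℤ)) L, digit (-1 - m) z.1 * digit m z.2)

lemma chL_meas (L : ℕ) : Measurable (chL L) := by
  have h : Measurable sg := Measurable.of_discrete
  refine h.comp (Finset.measurable_sum _ fun m _ => ?_)
  exact ((digit_measurable _).comp measurable_fst).mul ((digit_measurable _).comp measurable_snd)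

lemma chL_tendsto {z : ℝ × ℝ} (h1 : 0 ≤ z.1) (h2 : 0 ≤ z.2) :
    Tendsto (fun L => chL L z) atTop (nhds (ch z.1 z.2)) := by
  obtain ⟨L, hL⟩ := exists_big (max z.1 z.2)
  refine tendsto_const_nhds.congr' ?_
  filter_upwards [eventually_ge_atTop L] with L' hL'
  have := hL L' hL'
  rw [max_lt_iff] at this
  exact ch_eq h1 h2 this.1 this.2

lemma ch_aesm {μ : Measure (ℝ × ℝ)} (h : ∀ᵐ z ∂μ, 0 ≤ z.1 ∧ 0 ≤ z.2) :
    AEStronglyMeasurable (fun z : ℝ × ℝ => ch z.1 z.2) μ := by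
  refine aestronglyMeasurable_of_tendsto_ae atTop (f := chL)
    (fun L => (chL_meas L).aestronglyMeasurable) ?_
  filter_upwards [h] with z hz
  exact chL_tendsto hz.1 hz.2

lemma ch_aesm1 {ξ : ℝ} (hξ : 0 ≤ ξ) : AEStronglyMeasurable (ch ξ) (volume.restrict (Ici (0 : ℝ))) := by
  refine aestronglyMeasurable_of_tendsto_ae atTop (f := fun L y => chL L (ξ, y))
    (fun L => ((chL_meas L).comp (by fun_prop)).aestronglyMeasurable) ?_
  rw [ae_restrict_iff' measurableSet_Ici]
  exact ae_of_all _ fun y hy => chL_tendsto (z := (ξ, y)) hξ hy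

lemma ch_integrable_iff {ξ : ℝ} (hξ : 0 ≤ ξ) (g : ℝ → ℝ) :
    IntegrableOn (fun y => ch ξ y * g y) (Ici 0) ↔ IntegrableOn g (Ici 0) := by
  constructor
  · intro h
    have := h.bdd_mul (ch_aesm1 hξ) (c := 1) (ae_of_all _ fun y => by rw [Real.norm_eq_abs, ch_abs])
    refine this.congr (ae_of_all _ fun y => ?_)
    simp only
    rw [← mul_assoc, ← sq, ch_sq, one_mul]
  · intro h
    exact h.bdd_mul (ch_aesm1 hξ) (c := 1) (ae_of_all _ fun y => by rw [Real.norm_eq_abs, ch_abs])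

lemma walshFT_nonint {g : ℝ → ℝ} (hg : ¬ IntegrableOn g (Ici 0)) {ξ : ℝ} (hξ : 0 ≤ ξ) :
    walshFT g ξ = 0 := by
  rw [walshFT_eq g hξ]
  exact integral_undef (fun h => hg ((ch_integrable_iff hξ g).mp h))

lemma cl_sub {k n : ℤ} (hn : 0 ≤ n) : cl k n ⊆ Ici 0 := fun _ hz => cl_nonneg hn hz

lemma fub_int {g : ℝ → ℝ} (hg : IntegrableOn g (Ici 0)) {x : ℝ} (hx : 0 ≤ x) {k n : ℤ} (hn : 0 ≤ n) :
    Integrable (fun z : ℝ × ℝ => ch x z.1 * (ch z.1 z.2 * g z.2))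
      ((volume.restrict (cl k n)).prod (volume.restrict (Ici 0))) := by
  have : IsFiniteMeasure (volume.restrict (cl k n)) :=
    ⟨by rw [Measure.restrict_apply_univ, cl_vol]; exact ENNReal.ofReal_lt_top⟩
  have h1 : Integrable (fun z : ℝ × ℝ => g z.2)
      ((volume.restrict (cl k n)).prod (volume.restrict (Ici 0))) := Integrable.comp_snd hg _
  have hsub : cl k n ⊆ Ici 0 := fun z hz => cl_nonneg hn hz
  have hae : ∀ᵐ z ∂((volume.restrict (cl k n)).prod (volume.restrict (Ici (0 : ℝ)))),
      0 ≤ z.1 ∧ 0 ≤ z.2 := by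
    rw [Measure.prod_restrict]
    filter_upwards [ae_restrict_mem ((cl_meas k n).prod measurableSet_Ici)] with z hz
    exact ⟨hsub hz.1, hz.2⟩
  have h2 := h1.bdd_mul (ch_aesm hae) (c := 1) (ae_of_all _ fun z => by rw [Real.norm_eq_abs, ch_abs])
  refine h2.bdd_mul (f := fun z : ℝ × ℝ => ch x z.1) ?_ (c := 1)
    (ae_of_all _ fun z => by rw [Real.norm_eq_abs, ch_abs])
  exact ((ch_aesm1 hx).mono_measure (Measure.restrict_mono hsub le_rfl)).comp_fst

lemma single_int {g : ℝ → ℝ} (hg : IntegrableOn g (Ici 0)) {x : ℝ} (hx : 0 ≤ x) {k n : ℤ} (hn : 0 ≤ n) :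
    IntegrableOn (fun ξ => ch x ξ * walshFT g ξ) (cl k n) := by
  have := (fub_int hg hx (k := k) hn).integral_prod_left
  refine this.congr ?_
  filter_upwards [ae_restrict_mem (cl_meas k n)] with ξ hξ
  rw [walshFT_eq g (cl_nonneg hn hξ), ← integral_const_mul]

lemma single_op {g : ℝ → ℝ} (hg : IntegrableOn g (Ici 0)) {x j : ℝ} (hx : 0 ≤ x) (hj : 0 ≤ j) (k : ℤ) :
    ∫ ξ in cl k (fl k j), ch x ξ * walshFT g ξ =
      ch j x * (2 ^ k * ∫ y in cl (-k) (fl (-k) x), ch j y * g y) := by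
  have hn := fl_nonneg k hj
  have e1 : ∫ ξ in cl k (fl k j), ch x ξ * walshFT g ξ
      = ∫ ξ in cl k (fl k j), ∫ y in Ici (0 : ℝ), ch x ξ * (ch ξ y * g y) := by
    refine setIntegral_congr_fun (cl_meas _ _) fun ξ hξ => ?_
    rw [walshFT_eq g (cl_nonneg hn hξ), ← integral_const_mul]
  rw [e1, integral_integral_swap (f := fun ξ y => ch x ξ * (ch ξ y * g y)) (fub_int hg hx hn)]
  have e2 : ∀ y ∈ Ici (0 : ℝ), ∫ ξ in cl k (fl k j), ch x ξ * (ch ξ y * g y)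
      = (cl (-k) (fl (-k) x)).indicator (fun y => (ch j x * 2 ^ k) * (ch j y * g y)) y := by
    intro y hy
    have hy0 : 0 ≤ y := hy
    have e3 : ∀ ξ, ch x ξ * (ch ξ y * g y) = (ch x ξ * ch y ξ) * g y := fun ξ => by
      rw [ch_symm ξ y]; ring
    simp_rw [e3]
    rw [integral_mul_const]
    by_cases hxy : fl (-k) x = fl (-k) y
    · rw [indicator_of_mem (show y ∈ cl (-k) (fl (-k) x) from hxy.symm)]
      have := (cl_const (k := k) (n := fl k j) (h := fun ξ => ch x ξ * ch y ξ) (c := ch x j * ch y j)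
        (fun ξ hξ => ch_F1 (k := -k) hx hy0 (cl_nonneg hn hξ) hj hxy (by rw [neg_neg]; exact hξ))).2
      rw [this, ch_symm x j, ch_symm y j]; ring
    · rw [indicator_of_notMem (show y ∉ cl (-k) (fl (-k) x) from fun h => hxy (Eq.symm h))]
      have := ch_F2int (k := -k) (n := fl k j) hx hy0 hn hxy
      rw [neg_neg] at this
      rw [this, zero_mul]
  rw [setIntegral_congr_fun measurableSet_Ici e2, setIntegral_indicator (cl_meas _ _),
    inter_eq_self_of_subset_right (cl_sub (fl_nonneg _ hx)), integral_const_mul]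
  ring

lemma dyLen_iff {k : ℤ} {ω : Set ℝ} : IsDyadicLen k ω ↔ ∃ n, ω = cl k n := by
  simp only [IsDyadicLen, cl_eq]

lemma cl_inj_mem {k n : ℤ} {ξ : ℝ} (h : ξ ∈ cl k n) : cl k n = cl k (fl k ξ) := by
  rw [show fl k ξ = n from h]

lemma dyadicSum_eq (a : Set ℝ → ℝ) (ξ : ℝ) (k : ℤ) : dyadicSum a ξ k = a (cl k (fl k ξ)) := by
  unfold dyadicSum
  rw [finsum_eq_single _ (cl k (fl k ξ))]
  · rw [finsum_eq_if, if_pos (dyLen_iff.mpr ⟨_, rfl⟩), indicator_of_mem (show ξ ∈ cl k (fl k ξ) from rfl),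
      mul_one]
  · intro ω hω
    rw [finsum_eq_if]
    split_ifs with h
    · obtain ⟨n, rfl⟩ := dyLen_iff.mp h
      rw [indicator_of_notMem (fun hm => hω (cl_inj_mem hm)), mul_zero]
    · rfl

lemma Dk_eq (a : Set ℝ → ℝ) (Ξ : Set ℝ) (ξ : ℝ) (k : ℤ) :
    Dk a Ξ k ξ = if ∃ j ∈ Ξ, fl k j = fl k ξ then a (cl k (fl k ξ)) else 0 := by
  unfold Dk
  rw [finsum_eq_single _ (cl k (fl k ξ))]
  · rw [finsum_eq_if, indicator_of_mem (show ξ ∈ cl k (fl k ξ) from rfl), mul_one]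
    refine if_congr ?_ rfl rfl
    constructor
    · rintro ⟨-, j, h1, h2⟩; exact ⟨j, h2, h1⟩
    · rintro ⟨j, h1, h2⟩; exact ⟨dyLen_iff.mpr ⟨_, rfl⟩, j, h2, h1⟩
  · intro ω hω
    rw [finsum_eq_if]
    split_ifs with h
    · obtain ⟨n, rfl⟩ := dyLen_iff.mp h.1
      rw [indicator_of_notMem (fun hm => hω (cl_inj_mem hm)), mul_zero]
    · rfl

lemma Dk_sum (a : Set ℝ → ℝ) (Ξ : Set ℝ) (k : ℤ) (R : Finset ℝ) (hR : (R : Set ℝ) ⊆ Ξ)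
    (hinj : ∀ i ∈ R, ∀ j ∈ R, fl k i = fl k j → i = j) (hcov : ∀ i ∈ Ξ, ∃ j ∈ R, fl k j = fl k i) (ξ : ℝ) :
    Dk a Ξ k ξ = ∑ j ∈ R, dyadicSum a j k * (cl k (fl k j)).indicator (fun _ => 1) ξ := by
  rw [Dk_eq]
  split_ifs with h
  · obtain ⟨i, hi, hik⟩ := h
    obtain ⟨j, hj, hji⟩ := hcov i hi
    rw [Finset.sum_eq_single j]
    · rw [indicator_of_mem (show ξ ∈ cl k (fl k j) from (hji.trans hik).symm), mul_one, dyadicSum_eq,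
        hji, hik]
    · intro j' hj' hne
      rw [indicator_of_notMem, mul_zero]
      intro hm
      exact hne (hinj j' hj' j hj (by rw [hji, hik]; exact Eq.symm hm))
    · intro h; exact absurd hj h
  · symm
    refine Finset.sum_eq_zero fun j hj => ?_
    rw [indicator_of_notMem, mul_zero]
    intro hm
    exact h ⟨j, hR hj, Eq.symm hm⟩

lemma Tk_eq (a : Set ℝ → ℝ) (Ξ : Set ℝ) (hΞ : Ξ ⊆ Ici 0) (k : ℤ) (R : Finset ℝ) (hR : (R : Set ℝ) ⊆ Ξ)
    (hinj : ∀ i ∈ R, ∀ j ∈ R, fl k i = fl k j → i = j) (hcov : ∀ i ∈ Ξ, ∃ j ∈ R, fl k j = fl k i)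
    {g : ℝ → ℝ} (hg : IntegrableOn g (Ici 0)) {x : ℝ} (hx : 0 ≤ x) :
    walshFT (fun ξ => Dk a Ξ k ξ * walshFT g ξ) x =
      ∑ j ∈ R, dyadicSum a j k * (ch j x * (2 ^ k * ∫ y in cl (-k) (fl (-k) x), ch j y * g y)) := by
  rw [walshFT_eq _ hx]
  have hnn : ∀ j ∈ R, 0 ≤ fl k j := fun j hj => fl_nonneg k (hΞ (hR hj))
  have e : ∀ ξ, ch x ξ * (Dk a Ξ k ξ * walshFT g ξ) = ∑ j ∈ R, dyadicSum a j k *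
      (cl k (fl k j)).indicator (fun ξ => ch x ξ * walshFT g ξ) ξ := by
    intro ξ
    rw [Dk_sum a Ξ k R hR hinj hcov, Finset.sum_mul, Finset.mul_sum]
    refine Finset.sum_congr rfl fun j _ => ?_
    by_cases h : ξ ∈ cl k (fl k j)
    · rw [indicator_of_mem h, indicator_of_mem h]; ring
    · rw [indicator_of_notMem h, indicator_of_notMem h]; ring
  simp_rw [e]
  rw [integral_finsetSum]
  · refine Finset.sum_congr rfl fun j hj => ?_
    rw [integral_const_mul, setIntegral_indicator (cl_meas _ _),
      inter_eq_self_of_subset_right (cl_sub (hnn j hj)),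
      single_op hg hx (hΞ (hR hj))]
  · intro j hj
    refine Integrable.const_mul ?_ _
    rw [integrable_indicator_iff (cl_meas _ _)]
    have := single_int hg hx (k := k) (hnn j hj)
    exact this.mono_measure (Measure.restrict_le_self)

/-- Left end point of a finest cell. -/
def pt (K : ℕ) (x : Fin (2 ^ (2 * K))) : ℝ := (((x : ℕ) : ℤ) : ℝ) * 2 ^ (-(K : ℤ))

lemma pt_nonneg (K : ℕ) (x : Fin (2 ^ (2 * K))) : 0 ≤ pt K x := by unfold pt; positivity

lemma pt_mem (K : ℕ) (x : Fin (2 ^ (2 * K))) : pt K x ∈ cl (-(K : ℤ)) ((x : ℕ) : ℤ) := mem_cl_pt _ _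

lemma fl_of_cell {K t : ℕ} (ht : t ≤ 2 * K) {w : ℕ} {z : ℝ} (hz : z ∈ cl (-(K : ℤ)) (w : ℤ)) :
    fl ((K : ℤ) - t) z = ((w / 2 ^ (2 * K - t) : ℕ) : ℤ) := by
  have h : (K : ℤ) - t = -(K : ℤ) + ((2 * K - t : ℕ) : ℤ) := by omega
  rw [h, fl_add, show fl (-(K : ℤ)) z = w from hz]; push_cast; rfl

/-- dyadic filtration -/
def dyFilt (K : ℕ) : Filt (Fin (2 ^ (2 * K))) where
  p t x := (x : ℕ) / 2 ^ (2 * K - t)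
  mono t x y h := by
    by_cases ht : t + 1 ≤ 2 * K
    · rw [show 2 * K - t = (2 * K - (t + 1)) + 1 by omega, pow_succ, ← Nat.div_div_eq_div_mul,
        ← Nat.div_div_eq_div_mul, h]
    · rw [show 2 * K - t = 2 * K - (t + 1) by omega]; exact h

lemma cell_union {K t : ℕ} (ht : t ≤ 2 * K) (x : Fin (2 ^ (2 * K))) :
    cl ((K : ℤ) - t) (((dyFilt K).p t x : ℕ) : ℤ)
      = ⋃ y ∈ (dyFilt K).atom t x, cl (-(K : ℤ)) ((y : ℕ) : ℤ) := by
  ext z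
  simp only [mem_iUnion, exists_prop, Filt.mem_atom]
  constructor
  · intro hz
    have hz' : fl ((K : ℤ) - t) z = _ := hz
    have h0 : 0 ≤ z := cl_nonneg (Int.natCast_nonneg _) hz
    obtain ⟨w, hw⟩ := Int.eq_ofNat_of_zero_le (fl_nonneg (-(K : ℤ)) h0)
    have h1 := fl_of_cell ht (w := w) (z := z) hw
    rw [hz'] at h1
    have h2 : (x : ℕ) / 2 ^ (2 * K - t) = w / 2 ^ (2 * K - t) := by exact_mod_cast h1
    have h3 : w < 2 ^ (2 * K) := by
      have e : 2 ^ (2 * K) = 2 ^ t * 2 ^ (2 * K - t) := by rw [← pow_add]; congr 1; omega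
      rw [e, ← Nat.div_lt_iff_lt_mul (by positivity), ← h2, Nat.div_lt_iff_lt_mul (by positivity), ← e]
      exact x.2
    exact ⟨⟨w, h3⟩, h2.symm, hw⟩
  · rintro ⟨y, hy, hz⟩
    have := fl_of_cell ht hz
    show fl _ _ = _
    rw [this]
    exact_mod_cast hy

lemma cell_int {K t : ℕ} (ht : t ≤ 2 * K) (x : Fin (2 ^ (2 * K))) {G : ℝ → ℝ}
    (hG : ∀ y ∈ (dyFilt K).atom t x, IntegrableOn G (cl (-(K : ℤ)) ((y : ℕ) : ℤ))) :
    ∫ z in cl ((K : ℤ) - t) (((dyFilt K).p t x : ℕ) : ℤ), G z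
      = ∑ y ∈ (dyFilt K).atom t x, ∫ z in cl (-(K : ℤ)) ((y : ℕ) : ℤ), G z := by
  rw [cell_union ht, integral_biUnion_finset _ (fun _ _ => cl_meas _ _) _ hG]
  intro y _ y' _ hne
  refine cl_disj fun h => hne ?_
  exact Fin.ext (by exact_mod_cast h)

lemma atom_card {K t : ℕ} (ht : t ≤ 2 * K) (x : Fin (2 ^ (2 * K))) :
    (((dyFilt K).atom t x).card : ℝ) = 2 ^ (2 * K - t) := by
  have h := cell_int ht x (G := fun _ => (1 : ℝ)) (fun y _ => (cl_const (fun _ _ => rfl)).1)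
  have e : ∀ y : Fin (2 ^ (2 * K)), ∫ z in cl (-(K : ℤ)) ((y : ℕ) : ℤ), (1 : ℝ) = 2 ^ (-(K : ℤ)) * 1 :=
    fun y => (cl_const fun _ _ => rfl).2
  rw [(cl_const (c := 1) (fun _ _ => rfl)).2,
    Finset.sum_congr rfl fun y _ => e y,
    Finset.sum_const, nsmul_eq_mul, mul_one, mul_one,
    show (K : ℤ) - t = -(K : ℤ) + ((2 * K - t : ℕ) : ℤ) by omega, zpow_add₀ (by norm_num), zpow_natCast] at h
  have hp : (0 : ℝ) < 2 ^ (-(K : ℤ)) := by positivity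
  field_simp at h
  exact h.symm

lemma ch_zero (x : ℝ) : ch 0 x = 1 := by
  unfold ch
  rw [wMulDigit_eq ∅ (fun m _ => by simp [digit])]
  simp [sg]

lemma ch_cell {K : ℕ} {j : ℝ} (h0 : 0 ≤ j) (hj : j < 2 ^ (K : ℤ)) {x y : ℝ} (hx : 0 ≤ x) (hy : 0 ≤ y)
    (hxy : fl (-(K : ℤ)) x = fl (-(K : ℤ)) y) : ch j x = ch j y := by
  have := ch_F1 (ξ' := 0) h0 le_rfl hx hy (by rw [fl_zero h0 hj, fl_zero le_rfl (by positivity)]) hxy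
  simpa [ch_zero] using this

lemma ch_pt {K : ℕ} {j : ℝ} (h0 : 0 ≤ j) (hj : j < 2 ^ (K : ℤ)) {x : Fin (2 ^ (2 * K))} {z : ℝ}
    (hz : z ∈ cl (-(K : ℤ)) ((x : ℕ) : ℤ)) : ch j z = ch j (pt K x) :=
  ch_cell h0 hj (cl_nonneg (Int.natCast_nonneg _) hz) (pt_nonneg K x)
    (Eq.trans hz (Eq.symm (pt_mem K x)))

/-- The finite model. -/
def dyMod (K : ℕ) (J : Finset ℝ) (hJ : ∀ j ∈ J, 0 ≤ j ∧ j < 2 ^ (K : ℤ)) :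
    WMod (Fin (2 ^ (2 * K))) where
  toFilt := dyFilt K
  n := 2 * K
  J := J
  χ j x := ch j (pt K x)
  l t j := fl ((t : ℤ) - K) j
  hχ i x := ch_sq _ _
  hl t i j h := fl_mono (by push_cast; omega) h
  hF1 t ht i hi j hj hij x y hxy := by
    refine ch_F1 (hJ i hi).1 (hJ j hj).1 (pt_nonneg _ _) (pt_nonneg _ _) hij ?_
    rw [neg_sub, fl_of_cell ht (pt_mem K x), fl_of_cell ht (pt_mem K y)]
    exact_mod_cast hxy
  hF2 t ht i hi j hj hij x := by
    have hc : ∀ y : Fin (2 ^ (2 * K)), ∀ z ∈ cl (-(K : ℤ)) ((y : ℕ) : ℤ),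
        ch i z * ch j z = ch i (pt K y) * ch j (pt K y) := fun y z hz => by
      rw [ch_pt (hJ i hi).1 (hJ i hi).2 hz, ch_pt (hJ j hj).1 (hJ j hj).2 hz]
    have h := cell_int ht x (G := fun z => ch i z * ch j z) (fun y _ => (cl_const (hc y)).1)
    rw [Finset.sum_congr rfl fun y _ => (cl_const (hc y)).2, ← Finset.mul_sum] at h
    have h2 := ch_F2int (n := (((dyFilt K).p t x : ℕ) : ℤ)) (hJ i hi).1 (hJ j hj).1 (Int.natCast_nonneg _) hij
    rw [neg_sub] at h2
    rw [h2] at h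
    have hp : (2 : ℝ) ^ (-(K : ℤ)) ≠ 0 := by positivity
    have h3 := (mul_eq_zero.mp h.symm).resolve_left hp
    unfold Filt.E
    rw [h3, zero_div]

lemma dyMod_reg (K : ℕ) (J : Finset ℝ) (hJ : ∀ j ∈ J, 0 ≤ j ∧ j < 2 ^ (K : ℤ)) :
    (dyMod K J hJ).Reg where
  zero x y := by
    show (x : ℕ) / 2 ^ (2 * K - 0) = (y : ℕ) / 2 ^ (2 * K - 0)
    rw [Nat.sub_zero, Nat.div_eq_of_lt x.2, Nat.div_eq_of_lt y.2]
  inj x y h := by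
    have h' : (x : ℕ) / 2 ^ (2 * K - 2 * K) = (y : ℕ) / 2 ^ (2 * K - 2 * K) := h
    simp only [Nat.sub_self, pow_zero, Nat.div_one] at h'
    exact Fin.ext h'
  dbl t ht x := by
    have ht' : t < 2 * K := ht
    have h1 := atom_card (K := K) (t := t) ht'.le x
    have h2 := atom_card (K := K) (t := t + 1) ht' x
    have : (((dyFilt K).atom t x).card : ℝ) = ((2 * ((dyFilt K).atom (t + 1) x).card : ℕ) : ℝ) := by
      push_cast
      rw [h1, h2, show 2 * K - t = (2 * K - (t + 1)) + 1 by omega, pow_succ]; ring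
    exact (by exact_mod_cast this : ((dyFilt K).atom t x).card = _).le

/-- Discretised function. -/
def disc (K : ℕ) (g : ℝ → ℝ) (x : Fin (2 ^ (2 * K))) : ℝ :=
  2 ^ (K : ℤ) * ∫ z in cl (-(K : ℤ)) ((x : ℕ) : ℤ), g z

lemma dyMod_cf (K : ℕ) (J : Finset ℝ) (hJ : ∀ j ∈ J, 0 ≤ j ∧ j < 2 ^ (K : ℤ)) {g : ℝ → ℝ}
    (hg : IntegrableOn g (Ici 0)) {t : ℕ} (ht : t ≤ 2 * K) {j : ℝ} (hj : j ∈ J)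
    (x : Fin (2 ^ (2 * K))) :
    (dyMod K J hJ).cf t j (disc K g) x =
      2 ^ ((t : ℤ) - K) * ∫ z in cl ((K : ℤ) - t) (((dyFilt K).p t x : ℕ) : ℤ), ch j z * g z := by
  have hG : IntegrableOn (fun z => ch j z * g z) (Ici 0) := (ch_integrable_iff (hJ j hj).1 g).mpr hg
  rw [cell_int ht x (fun y _ => hG.mono_set (cl_sub (Int.natCast_nonneg _)))]
  have e : ∀ y : Fin (2 ^ (2 * K)), ∫ z in cl (-(K : ℤ)) ((y : ℕ) : ℤ), ch j z * g z
      = 2 ^ (-(K : ℤ)) * (ch j (pt K y) * disc K g y) := fun y => by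
    rw [setIntegral_congr_fun (cl_meas _ _) (g := fun z => ch j (pt K y) * g z)
      (fun z hz => by simp only; rw [ch_pt (hJ j hj).1 (hJ j hj).2 hz]), integral_const_mul, disc,
      zpow_neg]
    have hp : (2 : ℝ) ^ (K : ℤ) ≠ 0 := by positivity
    field_simp
  rw [Finset.sum_congr rfl fun y _ => e y, ← Finset.mul_sum]
  show (∑ y ∈ (dyFilt K).atom t x, ch j (pt K y) * disc K g y) / (((dyFilt K).atom t x).card : ℝ) = _
  rw [atom_card ht, div_eq_mul_inv, mul_comm, ← mul_assoc]
  congr 1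
  rw [← zpow_natCast, ← zpow_neg, ← zpow_add₀ (by norm_num)]
  congr 1; omega

lemma dyMod_D (K : ℕ) (J : Finset ℝ) (hJ : ∀ j ∈ J, 0 ≤ j ∧ j < 2 ^ (K : ℤ)) {g : ℝ → ℝ}
    (hg : IntegrableOn g (Ici 0)) {t : ℕ} (ht : t ≤ 2 * K) (a : Set ℝ → ℝ)
    (x : Fin (2 ^ (2 * K))) {z : ℝ} (hz : z ∈ cl (-(K : ℤ)) ((x : ℕ) : ℤ)) :
    walshFT (fun ξ => Dk a (J : Set ℝ) ((t : ℤ) - K) ξ * walshFT g ξ) z =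
      (dyMod K J hJ).D (fun t j => dyadicSum a j ((t : ℤ) - K)) t (disc K g) x := by
  rw [Tk_eq a (J : Set ℝ) (fun j hj => (hJ j hj).1) ((t : ℤ) - K) ((dyMod K J hJ).rep t)
    (by exact_mod_cast (dyMod K J hJ).rep_sub t)
    (fun i hi j hj h => (dyMod K J hJ).rep_inj hi hj h)
    (fun i hi => (dyMod K J hJ).rep_exists t hi) hg (cl_nonneg (Int.natCast_nonneg _) hz)]
  refine Finset.sum_congr rfl fun j hj => ?_
  have hjJ : j ∈ J := (dyMod K J hJ).rep_J hj
  rw [dyMod_cf K J hJ hg ht hjJ, neg_sub, ch_pt (hJ j hjJ).1 (hJ j hjJ).2 hz, fl_of_cell ht hz]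
  rfl

lemma mono_strict {r : ℝ} (hr : 0 < r) (m : ℤ → ℝ) (u : ℕ → ℤ) (hu : Monotone u) (M : ℕ) :
    ∃ (N : ℕ) (v : ℕ → ℤ), (∀ i < N, v i < v (i + 1)) ∧ v N = u M ∧
      ∑ i ∈ Finset.range M, |m (u (i + 1)) - m (u i)| ^ r
        = ∑ i ∈ Finset.range N, |m (v (i + 1)) - m (v i)| ^ r := by
  induction M with
  | zero => exact ⟨0, fun _ => u 0, by simp, rfl, by simp⟩
  | succ M ih =>
    obtain ⟨N, v, h1, h2, h3⟩ := ih
    by_cases h : u (M + 1) = u M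
    · refine ⟨N, v, h1, by rw [h2, h], ?_⟩
      rw [Finset.sum_range_succ, h3, h, sub_self, abs_zero, Real.zero_rpow hr.ne', add_zero]
    · have hlt : u M < u (M + 1) := lt_of_le_of_ne (hu (Nat.le_succ M)) (Ne.symm h)
      refine ⟨N + 1, fun i => if i = N + 1 then u (M + 1) else v i, ?_, by simp, ?_⟩
      · intro i hi
        have hi' : i ≠ N + 1 := by omega
        by_cases hiN : i = N
        · subst hiN; simp [h2, hlt]
        · have : i + 1 ≠ N + 1 := by omega
          simp only [hi', this, if_false]
          exact h1 i (by omega)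
      · rw [Finset.sum_range_succ, Finset.sum_range_succ, h3]
        congr 1
        · refine Finset.sum_congr rfl fun i hi => ?_
          have hi0 := Finset.mem_range.mp hi
          have hi' : i ≠ N + 1 := by omega
          have : i + 1 ≠ N + 1 := by omega
          simp only [hi', this, if_false]
        · simp [h2]

lemma vnorm_var {r V : ℝ} (hr : 0 < r) (hV : 0 ≤ V) (m : ℤ → ℝ)
    (h : vnorm r (Set.univ : Set ℤ) m ≤ ENNReal.ofReal V) (u : ℕ → ℤ) (hu : Monotone u) (M : ℕ) :
    ∑ i ∈ Finset.range M, |m (u (i + 1)) - m (u i)| ^ r ≤ V ^ r := by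
  obtain ⟨N, v, h1, -, h3⟩ := mono_strict hr m u hu M
  rw [h3]
  have h4 : (∑ i : Fin N, (‖m (v (i + 1)) - m (v i)‖₊ : ℝ≥0∞) ^ r) ^ (1 / r) ≤ ENNReal.ofReal V := by
    refine le_trans ?_ (le_trans le_add_self h)
    let w : Fin (N + 1) → ℤ := fun i => v i
    have hw : StrictMono w := Fin.strictMono_iff_lt_succ.mpr fun i => h1 i i.2
    exact le_iSup_of_le N (le_iSup_of_le w (le_iSup_of_le hw (le_iSup_of_le (fun _ => mem_univ _) le_rfl)))
  rw [one_div, ENNReal.rpow_inv_le_iff hr, ENNReal.ofReal_rpow_of_nonneg hV hr.le] at h4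
  have h5 : ∀ i : Fin N, (‖m (v (i + 1)) - m (v i)‖₊ : ℝ≥0∞) ^ r
      = ENNReal.ofReal (|m (v (i + 1)) - m (v i)| ^ r) := fun i => by
    rw [← ENNReal.ofReal_rpow_of_nonneg (abs_nonneg _) hr.le, ← Real.norm_eq_abs, ofReal_norm]; rfl
  rw [Finset.sum_congr rfl fun i _ => h5 i,
    ← ENNReal.ofReal_sum_of_nonneg (fun i _ => by positivity),
    ENNReal.ofReal_le_ofReal_iff (by positivity)] at h4
  rw [Finset.sum_range]
  exact h4

lemma vnorm_bd {r V : ℝ} (hV : 0 ≤ V) (m : ℤ → ℝ)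
    (h : vnorm r (Set.univ : Set ℤ) m ≤ ENNReal.ofReal V) (k : ℤ) : |m k| ≤ V := by
  have : (‖m k‖₊ : ℝ≥0∞) ≤ ENNReal.ofReal V :=
    le_trans (le_trans (le_iSup₂_of_le k (mem_univ _) le_rfl) le_self_add) h
  have e : (‖m k‖₊ : ℝ≥0∞) = ENNReal.ofReal |m k| := by rw [← Real.norm_eq_abs, ofReal_norm]; rfl
  rw [e, ENNReal.ofReal_le_ofReal_iff hV] at this
  exact this

lemma dyMod_coef {r V : ℝ} (hr : 0 < r) (hV : 0 ≤ V) (K : ℕ) (J : Finset ℝ)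
    (hJ : ∀ j ∈ J, 0 ≤ j ∧ j < 2 ^ (K : ℤ)) (a : Set ℝ → ℝ)
    (h : ∀ j ∈ J, vnorm r (Set.univ : Set ℤ) (dyadicSum a j) ≤ ENNReal.ofReal V) :
    (dyMod K J hJ).Coef r V (fun t j => dyadicSum a j ((t : ℤ) - K)) where
  cls t i hi j hj hij := by
    have hij' : fl ((t : ℤ) - K) i = fl ((t : ℤ) - K) j := hij
    rw [dyadicSum_eq, dyadicSum_eq, hij']
  bd t j hj := vnorm_bd hV _ (h j hj) _
  var j hj u hu m := vnorm_var hr hV _ (h j hj) (fun i => (u i : ℤ) - K)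
    (fun i i' hii => by have := hu hii; simp only; omega) m

lemma disc_jensen {q : ℝ} (hq : 1 < q) (K : ℕ) {g : ℝ → ℝ} (hg : IntegrableOn g (Ici 0))
    (x : Fin (2 ^ (2 * K))) :
    ENNReal.ofReal (|disc K g x| ^ q) * ENNReal.ofReal (2 ^ (-(K : ℤ)))
      ≤ ∫⁻ z in cl (-(K : ℤ)) ((x : ℕ) : ℤ), ‖g z‖ₑ ^ q := by
  have hq0 : 0 < q := by linarith
  set c := cl (-(K : ℤ)) ((x : ℕ) : ℤ) with hc
  set v : ℝ≥0∞ := ENNReal.ofReal (2 ^ (-(K : ℤ))) with hv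
  have hp : (0 : ℝ) < 2 ^ (-(K : ℤ)) := by positivity
  have hv0 : v ≠ 0 := by simp [hv]
  have hvt : v ≠ ⊤ := ENNReal.ofReal_ne_top
  have hgm : AEStronglyMeasurable g (volume.restrict c) :=
    (hg.mono_set (cl_sub (Int.natCast_nonneg _))).1
  have h1 : eLpNorm g 1 (volume.restrict c)
      ≤ eLpNorm g (ENNReal.ofReal q) (volume.restrict c) * v ^ (1 - 1 / q) := by
    have := eLpNorm_le_eLpNorm_mul_rpow_measure_univ (p := 1) (q := ENNReal.ofReal q)
      (μ := volume.restrict c) (by rw [ENNReal.one_le_ofReal]; exact hq.le) hgm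
    rw [Measure.restrict_apply_univ, hc, cl_vol, ENNReal.toReal_ofReal hq0.le, ENNReal.toReal_one, one_div_one] at this
    exact this
  have h2 : ‖∫ z in c, g z‖ₑ ≤ eLpNorm g (ENNReal.ofReal q) (volume.restrict c) * v ^ (1 - 1 / q) := by
    refine le_trans (enorm_integral_le_lintegral_enorm _) ?_
    rw [← eLpNorm_one_eq_lintegral_enorm]; exact h1
  have h3 : eLpNorm g (ENNReal.ofReal q) (volume.restrict c) ^ q = ∫⁻ z in c, ‖g z‖ₑ ^ q := by
    rw [eLpNorm_eq_lintegral_rpow_enorm_toReal (by simpa using hq0) ENNReal.ofReal_ne_top,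
      ENNReal.toReal_ofReal hq0.le, ← ENNReal.rpow_mul, one_div, inv_mul_cancel₀ hq0.ne',
      ENNReal.rpow_one]
  have h4 : ENNReal.ofReal (|disc K g x| ^ q) = v ^ (-q) * ‖∫ z in c, g z‖ₑ ^ q := by
    rw [← ENNReal.ofReal_rpow_of_nonneg (abs_nonneg _) hq0.le, disc, abs_mul, ENNReal.ofReal_mul (abs_nonneg _),
      ENNReal.mul_rpow_of_nonneg _ _ hq0.le, ← Real.norm_eq_abs (∫ z in _, g z), ofReal_norm]
    congr 1
    rw [abs_of_pos (by positivity), ENNReal.rpow_neg, ← ENNReal.inv_rpow, hv, ← ENNReal.ofReal_inv_of_pos hp,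
      ← zpow_neg, neg_neg]
  rw [h4]
  calc v ^ (-q) * ‖∫ z in c, g z‖ₑ ^ q * v
      ≤ v ^ (-q) * (eLpNorm g (ENNReal.ofReal q) (volume.restrict c) * v ^ (1 - 1 / q)) ^ q * v := by
        gcongr
    _ = (∫⁻ z in c, ‖g z‖ₑ ^ q) * (v ^ (-q) * v ^ ((1 - 1 / q) * q) * v ^ (1 : ℝ)) := by
        rw [ENNReal.mul_rpow_of_nonneg _ _ hq0.le, h3, ← ENNReal.rpow_mul, ENNReal.rpow_one]; ring
    _ = _ := by
        rw [← ENNReal.rpow_add _ _ hv0 hvt, ← ENNReal.rpow_add _ _ hv0 hvt,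
          show -q + (1 - 1 / q) * q + 1 = 0 by field_simp; ring, ENNReal.rpow_zero, mul_one]

/-- Truncated maximal function. -/
def HK (q : ℝ) (T : ℤ → ℝ → ℝ) (K : ℕ) (z : ℝ) : ℝ≥0∞ :=
  if 0 ≤ z ∧ z < 2 ^ (K : ℤ) then (⨆ (k : ℤ) (_ : -(K : ℤ) ≤ k ∧ k ≤ K), (‖T k z‖₊ : ℝ≥0∞)) ^ q else 0

lemma HK_mono {q : ℝ} (hq : 0 < q) (T : ℤ → ℝ → ℝ) {K K' : ℕ} (h : K ≤ K') (z : ℝ) :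
    HK q T K z ≤ HK q T K' z := by
  unfold HK
  by_cases hz : 0 ≤ z ∧ z < 2 ^ (K : ℤ)
  · have hz' : 0 ≤ z ∧ z < 2 ^ (K' : ℤ) :=
      ⟨hz.1, hz.2.trans_le (zpow_le_zpow_right₀ (by norm_num) (by exact_mod_cast h))⟩
    rw [if_pos hz, if_pos hz']
    refine ENNReal.rpow_le_rpow ?_ hq.le
    refine iSup₂_le fun k hk => le_iSup₂_of_le k ⟨by omega, by omega⟩ le_rfl
  · rw [if_neg hz]; exact zero_le

lemma HK_sup {q : ℝ} (hq : 0 < q) (T : ℤ → ℝ → ℝ) (K0 : ℕ) {z : ℝ} (hz : 0 ≤ z) :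
    (⨆ k : ℤ, (‖T k z‖₊ : ℝ≥0∞)) ^ q ≤ ⨆ i : ℕ, HK q T (K0 + i) z := by
  rw [← ENNReal.le_rpow_inv_iff hq]
  refine iSup_le fun k => ?_
  rw [ENNReal.le_rpow_inv_iff hq]
  obtain ⟨L, hL⟩ := exists_big z
  refine le_iSup_of_le (L + k.natAbs) ?_
  unfold HK
  rw [if_pos ⟨hz, hL _ (by omega)⟩]
  exact ENNReal.rpow_le_rpow (le_iSup₂_of_le k ⟨by omega, by omega⟩ le_rfl) hq.le

lemma cell_of {K : ℕ} {z : ℝ} (h0 : 0 ≤ z) (h : z < 2 ^ (K : ℤ)) :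
    ∃ x : Fin (2 ^ (2 * K)), z ∈ cl (-(K : ℤ)) ((x : ℕ) : ℤ) := by
  have hz : z ∈ cl ((K : ℤ) - (0 : ℕ)) (((dyFilt K).p 0 ⟨0, by positivity⟩ : ℕ) : ℤ) := by
    show fl _ z = (((0 : ℕ) / 2 ^ (2 * K - 0) : ℕ) : ℤ)
    rw [Nat.zero_div]
    simpa using fl_zero h0 h
  rw [cell_union (Nat.zero_le _)] at hz
  simp only [mem_iUnion] at hz
  obtain ⟨y, -, hy⟩ := hz
  exact ⟨y, hy⟩

lemma cell_lt {K : ℕ} {z : ℝ} {x : Fin (2 ^ (2 * K))} (h : z ∈ cl (-(K : ℤ)) ((x : ℕ) : ℤ)) :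
    0 ≤ z ∧ z < 2 ^ (K : ℤ) := by
  refine ⟨cl_nonneg (Int.natCast_nonneg _) h, ?_⟩
  have h1 := fl_of_cell (t := 0) (Nat.zero_le _) h
  rw [Nat.sub_zero, Nat.div_eq_of_lt x.2] at h1
  have := (fl_eq_iff.mp h1).2
  simpa using this

lemma HK_eq {q : ℝ} (K : ℕ) (J : Finset ℝ) (hJ : ∀ j ∈ J, 0 ≤ j ∧ j < 2 ^ (K : ℤ)) {g : ℝ → ℝ}
    (hg : IntegrableOn g (Ici 0)) (a : Set ℝ → ℝ) (z : ℝ) :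
    HK q (fun k => walshFT (fun ξ => Dk a (J : Set ℝ) k ξ * walshFT g ξ)) K z =
      ∑ x : Fin (2 ^ (2 * K)), (cl (-(K : ℤ)) ((x : ℕ) : ℤ)).indicator (fun _ =>
        (⨆ t : Fin (2 * K + 1), ENNReal.ofReal
          |(dyMod K J hJ).D (fun t j => dyadicSum a j ((t : ℤ) - K)) t (disc K g) x|) ^ q) z := by
  unfold HK
  by_cases hz : 0 ≤ z ∧ z < 2 ^ (K : ℤ)
  · rw [if_pos hz]
    obtain ⟨x, hx⟩ := cell_of hz.1 hz.2
    rw [Finset.sum_eq_single x, indicator_of_mem hx]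
    · congr 1
      refine le_antisymm ?_ ?_
      · refine iSup₂_le fun k hk => ?_
        refine le_iSup_of_le ⟨(k + K).toNat, by omega⟩ ?_
        have := dyMod_D K J hJ hg (t := (k + K).toNat) (by omega) a x hx
        rw [show (((k + K).toNat : ℕ) : ℤ) - K = k by omega] at this
        beta_reduce
        rw [this, ← Real.norm_eq_abs, ofReal_norm]; rfl
      · refine iSup_le fun t => ?_
        refine le_iSup₂_of_le ((t : ℕ) - (K : ℤ)) ⟨by omega, by have := t.2; omega⟩ ?_
        beta_reduce
        rw [dyMod_D K J hJ hg (t := t) (by omega) a x hx, ← Real.norm_eq_abs, ofReal_norm]; rfl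
    · intro y _ hy
      refine indicator_of_notMem (fun h => hy ?_) _
      have : ((y : ℕ) : ℤ) = ((x : ℕ) : ℤ) := Eq.trans (Eq.symm h) hx
      exact Fin.ext (by exact_mod_cast this)
    · simp
  · rw [if_neg hz]
    refine (Finset.sum_eq_zero fun x _ => indicator_of_notMem (fun h => hz (cell_lt h)) _).symm

lemma HK_meas {q : ℝ} (K : ℕ) (J : Finset ℝ) (hJ : ∀ j ∈ J, 0 ≤ j ∧ j < 2 ^ (K : ℤ)) {g : ℝ → ℝ}
    (hg : IntegrableOn g (Ici 0)) (a : Set ℝ → ℝ) :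
    Measurable (HK q (fun k => walshFT (fun ξ => Dk a (J : Set ℝ) k ξ * walshFT g ξ)) K) := by
  rw [funext (HK_eq K J hJ hg a)]
  exact Finset.measurable_sum _ fun x _ => measurable_const.indicator (cl_meas _ _)

lemma HK_int {q B : ℝ} (hq : 1 < q) (K : ℕ) (J : Finset ℝ)
    (hJ : ∀ j ∈ J, 0 ≤ j ∧ j < 2 ^ (K : ℤ)) {g : ℝ → ℝ}
    (hg : IntegrableOn g (Ici 0)) (a : Set ℝ → ℝ)
    (hB : ∑ x, (⨆ t : Fin (2 * K + 1), ENNReal.ofReal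
          |(dyMod K J hJ).D (fun t j => dyadicSum a j ((t : ℤ) - K)) t (disc K g) x|) ^ q ≤
        ENNReal.ofReal (B ^ q) * ∑ x, ENNReal.ofReal (|disc K g x| ^ q)) :
    ∫⁻ z, HK q (fun k => walshFT (fun ξ => Dk a (J : Set ℝ) k ξ * walshFT g ξ)) K z ∂μplus
      ≤ ENNReal.ofReal (B ^ q) * ∫⁻ z, ‖g z‖ₑ ^ q ∂μplus := by
  rw [lintegral_congr (HK_eq K J hJ hg a),
    lintegral_finsetSum _ fun x _ => measurable_const.indicator (cl_meas _ _)]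
  have e : ∀ (x : Fin (2 ^ (2 * K))) (c : ℝ≥0∞),
      ∫⁻ z, (cl (-(K : ℤ)) ((x : ℕ) : ℤ)).indicator (fun _ => c) z ∂μplus
        = c * ENNReal.ofReal (2 ^ (-(K : ℤ))) := fun x c => by
    rw [lintegral_indicator_const (cl_meas _ _), μplus, Measure.restrict_apply (cl_meas _ _),
      inter_eq_left.mpr (cl_sub (Int.natCast_nonneg _)), cl_vol]
  rw [Finset.sum_congr rfl fun x _ => e x _, ← Finset.sum_mul]
  refine le_trans (mul_le_mul_left hB _) ?_
  rw [mul_assoc, Finset.sum_mul]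
  refine mul_le_mul_right (le_trans (Finset.sum_le_sum fun x _ => disc_jensen hq K hg x) ?_) _
  rw [← lintegral_biUnion_finset (fun x _ y _ hne => cl_disj fun h => hne (Fin.ext (by exact_mod_cast h)))
    (fun _ _ => cl_meas _ _)]
  exact lintegral_mono_set (iUnion₂_subset fun x _ => cl_sub (Int.natCast_nonneg _))

lemma final_bound {q B : ℝ} (hq : 1 < q) (hB0 : 0 ≤ B) (J : Finset ℝ) (hJ0 : ∀ j ∈ J, 0 ≤ j)
    {g : ℝ → ℝ} (hg1 : eLpNorm g (ENNReal.ofReal q) μplus = 1) (hg : IntegrableOn g (Ici 0))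
    (a : Set ℝ → ℝ)
    (hB : ∀ (K : ℕ) (hJ : ∀ j ∈ J, 0 ≤ j ∧ j < 2 ^ (K : ℤ)),
      ∑ x, (⨆ t : Fin (2 * K + 1), ENNReal.ofReal
          |(dyMod K J hJ).D (fun t j => dyadicSum a j ((t : ℤ) - K)) t (disc K g) x|) ^ q ≤
        ENNReal.ofReal (B ^ q) * ∑ x, ENNReal.ofReal (|disc K g x| ^ q)) :
    lpNormE q μplus (fun x => ⨆ k : ℤ,
      (‖walshFT (fun ξ => Dk a (J : Set ℝ) k ξ * walshFT g ξ) x‖₊ : ℝ≥0∞)) ≤ ENNReal.ofReal B := by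
  have hq0 : 0 < q := by linarith
  obtain ⟨L, hL⟩ := exists_big (∑ j ∈ J, j)
  have hJ : ∀ i : ℕ, ∀ j ∈ J, 0 ≤ j ∧ j < 2 ^ ((L + i : ℕ) : ℤ) := fun i j hj =>
    ⟨hJ0 j hj, (Finset.single_le_sum (f := fun j => j) hJ0 hj).trans_lt (hL _ (by omega))⟩
  have hgq : ∫⁻ z, ‖g z‖ₑ ^ q ∂μplus = 1 := by
    rw [eLpNorm_eq_lintegral_rpow_enorm_toReal (by simpa using hq0) ENNReal.ofReal_ne_top,
      ENNReal.toReal_ofReal hq0.le] at hg1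
    have := congrArg (· ^ q) hg1
    rwa [← ENNReal.rpow_mul, one_div, inv_mul_cancel₀ hq0.ne', ENNReal.rpow_one, ENNReal.one_rpow] at this
  unfold lpNormE
  rw [one_div, ENNReal.rpow_inv_le_iff hq0, ENNReal.ofReal_rpow_of_nonneg hB0 hq0.le]
  set T : ℤ → ℝ → ℝ := fun k => walshFT (fun ξ => Dk a (J : Set ℝ) k ξ * walshFT g ξ) with hT
  calc _ ≤ ∫⁻ z, ⨆ i : ℕ, HK q T (L + i) z ∂μplus := by
        unfold μplus
        exact setLIntegral_mono' measurableSet_Ici fun z hz => HK_sup hq0 T L hz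
    _ = ⨆ i : ℕ, ∫⁻ z, HK q T (L + i) z ∂μplus :=
        lintegral_iSup (fun i => HK_meas _ J (hJ i) hg a)
          (fun i i' h z => HK_mono hq0 T (by omega) z)
    _ ≤ _ := iSup_le fun i => by
        refine (HK_int hq (L + i) J (hJ i) hg a (hB _ _)).trans ?_
        rw [hgq, mul_one]

lemma lpNormE_zero {q : ℝ} (hq : 0 < q) {T : ℤ → ℝ → ℝ} (h : ∀ k x, 0 ≤ x → T k x = 0) :
    lpNormE q μplus (fun x => ⨆ k : ℤ, (‖T k x‖₊ : ℝ≥0∞)) = 0 := by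
  unfold lpNormE μplus
  rw [setLIntegral_congr_fun (g := fun _ => (0 : ℝ≥0∞)) measurableSet_Ici
    (fun x hx => by simp [h _ x hx, hq])]
  simp [hq]

lemma walshFT_zero {f : ℝ → ℝ} (h : ∀ ξ, 0 ≤ ξ → f ξ = 0) (x : ℝ) : walshFT f x = 0 := by
  unfold walshFT
  rw [setIntegral_congr_fun (g := fun _ => (0 : ℝ)) measurableSet_Ici
    (fun ξ hξ => by simp [h ξ hξ])]
  simp

theorem Lq_main (q r : ℝ) (hr : 2 < r) (hq1 : 1 < q) (hq2 : q < 2) :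
    ∃ C : ℝ, 0 < C ∧ ∀ Ξ : Set ℝ, Ξ.Finite → Ξ ⊆ Set.Ici 0 → ∀ a : Set ℝ → ℝ,
      Mqstar q (fun k => Dk a Ξ k) ≤
        ENNReal.ofReal C * ENNReal.ofReal (1 + Real.log Ξ.ncard) *
          (Ξ.ncard : ℝ≥0∞) ^ (1 / q - 1 / r) *
          ⨆ ξ ∈ Ξ, vnorm r (Set.univ : Set ℤ) (dyadicSum a ξ) := by
  obtain ⟨C, hC, H⟩ := WMod.lqmax hr hq1 hq2
  have hq0 : 0 < q := by linarith
  refine ⟨C, hC, fun Ξ hΞ hΞ0 a => ?_⟩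
  unfold Mqstar
  refine iSup₂_le fun g hg1 => ?_
  by_cases hg : IntegrableOn g (Ici 0)
  swap
  · rw [lpNormE_zero hq0 (T := fun k => walshFT (fun ξ => Dk a Ξ k ξ * walshFT g ξ))
      (fun k x _ => walshFT_zero (fun ξ hξ => by rw [walshFT_nonint hg hξ, mul_zero]) x)]
    exact zero_le
  rcases Ξ.eq_empty_or_nonempty with rfl | hne
  · rw [lpNormE_zero hq0 (T := fun k => walshFT (fun ξ => Dk a ∅ k ξ * walshFT g ξ))
      (fun k x _ => walshFT_zero (fun ξ hξ => by simp [Dk]) x)]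
    exact zero_le
  have hN : 1 ≤ Ξ.ncard := (Set.ncard_pos hΞ).mpr hne
  have hN' : (1 : ℝ) ≤ Ξ.ncard := by exact_mod_cast hN
  have hlog : 0 ≤ Real.log Ξ.ncard := Real.log_nonneg hN'
  set S := ⨆ ξ ∈ Ξ, vnorm r (Set.univ : Set ℤ) (dyadicSum a ξ) with hS
  have hpw : (Ξ.ncard : ℝ≥0∞) ^ (1 / q - 1 / r)
      = ENNReal.ofReal ((Ξ.ncard : ℝ) ^ (1 / q - 1 / r)) := by
    rw [← ENNReal.ofReal_rpow_of_pos (by linarith), ENNReal.ofReal_natCast]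
  rw [hpw, ← ENNReal.ofReal_mul hC.le, ← ENNReal.ofReal_mul (by positivity)]
  have hpos : 0 < C * (1 + Real.log Ξ.ncard) * (Ξ.ncard : ℝ) ^ (1 / q - 1 / r) := by positivity
  by_cases hSt : S = ⊤
  · rw [hSt, ENNReal.mul_top (by simpa using hpos)]; exact le_top
  obtain ⟨V, hV, hSV⟩ : ∃ V : ℝ, 0 ≤ V ∧ S = ENNReal.ofReal V :=
    ⟨S.toReal, ENNReal.toReal_nonneg, (ENNReal.ofReal_toReal hSt).symm⟩
  rw [hSV, ← ENNReal.ofReal_mul hpos.le]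
  have hJe : ((hΞ.toFinset : Finset ℝ) : Set ℝ) = Ξ := hΞ.coe_toFinset
  have key := final_bound (B := C * (1 + Real.log Ξ.ncard) * (Ξ.ncard : ℝ) ^ (1 / q - 1 / r) * V)
    hq1 (by positivity) hΞ.toFinset (fun j hj => hΞ0 (hΞ.mem_toFinset.mp hj)) hg1 hg a
    (fun K hJ => H (dyMod K hΞ.toFinset hJ) (dyMod_reg _ _ _) _ V Ξ.ncard hV
      (dyMod_coef (by linarith) hV K _ hJ a (fun j hj => by
        rw [← hSV, hS]; exact le_iSup₂_of_le j (hΞ.mem_toFinset.mp hj) le_rfl)) hN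
      (by rw [Set.ncard_eq_toFinset_card Ξ hΞ]; exact le_rfl) (disc K g))
  rw [hJe] at key
  exact key

/-- Lemma 3.2: if `r > 2` and `1 < q < 2` then
`‖𝒟_k‖_{M^{q,*}} ≤ C_{q,r} (1 + log |Ξ|) |Ξ|^{1/q - 1/r}
  sup_{ξ ∈ Ξ} ‖Σ_{|ω| = 2^k} a_ω 1_ω(ξ)‖_{V^r_k}`. -/
theorem Lq_maximal_multiplier (q r : ℝ) (hr : 2 < r) (hq1 : 1 < q) (hq2 : q < 2) :
    ∃ C : ℝ, 0 < C ∧ ∀ Ξ : Set ℝ, Ξ.Finite → Ξ ⊆ Set.Ici 0 → ∀ a : Set ℝ → ℝ,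
      Mqstar q (fun k => Dk a Ξ k) ≤
        ENNReal.ofReal C * ENNReal.ofReal (1 + Real.log Ξ.ncard) *
          (Ξ.ncard : ℝ≥0∞) ^ (1 / q - 1 / r) *
          ⨆ ξ ∈ Ξ, vnorm r (Set.univ : Set ℤ) (dyadicSum a ξ) := by
  exact Lq_main q r hr hq1 hq2

end
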